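/- Let K be an algebraically closed field. Let A_7 be the algebra given by the quiver with vertices 1, 2, 3, 4 and arrows α: 1 → 2, β: 2 → 1, δ: 2 → 3, γ: 3 → 2, ε: 3 → 4, ξ: 4 → 3, bound by the relations βα = δγ, γδ = εξ, αδε = 0 and ξγβ = 0. Then A_7 has exactly 108 isomorphism classes of basic support τ-tilting modules. -/

import Mathlib

/- Formalization of statements from
   "Report on the finiteness of silting objects"
   by T. Aihara, T. Honma, K. Miyamoto, Q. Wang. -/

open CategoryTheory CategoryTheory.Limits

universe u v w

noncomputable section
namespace PaperSilting
/-! ### Module-theoretic notions.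

We model right `Λ`-modules as left modules over the opposite ring; all the
definitions below are stated for left modules over a ring `R` and are applied
with `R := Λᵐᵒᵖ`. -/

/-- The category of `R`-modules (in `Type 0`). -/
abbrev ModCat (R : Type) [Ring R] := ModuleCat.{0} R

variable {R : Type} [Ring R]

/-- The module object `M` is finitely generated. -/
def IsFGMod {R : Type} [Ring R] (M : ModCat R) : Prop := Module.Finite R M

/-- Indecomposable module object. -/
def IsIndecMod {R : Type} [Ring R] (M : ModCat R) : Prop :=
  ¬ IsZero M ∧ ∀ A B : ModCat R, Nonempty (M ≅ A ⊞ B) → IsZero A ∨ IsZero B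

/-- `N` belongs to `add M`, i.e. `N` is a direct summand of a finite direct sum
of copies of `M`. -/
def MemAddMod {R : Type} [Ring R] (N M : ModCat R) : Prop :=
  ∃ (k : ℕ) (g : N ⟶ ⨁ (fun _ : Fin k => M)) (h : (⨁ (fun _ : Fin k => M)) ⟶ N),
    g ≫ h = 𝟙 N

/-- A basic module: it has no direct summand of the form `N ⊕ N` with `N ≠ 0`. -/
def IsBasicMod {R : Type} [Ring R] (M : ModCat R) : Prop :=
  ∀ N X : ModCat R, Nonempty (M ≅ (N ⊞ N) ⊞ X) → IsZero N

/-- `M` is τ-rigid, i.e. `Hom(M, τM) = 0`: there is a projective presentation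
`P₁ → P₀ → M → 0` by finitely generated projectives such that
`Hom(P₀, M) → Hom(P₁, M)` is surjective (Adachi–Iyama–Reiten). -/
def IsTauRigidMod {R : Type} [Ring R] (M : ModCat R) : Prop :=
  ∃ (P₁ P₀ : ModCat R) (f : P₁ ⟶ P₀) (g : P₀ ⟶ M),
    Projective P₁ ∧ Projective P₀ ∧ IsFGMod P₁ ∧ IsFGMod P₀ ∧
    Function.Surjective g ∧ Function.Exact f g ∧
    ∀ h : P₁ ⟶ M, ∃ k : P₀ ⟶ M, f ≫ k = h

/-- A τ-rigid pair `(M, P)`: `M` is a τ-rigid module and `P` is a finitely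
generated projective with `Hom(P, M) = 0`. -/
def IsTauRigidPairMod {R : Type} [Ring R] (M P : ModCat R) : Prop :=
  IsFGMod M ∧ IsTauRigidMod M ∧ IsFGMod P ∧ Projective P ∧ ∀ f : P ⟶ M, f = 0

/-- `M` is a support τ-tilting module: `(M, P)` is a maximal τ-rigid pair for
some projective `P` (Adachi–Iyama–Reiten; equivalently, `M` is the `0`-th
cohomology of a two-term silting complex in `K^b(proj)`). -/
def IsSupportTauTiltingMod {R : Type} [Ring R] (M : ModCat R) : Prop :=
  ∃ P : ModCat R, IsTauRigidPairMod M P ∧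
    ∀ N Q : ModCat R, IsTauRigidPairMod (M ⊞ N) (P ⊞ Q) → MemAddMod N M ∧ MemAddMod Q P

/-- The ring `R` admits only finitely many basic support τ-tilting modules up
to isomorphism. -/
def IsTauTiltingFiniteRing (R : Type) [Ring R] : Prop :=
  ∃ (n : ℕ) (f : Fin n → ModCat R),
    ∀ M : ModCat R, IsSupportTauTiltingMod M → IsBasicMod M → ∃ i, Nonempty (M ≅ f i)

/-- The ring `R` admits only finitely many finitely generated indecomposable
modules up to isomorphism. -/
def IsRepFiniteRing (R : Type) [Ring R] : Prop :=
  ∃ (n : ℕ) (f : Fin n → ModCat R),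
    ∀ M : ModCat R, IsFGMod M → IsIndecMod M → ∃ i, Nonempty (M ≅ f i)

/-- `R` has exactly `n` isomorphism classes of basic support τ-tilting modules. -/
def SupportTauTiltingCount (R : Type) [Ring R] (n : ℕ) : Prop :=
  ∃ f : Fin n → ModCat R,
    (∀ i, IsSupportTauTiltingMod (f i) ∧ IsBasicMod (f i)) ∧
    (∀ i j, Nonempty (f i ≅ f j) → i = j) ∧
    (∀ M : ModCat R, IsSupportTauTiltingMod M → IsBasicMod M → ∃ i, Nonempty (M ≅ f i))

/-- An algebra `Λ` is τ-tilting-finite (with respect to right modules,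
i.e. left `Λᵐᵒᵖ`-modules). -/
def IsTauTiltingFinite (Λ : Type) [Ring Λ] : Prop := IsTauTiltingFiniteRing Λᵐᵒᵖ

/-- An algebra `Λ` is representation-finite (with respect to right modules). -/
def IsRepFinite (Λ : Type) [Ring Λ] : Prop := IsRepFiniteRing Λᵐᵒᵖ
/-- The defining relations of the algebra `A₇`, as relations on the free algebra on
the idempotents `e_1, …, e_4` and the arrows of its quiver. -/
def A7Rel (K : Type) [Field K] : FreeAlgebra K (Fin 10) → FreeAlgebra K (Fin 10) → Prop := fun u v =>
  (u, v) ∈ ([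
    (FreeAlgebra.ι K (0 : Fin 10) * FreeAlgebra.ι K (0 : Fin 10), FreeAlgebra.ι K (0 : Fin 10)),
    (FreeAlgebra.ι K (0 : Fin 10) * FreeAlgebra.ι K (1 : Fin 10), (0 : FreeAlgebra K (Fin 10))),
    (FreeAlgebra.ι K (0 : Fin 10) * FreeAlgebra.ι K (2 : Fin 10), (0 : FreeAlgebra K (Fin 10))),
    (FreeAlgebra.ι K (0 : Fin 10) * FreeAlgebra.ι K (3 : Fin 10), (0 : FreeAlgebra K (Fin 10))),
    (FreeAlgebra.ι K (1 : Fin 10) * FreeAlgebra.ι K (0 : Fin 10), (0 : FreeAlgebra K (Fin 10))),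
    (FreeAlgebra.ι K (1 : Fin 10) * FreeAlgebra.ι K (1 : Fin 10), FreeAlgebra.ι K (1 : Fin 10)),
    (FreeAlgebra.ι K (1 : Fin 10) * FreeAlgebra.ι K (2 : Fin 10), (0 : FreeAlgebra K (Fin 10))),
    (FreeAlgebra.ι K (1 : Fin 10) * FreeAlgebra.ι K (3 : Fin 10), (0 : FreeAlgebra K (Fin 10))),
    (FreeAlgebra.ι K (2 : Fin 10) * FreeAlgebra.ι K (0 : Fin 10), (0 : FreeAlgebra K (Fin 10))),
    (FreeAlgebra.ι K (2 : Fin 10) * FreeAlgebra.ι K (1 : Fin 10), (0 : FreeAlgebra K (Fin 10))),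
    (FreeAlgebra.ι K (2 : Fin 10) * FreeAlgebra.ι K (2 : Fin 10), FreeAlgebra.ι K (2 : Fin 10)),
    (FreeAlgebra.ι K (2 : Fin 10) * FreeAlgebra.ι K (3 : Fin 10), (0 : FreeAlgebra K (Fin 10))),
    (FreeAlgebra.ι K (3 : Fin 10) * FreeAlgebra.ι K (0 : Fin 10), (0 : FreeAlgebra K (Fin 10))),
    (FreeAlgebra.ι K (3 : Fin 10) * FreeAlgebra.ι K (1 : Fin 10), (0 : FreeAlgebra K (Fin 10))),
    (FreeAlgebra.ι K (3 : Fin 10) * FreeAlgebra.ι K (2 : Fin 10), (0 : FreeAlgebra K (Fin 10))),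
    (FreeAlgebra.ι K (3 : Fin 10) * FreeAlgebra.ι K (3 : Fin 10), FreeAlgebra.ι K (3 : Fin 10)),
    (FreeAlgebra.ι K (0 : Fin 10) + FreeAlgebra.ι K (1 : Fin 10) + FreeAlgebra.ι K (2 : Fin 10) + FreeAlgebra.ι K (3 : Fin 10), 1),
    (FreeAlgebra.ι K (4 : Fin 10), FreeAlgebra.ι K (0 : Fin 10) * FreeAlgebra.ι K (4 : Fin 10) * FreeAlgebra.ι K (1 : Fin 10)),
    (FreeAlgebra.ι K (5 : Fin 10), FreeAlgebra.ι K (1 : Fin 10) * FreeAlgebra.ι K (5 : Fin 10) * FreeAlgebra.ι K (0 : Fin 10)),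
    (FreeAlgebra.ι K (6 : Fin 10), FreeAlgebra.ι K (1 : Fin 10) * FreeAlgebra.ι K (6 : Fin 10) * FreeAlgebra.ι K (2 : Fin 10)),
    (FreeAlgebra.ι K (7 : Fin 10), FreeAlgebra.ι K (2 : Fin 10) * FreeAlgebra.ι K (7 : Fin 10) * FreeAlgebra.ι K (1 : Fin 10)),
    (FreeAlgebra.ι K (8 : Fin 10), FreeAlgebra.ι K (2 : Fin 10) * FreeAlgebra.ι K (8 : Fin 10) * FreeAlgebra.ι K (3 : Fin 10)),
    (FreeAlgebra.ι K (9 : Fin 10), FreeAlgebra.ι K (3 : Fin 10) * FreeAlgebra.ι K (9 : Fin 10) * FreeAlgebra.ι K (2 : Fin 10)),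
    (FreeAlgebra.ι K (5 : Fin 10) * FreeAlgebra.ι K (4 : Fin 10), FreeAlgebra.ι K (6 : Fin 10) * FreeAlgebra.ι K (7 : Fin 10)),
    (FreeAlgebra.ι K (7 : Fin 10) * FreeAlgebra.ι K (6 : Fin 10), FreeAlgebra.ι K (8 : Fin 10) * FreeAlgebra.ι K (9 : Fin 10)),
    (FreeAlgebra.ι K (4 : Fin 10) * FreeAlgebra.ι K (6 : Fin 10) * FreeAlgebra.ι K (8 : Fin 10), (0 : FreeAlgebra K (Fin 10))),
    (FreeAlgebra.ι K (9 : Fin 10) * FreeAlgebra.ι K (7 : Fin 10) * FreeAlgebra.ι K (5 : Fin 10), (0 : FreeAlgebra K (Fin 10)))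
  ] : List ((FreeAlgebra K (Fin 10)) × (FreeAlgebra K (Fin 10))))

/-- the algebra `A₇`, presented by quiver and relations. -/
def A7 (K : Type) [Field K] : Type := RingQuot (A7Rel K)

instance (K : Type) [Field K] : Ring (A7 K) :=
  inferInstanceAs (Ring (RingQuot (A7Rel K)))

instance (K : Type) [Field K] : Algebra K (A7 K) :=
  inferInstanceAs (Algebra K (RingQuot (A7Rel K)))


/-! ### Direct summands and a Krull-Schmidt toolkit -/

/-- `X` is (isomorphic to) a direct summand of `M`. -/
def Summ (R : Type) [Ring R] (X M : Type) [AddCommGroup X] [Module R X] [AddCommGroup M]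
    [Module R M] : Prop :=
  ∃ (i : X →ₗ[R] M) (p : M →ₗ[R] X), ∀ x, p (i x) = x

/-- `X` is in `add M`. -/
def MAdd (R : Type) [Ring R] (X M : Type) [AddCommGroup X] [Module R X] [AddCommGroup M]
    [Module R M] : Prop :=
  ∃ k : ℕ, Summ R X (Fin k → M)

/-- indecomposability through idempotents. -/
def Ind (R : Type) [Ring R] (X : Type) [AddCommGroup X] [Module R X] : Prop :=
  Nontrivial X ∧ ∀ e : X →ₗ[R] X, (∀ x, e (e x) = e x) → (∀ x, e x = 0) ∨ (∀ x, e x = x)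

section KS
variable {X Y Z M N A B : Type}
  [AddCommGroup X] [Module R X] [AddCommGroup Y] [Module R Y] [AddCommGroup Z] [Module R Z]
  [AddCommGroup M] [Module R M] [AddCommGroup N] [Module R N]
  [AddCommGroup A] [Module R A] [AddCommGroup B] [Module R B]

theorem Summ.refl : Summ R X X := ⟨LinearMap.id, LinearMap.id, fun _ => rfl⟩

theorem Summ.of_equiv (e : X ≃ₗ[R] Y) : Summ R X Y := ⟨e, e.symm, fun x => e.symm_apply_apply x⟩

theorem Summ.trans (h : Summ R X Y) (h' : Summ R Y Z) : Summ R X Z := by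
  obtain ⟨i, p, hp⟩ := h
  obtain ⟨i', p', hp'⟩ := h'
  exact ⟨i' ∘ₗ i, p ∘ₗ p', fun x => by simp [hp, hp']⟩

theorem Summ.prod (h : Summ R X A) (h' : Summ R Y B) : Summ R (X × Y) (A × B) := by
  obtain ⟨i, p, hp⟩ := h
  obtain ⟨i', p', hp'⟩ := h'
  exact ⟨i.prodMap i', p.prodMap p', fun x => by simp [hp, hp']⟩

theorem Summ.fst : Summ R A (A × B) := ⟨LinearMap.inl R A B, LinearMap.fst R A B, fun _ => rfl⟩
theorem Summ.snd : Summ R B (A × B) := ⟨LinearMap.inr R A B, LinearMap.snd R A B, fun _ => rfl⟩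

theorem Summ.pi {ι : Type} (h : Summ R X A) : Summ R (ι → X) (ι → A) := by
  obtain ⟨i, p, hp⟩ := h
  exact ⟨i.compLeft ι, p.compLeft ι, fun x => by ext j; simp [hp]⟩

theorem Summ.surj (h : Summ R X M) : ∃ p : M →ₗ[R] X, Function.Surjective p := by
  obtain ⟨i, p, hp⟩ := h
  exact ⟨p, fun x => ⟨i x, hp x⟩⟩

theorem Summ.finite (h : Summ R X M) [Module.Finite R M] : Module.Finite R X := by
  obtain ⟨p, hp⟩ := h.surj
  exact Module.Finite.of_surjective p hp

theorem Summ.projective (h : Summ R X M) [Module.Projective R M] : Module.Projective R X := by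
  obtain ⟨i, p, hp⟩ := h
  exact Module.Projective.of_split i p (LinearMap.ext hp)

theorem Summ.of_subsingleton [Subsingleton X] : Summ R X M :=
  ⟨0, 0, fun _ => Subsingleton.elim _ _⟩

theorem Summ.compl (h : Summ R X M) :
    ∃ C : Submodule R M, Nonempty (M ≃ₗ[R] X × C) := by
  obtain ⟨i, p, hp⟩ := h
  refine ⟨LinearMap.ker p, ⟨LinearEquiv.ofLinearMap
    (p.prod ((LinearMap.id - i ∘ₗ p).codRestrict (LinearMap.ker p) (fun m => by simp [hp])))
    (i.coprod (LinearMap.ker p).subtype) ?_ ?_⟩⟩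
  · ext x
    · simp [hp]
    · simp [hp]
    · simp
    · simp
  · ext x
    simp

theorem Summ.mAdd (h : Summ R X M) : MAdd R X M :=
  ⟨1, h.trans (Summ.of_equiv (LinearEquiv.funUnique (Fin 1) R M).symm)⟩

theorem Summ.of_isCompl {P Q : Submodule R M} (h : IsCompl P Q) : Summ R P M :=
  ⟨P.subtype, Submodule.projectionOnto P Q h, fun x => by simp⟩

/-- a linear equivalence re-indexing powers. -/
theorem Summ.powpow (k l : ℕ) : Summ R (Fin k → Fin l → M) (Fin (k * l) → M) :=
  ⟨{ toFun := fun f j => f (finProdFinEquiv.symm j).1 (finProdFinEquiv.symm j).2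
     map_add' := fun _ _ => rfl
     map_smul' := fun _ _ => rfl },
   { toFun := fun f a b => f (finProdFinEquiv (a, b))
     map_add' := fun _ _ => rfl
     map_smul' := fun _ _ => rfl }, fun x => by
       ext a b
       simp only [LinearMap.coe_mk, AddHom.coe_mk, Equiv.symm_apply_apply]⟩

theorem Summ.powprod (k l : ℕ) : Summ R ((Fin k → M) × (Fin l → M)) (Fin (k + l) → M) :=
  ⟨{ toFun := fun f => Fin.append f.1 f.2
     map_add' := fun x y => by
       ext j
       refine Fin.addCases (fun j => ?_) (fun j => ?_) j <;> simp
     map_smul' := fun c y => by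
       ext j
       refine Fin.addCases (fun j => ?_) (fun j => ?_) j <;> simp },
   { toFun := fun f => (fun a => f (Fin.castAdd l a), fun b => f (Fin.natAdd k b))
     map_add' := fun _ _ => rfl
     map_smul' := fun _ _ => rfl }, fun x => by ext <;> simp⟩

theorem MAdd.trans (h : MAdd R X Y) (h' : MAdd R Y Z) : MAdd R X Z := by
  obtain ⟨k, hk⟩ := h
  obtain ⟨l, hl⟩ := h'
  exact ⟨k * l, hk.trans ((Summ.pi hl).trans (Summ.powpow k l))⟩

theorem MAdd.prod (h : MAdd R X Z) (h' : MAdd R Y Z) : MAdd R (X × Y) Z := by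
  obtain ⟨k, hk⟩ := h
  obtain ⟨l, hl⟩ := h'
  exact ⟨k + l, (hk.prod hl).trans (Summ.powprod k l)⟩

theorem MAdd.of_subsingleton [Subsingleton X] : MAdd R X M := ⟨0, Summ.of_subsingleton⟩

theorem MAdd.finite (h : MAdd R X M) [Module.Finite R M] : Module.Finite R X := by
  obtain ⟨k, hk⟩ := h
  exact hk.finite

theorem MAdd.projective (h : MAdd R X M) [Module.Projective R M] : Module.Projective R X := by
  obtain ⟨k, hk⟩ := h
  have : Module.Projective R (Fin k → M) :=
    Module.Projective.of_equiv (DFinsupp.linearEquivFunOnFintype (R := R) (M := fun _ : Fin k => M))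
  exact hk.projective

theorem MAdd.hom_zero (h : MAdd R X M) (h0 : ∀ f : M →ₗ[R] N, f = 0) (f : X →ₗ[R] N) :
    f = 0 := by
  obtain ⟨k, i, p, hp⟩ := h
  have : f ∘ₗ p = 0 := by
    refine LinearMap.pi_ext' fun j => ?_
    rw [h0 ((f ∘ₗ p) ∘ₗ LinearMap.single R (fun _ => M) j), LinearMap.zero_comp]
  ext x
  have := LinearMap.congr_fun this (i x)
  simpa [hp] using this

/-- minimal length choice. -/
theorem exists_min_length (p : ModuleCat.{0} R → Prop) (h : ∃ M, p M) :
    ∃ M, p M ∧ ∀ N, p N → Module.length R M ≤ Module.length R N := by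
  obtain ⟨M, hM, hmin⟩ := (InvImage.wf (fun M : ModuleCat.{0} R => Module.length R M)
    (wellFounded_lt (α := ℕ∞))).has_min {M | p M} h
  exact ⟨M, hM, fun N hN => not_lt.1 (hmin N hN)⟩

variable [IsArtinianRing R]

theorem Ind.nilp_or_bij (h : Ind R X) [Module.Finite R X] (φ : Module.End R X) :
    IsNilpotent φ ∨ IsUnit φ := by
  obtain ⟨n, hn, hn1⟩ := ((φ.eventually_isCompl_ker_pow_range_pow).and
    (Filter.eventually_ge_atTop 1)).exists
  rcases h.2 (Submodule.projection _ _ hn.symm) (fun x => by simp) with h0 | h1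
  · left
    refine ⟨n, LinearMap.ext fun x => ?_⟩
    have : (Submodule.projection _ _ hn.symm) ((φ ^ n) x) = (φ ^ n) x := by
      exact Submodule.projection_apply_of_mem_left hn.symm ⟨x, rfl⟩
    rw [h0] at this
    simp [← this]
  · right
    have hs : Function.Surjective φ := fun x => by
      have h2 := h1 x
      have : x ∈ LinearMap.range (φ ^ n) := by
        rw [← h2]; exact (Submodule.projection_apply_mem _ _)
      obtain ⟨y, hy⟩ := this
      refine ⟨(φ ^ (n - 1)) y, ?_⟩
      rw [← hy, ← Module.End.mul_apply, ← pow_succ', Nat.sub_add_cancel hn1]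
    exact (Module.End.isUnit_iff φ).2 (IsNoetherian.bijective_of_surjective_endomorphism φ hs)

theorem Ind.summ_prod (h : Ind R X) [Module.Finite R X] (hs : Summ R X (A × B)) :
    Summ R X A ∨ Summ R X B := by
  obtain ⟨i, p, hp⟩ := hs
  let a : Module.End R X := (p ∘ₗ LinearMap.inl R A B) ∘ₗ (LinearMap.fst R A B ∘ₗ i)
  let b : Module.End R X := (p ∘ₗ LinearMap.inr R A B) ∘ₗ (LinearMap.snd R A B ∘ₗ i)
  have hab : a + b = 1 := by
    ext x
    have : p ((i x).1, 0) + p (0, (i x).2) = x := by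
      rw [← map_add]; simp [hp]
    simpa [a, b] using this
  have key : ∀ (C : Type) [AddCommGroup C] [Module R C] (u : X →ₗ[R] C) (v : C →ₗ[R] X),
      IsUnit (v ∘ₗ u : Module.End R X) → Summ R X C := by
    intro C _ _ u v hu
    obtain ⟨w, hw⟩ := hu.exists_left_inv
    exact ⟨u, w ∘ₗ v, fun x => by simpa using LinearMap.congr_fun hw x⟩
  rcases h.nilp_or_bij a with h0 | h1
  · right
    have hb : b = 1 - a := by rw [← hab]; abel
    have hu : IsUnit b := by rw [hb]; exact h0.isUnit_one_sub
    exact key B _ _ hu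
  · left
    exact key A _ _ h1

theorem Ind.summ_pow (h : Ind R X) [Module.Finite R X] (k : ℕ) (hs : Summ R X (Fin k → M)) :
    Summ R X M := by
  induction k with
  | zero =>
    exfalso
    obtain ⟨i, p, hp⟩ := hs
    obtain ⟨x, y, hxy⟩ := h.1
    exact hxy (by rw [← hp x, ← hp y, Subsingleton.elim (i x) (i y)])
  | succ k ih =>
    have e : Summ R (Fin (k + 1) → M) (M × (Fin k → M)) :=
      ⟨(LinearMap.proj 0).prod (LinearMap.funLeft R M Fin.succ),
       { toFun := fun x => Fin.cons x.1 x.2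
         map_add' := fun x y => by ext j; refine Fin.cases ?_ (fun j => ?_) j <;> simp
         map_smul' := fun x y => by ext j; refine Fin.cases ?_ (fun j => ?_) j <;> simp },
       fun x => by ext j; refine Fin.cases ?_ (fun j => ?_) j <;> simp [LinearMap.funLeft]⟩
    rcases h.summ_prod (hs.trans e) with h1 | h2
    · exact h1
    · exact ih h2

theorem Ind.summ_of_mAdd (h : Ind R X) [Module.Finite R X] (hs : MAdd R X M) : Summ R X M := by
  obtain ⟨k, hk⟩ := hs
  exact h.summ_pow k hk

theorem Ind.equiv_of_summ (h : Ind R X) [Nontrivial Y] (hs : Summ R Y X) :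
    Nonempty (Y ≃ₗ[R] X) := by
  obtain ⟨i, p, hp⟩ := hs
  rcases h.2 (i ∘ₗ p) (fun x => by simp [hp]) with h0 | h1
  · exfalso
    obtain ⟨x, y, hxy⟩ := exists_pair_ne Y
    refine hxy ?_
    have : ∀ y : Y, y = 0 := fun y => by
      have := h0 (i y)
      simp only [LinearMap.comp_apply, hp] at this
      rw [← hp y, this, map_zero]
    rw [this x, this y]
  · exact ⟨LinearEquiv.ofLinearMap i p (LinearMap.ext h1) (LinearMap.ext hp)⟩

theorem length_lt_of_summ_compl [Module.Finite R M] [Nontrivial X] (e : M ≃ₗ[R] X × Y) :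
    Module.length R Y < Module.length R M := by
  have hY : Module.Finite R (X × Y) := Module.Finite.equiv e
  have : LinearMap.range (LinearMap.inr R X Y) ≠ ⊤ := by
    intro h
    obtain ⟨x, hx⟩ := exists_ne (0 : X)
    have : (x, (0 : Y)) ∈ LinearMap.range (LinearMap.inr R X Y) := by rw [h]; trivial
    obtain ⟨y, hy⟩ := this
    exact hx (by simpa using (congrArg Prod.fst hy).symm)
  have h2 := Submodule.length_lt this
  rw [e.length_eq]
  rwa [← (LinearEquiv.ofInjective (LinearMap.inr R X Y) LinearMap.inr_injective).length_eq] at h2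

theorem exists_ind_summ [Module.Finite R M] [Nontrivial M] :
    ∃ X : ModuleCat.{0} R, Ind R X ∧ Summ R X M := by
  obtain ⟨X, ⟨hX1, hX2⟩, hmin⟩ := exists_min_length
    (fun X : ModuleCat.{0} R => Nontrivial X ∧ Summ R X M)
    ⟨ModuleCat.of R M, ‹Nontrivial M›, Summ.refl⟩
  have : Module.Finite R X := hX2.finite
  refine ⟨X, ⟨hX1, fun e he => ?_⟩, hX2⟩
  by_contra hcon
  push Not at hcon
  obtain ⟨⟨x, hx⟩, ⟨y, hy⟩⟩ := hcon
  have hs : Summ R (LinearMap.range e) X :=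
    ⟨(LinearMap.range e).subtype, e.rangeRestrict, fun z => by
      obtain ⟨z, w, rfl⟩ := z
      ext
      simp [he]⟩
  have hne : LinearMap.range e ≠ ⊤ := by
    intro h
    obtain ⟨w, rfl⟩ := (LinearMap.range_eq_top.1 h) y
    exact hy (he w)
  have hnt : Nontrivial (LinearMap.range e) :=
    ⟨⟨0, ⟨e x, x, rfl⟩, fun h => hx (by simpa using (congrArg Subtype.val h).symm)⟩⟩
  exact absurd (hmin (ModuleCat.of R (LinearMap.range e)) ⟨hnt, hs.trans hX2⟩)
    (not_le.2 (Submodule.length_lt hne))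

theorem mAdd_of_ind_aux (n : ℕ∞) : ∀ (M : ModuleCat.{0} R), Module.length R M = n →
    Module.Finite R M → (∀ X : ModuleCat.{0} R, Ind R X → Summ R X M → MAdd R X N) →
    MAdd R M N := by
  induction n using WellFoundedLT.induction with
  | _ n ih =>
    intro M hM hfin hX
    rcases subsingleton_or_nontrivial M with hs | hs
    · exact MAdd.of_subsingleton
    · obtain ⟨X, hXi, hXs⟩ := exists_ind_summ (R := R) (M := M)
      obtain ⟨C, ⟨e⟩⟩ := hXs.compl
      have := hXi.1
      have hCM : Summ R C M := Summ.snd.trans (Summ.of_equiv e.symm)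
      have hC := ih _ (hM ▸ length_lt_of_summ_compl e) (ModuleCat.of R C) rfl hCM.finite
        (fun Y hY hYs => hX Y hY (hYs.trans hCM))
      exact (Summ.of_equiv e).mAdd.trans ((hX X hXi hXs).prod hC)

theorem mAdd_of_ind [Module.Finite R M]
    (hX : ∀ X : ModuleCat.{0} R, Ind R X → Summ R X M → MAdd R X N) : MAdd R M N :=
  mAdd_of_ind_aux _ (ModuleCat.of R M) rfl ‹_› hX

theorem exists_add_gen_aux (Q : ModuleCat.{0} R → Prop)
    (hs : ∀ X Y : ModuleCat.{0} R, Summ R X Y → Q Y → Q X)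
    (hp : ∀ X Y : ModuleCat.{0} R, Q X → Q Y → Q (ModuleCat.of R (X × Y)))
    (h0 : ∀ X : ModuleCat.{0} R, Subsingleton X → Q X) (n : ℕ∞) :
    ∀ (W : ModuleCat.{0} R), Module.length R W = n → Module.Finite R W →
    ∃ P : ModuleCat.{0} R, Q P ∧ MAdd R P W ∧
      ∀ U : ModuleCat.{0} R, Q U → MAdd R U W → MAdd R U P := by
  induction n using WellFoundedLT.induction with
  | _ n ih =>
    intro W hW hfin
    rcases subsingleton_or_nontrivial W with hsub | hsub
    · exact ⟨W, h0 W hsub, Summ.refl.mAdd, fun U _ h => h⟩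
    · obtain ⟨X, hXi, hXs⟩ := exists_ind_summ (R := R) (M := W)
      obtain ⟨C, ⟨e⟩⟩ := hXs.compl
      have := hXi.1
      have hCM : Summ R C W := Summ.snd.trans (Summ.of_equiv e.symm)
      have hXf : Module.Finite R X := hXs.finite
      obtain ⟨P, hP1, hP2, hP3⟩ := ih _ (hW ▸ length_lt_of_summ_compl e) (ModuleCat.of R C) rfl
        hCM.finite
      by_cases hQX : Q X
      · refine ⟨ModuleCat.of R (X × P), hp X P hQX hP1,
          hXs.mAdd.prod (hP2.trans hCM.mAdd), fun U hU hUW => ?_⟩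
        have := hUW.finite
        refine mAdd_of_ind fun Y hY hYU => ?_
        have := hYU.finite
        have hYW : Summ R Y W := hY.summ_of_mAdd (hYU.mAdd.trans hUW)
        rcases hY.summ_prod (hYW.trans (Summ.of_equiv e)) with h | h
        · exact (h.trans Summ.fst).mAdd
        · exact (hP3 Y (hs _ _ hYU hU) h.mAdd).trans Summ.snd.mAdd
      · refine ⟨P, hP1, hP2.trans hCM.mAdd, fun U hU hUW => ?_⟩
        have := hUW.finite
        refine mAdd_of_ind fun Y hY hYU => ?_
        have := hYU.finite
        have hYW : Summ R Y W := hY.summ_of_mAdd (hYU.mAdd.trans hUW)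
        rcases hY.summ_prod (hYW.trans (Summ.of_equiv e)) with h | h
        · exfalso
          have := hY.1
          obtain ⟨e'⟩ := hXi.equiv_of_summ h
          exact hQX (hs X U ((Summ.of_equiv e'.symm).trans hYU) hU)
        · exact hP3 Y (hs _ _ hYU hU) h.mAdd

/-- no repeated summands. -/
def Bas (R : Type) [Ring R] (M : Type) [AddCommGroup M] [Module R M] : Prop :=
  ∀ N : ModuleCat.{0} R, Summ R (N × N) M → Subsingleton N

theorem Bas.summ_aux (n : ℕ∞) : ∀ (M M' : ModuleCat.{0} R), Module.length R M = n →
    Module.Finite R M → Module.Finite R M' → Bas R M → MAdd R M M' → Summ R M M' := by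
  induction n using WellFoundedLT.induction with
  | _ n ih =>
    intro M M' hM hfin hfin' hB hadd
    rcases subsingleton_or_nontrivial M with hs | hs
    · exact Summ.of_subsingleton
    · obtain ⟨X, hXi, hXs⟩ := exists_ind_summ (R := R) (M := M)
      have := hXi.1
      have := hXs.finite
      obtain ⟨C, ⟨e⟩⟩ := hXs.compl
      have hXM' : Summ R X M' := hXi.summ_of_mAdd (hXs.mAdd.trans hadd)
      obtain ⟨C', ⟨e'⟩⟩ := hXM'.compl
      have hCM : Summ R C M := Summ.snd.trans (Summ.of_equiv e.symm)
      have hCM' : Summ R C' M' := Summ.snd.trans (Summ.of_equiv e'.symm)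
      have := hCM.finite
      have := hCM'.finite
      have h1 : MAdd R C C' := by
        refine mAdd_of_ind fun Y hY hYC => ?_
        have := hYC.finite
        have hYM' : Summ R Y M' := hY.summ_of_mAdd ((hYC.trans hCM).mAdd.trans hadd)
        rcases hY.summ_prod (hYM'.trans (Summ.of_equiv e')) with h | h
        · exfalso
          have := hY.1
          obtain ⟨e2⟩ := hXi.equiv_of_summ h
          have : Summ R (X × X) M :=
            (Summ.prod Summ.refl ((Summ.of_equiv e2.symm).trans hYC)).trans
              (Summ.of_equiv e.symm)
          exact not_subsingleton X (hB X this)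
        · exact h.mAdd
      have h2 := ih _ (hM ▸ length_lt_of_summ_compl e) (ModuleCat.of R C) (ModuleCat.of R C') rfl
        ‹_› ‹_› (fun N hN => hB N (hN.trans hCM)) h1
      exact (Summ.of_equiv e).trans ((Summ.prod Summ.refl h2).trans (Summ.of_equiv e'.symm))

theorem Bas.equiv [Module.Finite R M] [Module.Finite R N] (hM : Bas R M) (hN : Bas R N)
    (h : MAdd R M N) (h' : MAdd R N M) : Nonempty (M ≃ₗ[R] N) := by
  obtain ⟨i, p, hp⟩ := Bas.summ_aux _ (ModuleCat.of R M) (ModuleCat.of R N) rfl ‹_› ‹_› hM h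
  obtain ⟨i', p', hp'⟩ := Bas.summ_aux _ (ModuleCat.of R N) (ModuleCat.of R M) rfl ‹_› ‹_› hN h'
  let φ : N →ₗ[R] N := i ∘ₗ i'
  have hi : Function.Injective i := Function.LeftInverse.injective hp
  have hi' : Function.Injective i' := Function.LeftInverse.injective hp'
  have hφ := IsArtinian.bijective_of_injective_endomorphism φ (hi.comp hi')
  exact ⟨LinearEquiv.ofBijective i ⟨hi, fun y => by
    obtain ⟨x, hx⟩ := hφ.2 y
    exact ⟨i' x, hx⟩⟩⟩

end KS


/-- classes of modules. -/
abbrev MClass (R : Type) [Ring R] := ∀ (M : Type) [AddCommGroup M] [Module R M], Prop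

/-- closed under quotients and finite sums. -/
structure IsQ (T : MClass R) : Prop where
  fg : ∀ {M : Type} [AddCommGroup M] [Module R M], T M → Module.Finite R M
  quot : ∀ {M N : Type} [AddCommGroup M] [Module R M] [AddCommGroup N] [Module R N]
    (f : M →ₗ[R] N), Function.Surjective f → T M → T N
  prod : ∀ {M N : Type} [AddCommGroup M] [Module R M] [AddCommGroup N] [Module R N],
    T M → T N → T (M × N)
  zero : ∀ {M : Type} [AddCommGroup M] [Module R M], Subsingleton M → T M

/-- torsion classes. -/
structure IsTors (T : MClass R) : Prop where
  fg : ∀ {M : Type} [AddCommGroup M] [Module R M], T M → Module.Finite R M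
  quot : ∀ {M N : Type} [AddCommGroup M] [Module R M] [AddCommGroup N] [Module R N]
    (f : M →ₗ[R] N), Function.Surjective f → T M → T N
  ext : ∀ {M : Type} [AddCommGroup M] [Module R M] (N : Submodule R M), T N → T (M ⧸ N) → T M
  zero : ∀ {M : Type} [AddCommGroup M] [Module R M], Subsingleton M → T M

/-- generated modules. -/
def Gen (R : Type) [Ring R] (X Y : Type) [AddCommGroup X] [Module R X] [AddCommGroup Y]
    [Module R Y] : Prop :=
  ∃ (k : ℕ) (g : (Fin k → X) →ₗ[R] Y), Function.Surjective g

/-- relative ext-projectives. -/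
def ExtProj (T : MClass R) (X : Type) [AddCommGroup X] [Module R X] : Prop :=
  T X ∧ ∀ {E : Type} [AddCommGroup E] [Module R E] (p : E →ₗ[R] X), T E →
    Function.Surjective p → T (LinearMap.ker p) → ∃ s : X →ₗ[R] E, ∀ x, p (s x) = x

/-- modules that see `f` as an epimorphism of Hom groups. -/
def Tf {P₁ P₀ : Type} [AddCommGroup P₁] [Module R P₁] [AddCommGroup P₀] [Module R P₀]
    (f : P₁ →ₗ[R] P₀) (Y : Type) [AddCommGroup Y] [Module R Y] : Prop :=
  ∀ k : P₁ →ₗ[R] Y, ∃ m : P₀ →ₗ[R] Y, ∀ x, m (f x) = k x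

/-- modules in the class killed by `z`. -/
def Tz (T : MClass R) (z : R) : MClass R := fun M _ _ => T M ∧ ∀ m : M, z • m = 0

/-- multiplication by a central element. -/
def zL (z : R) (hz : ∀ r, z * r = r * z) (M : Type) [AddCommGroup M] [Module R M] : M →ₗ[R] M where
  toFun x := z • x
  map_add' := smul_add z
  map_smul' r x := by simp [← mul_smul, hz]

section TT
variable {X Y Z M N A B C D E P₁ P₀ : Type}
  [AddCommGroup X] [Module R X] [AddCommGroup Y] [Module R Y] [AddCommGroup Z] [Module R Z]
  [AddCommGroup M] [Module R M] [AddCommGroup N] [Module R N]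
  [AddCommGroup A] [Module R A] [AddCommGroup B] [Module R B]
  [AddCommGroup C] [Module R C] [AddCommGroup D] [Module R D] [AddCommGroup E] [Module R E]
  [AddCommGroup P₁] [Module R P₁] [AddCommGroup P₀] [Module R P₀]

theorem factor_surj (σ : A →ₗ[R] B) (hσ : Function.Surjective σ) (g : A →ₗ[R] C)
    (h : ∀ a, σ a = 0 → g a = 0) : ∃ g' : B →ₗ[R] C, ∀ a, g' (σ a) = g a := by
  refine ⟨(LinearMap.ker σ).liftQ g (fun a ha => h a ha) ∘ₗ
    (σ.quotKerEquivOfSurjective hσ).symm, fun a => ?_⟩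
  have : (σ.quotKerEquivOfSurjective hσ).symm (σ a) = Submodule.Quotient.mk a := by
    rw [LinearEquiv.symm_apply_eq]
    rfl
  simp only [LinearMap.coe_comp, LinearEquiv.coe_coe, Function.comp_apply, this]
  rfl

theorem IsTors.ext' {T : MClass R} (hT : IsTors T) (p : E →ₗ[R] X) (hp : Function.Surjective p)
    (hk : T (LinearMap.ker p)) (hX : T X) : T E :=
  hT.ext (LinearMap.ker p) hk
    (hT.quot _ (p.quotKerEquivOfSurjective hp).symm.surjective hX)

theorem IsTors.isQ {T : MClass R} (hT : IsTors T) : IsQ T where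
  fg := hT.fg
  quot := hT.quot
  zero := hT.zero
  prod {M N} _ _ _ _ hM hN := by
    refine hT.ext' (LinearMap.snd R M N) (fun n => ⟨(0, n), rfl⟩) ?_ hN
    refine hT.quot ((LinearMap.inl R M N).codRestrict (LinearMap.ker (LinearMap.snd R M N))
      (fun m => by simp)) ?_ hM
    rintro ⟨⟨m, n⟩, h⟩
    exact ⟨m, Subtype.ext (Prod.ext rfl h.symm)⟩

theorem IsQ.tz {T : MClass R} (hT : IsQ T) (z : R) : IsQ (Tz T z) where
  fg h := hT.fg h.1
  quot f hf h := ⟨hT.quot f hf h.1, fun m => by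
    obtain ⟨x, rfl⟩ := hf m
    rw [← map_smul, h.2, map_zero]⟩
  zero h := ⟨hT.zero h, fun m => Subsingleton.elim _ _⟩
  prod h h' := ⟨hT.prod h.1 h'.1, fun m => Prod.ext (h.2 _) (h'.2 _)⟩

theorem IsQ.summ {T : MClass R} (hT : IsQ T) (h : Summ R X Y) (hY : T Y) : T X := by
  obtain ⟨p, hp⟩ := h.surj
  exact hT.quot p hp hY

theorem IsQ.pi {T : MClass R} (hT : IsQ T) (hY : T Y) (k : ℕ) : T (Fin k → Y) := by
  induction k with
  | zero => exact hT.zero inferInstance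
  | succ k ih =>
    exact hT.quot _ (Fin.consLinearEquiv R (fun _ : Fin (k + 1) => Y)).surjective (hT.prod hY ih)

theorem IsQ.gen {T : MClass R} (hT : IsQ T) (h : Gen R X Y) (hY : T X) : T Y := by
  obtain ⟨k, g, hg⟩ := h
  exact hT.quot g hg (hT.pi hY k)

theorem IsQ.mAdd {T : MClass R} (hT : IsQ T) (h : MAdd R X Y) (hY : T Y) : T X := by
  obtain ⟨k, h⟩ := h
  exact hT.summ h (hT.pi hY k)

/-- combine maps. -/
def sumMap {k : ℕ} (g : Fin k → (X →ₗ[R] Y)) : (Fin k → X) →ₗ[R] Y :=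
  ∑ j, g j ∘ₗ LinearMap.proj j

theorem sumMap_apply {k : ℕ} (g : Fin k → (X →ₗ[R] Y)) (x : Fin k → X) :
    sumMap g x = ∑ j, g j (x j) := by simp [sumMap]

theorem sumMap_single {k : ℕ} (g : Fin k → (X →ₗ[R] Y)) (j : Fin k) (x : X) :
    sumMap g (Pi.single j x) = g j x := by
  rw [sumMap_apply, Finset.sum_eq_single j]
  · simp
  · intro b _ hb; simp [hb]
  · simp

/-- generated if hit by homs. -/
theorem gen_of_hit [Module.Finite R Y] (h : ∀ y : Y, ∃ (g : X →ₗ[R] Y) (x : X), g x = y) :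
    Gen R X Y := by
  obtain ⟨n, s, hs⟩ := Module.Finite.exists_fin (R := R) (M := Y)
  choose g x hx using h
  refine ⟨n, sumMap (fun j => g (s j)), ?_⟩
  rw [← LinearMap.range_eq_top, eq_top_iff, ← hs, Submodule.span_le]
  rintro _ ⟨j, rfl⟩
  exact ⟨Pi.single j (x (s j)), by rw [sumMap_single, hx]⟩

theorem Gen.prod (h : Gen R X Y) (h' : Gen R X Z) : Gen R X (Y × Z) := by
  obtain ⟨k, g, hg⟩ := h
  obtain ⟨l, g', hg'⟩ := h'
  obtain ⟨p, hp⟩ := (Summ.powprod (R := R) (M := X) k l).surj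
  refine ⟨k + l, g.prodMap g' ∘ₗ p, ?_⟩
  rw [LinearMap.coe_comp]
  refine Function.Surjective.comp ?_ hp
  rintro ⟨y, z⟩
  obtain ⟨a, rfl⟩ := hg y
  obtain ⟨b, rfl⟩ := hg' z
  exact ⟨(a, b), rfl⟩

theorem Gen.trans (h : Gen R X Y) (h' : Gen R Y Z) : Gen R X Z := by
  obtain ⟨k, g, hg⟩ := h
  obtain ⟨l, g', hg'⟩ := h'
  obtain ⟨p, hp⟩ := (Summ.powpow (R := R) (M := X) l k).surj
  refine ⟨l * k, g' ∘ₗ g.compLeft (Fin l) ∘ₗ p, ?_⟩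
  rw [LinearMap.coe_comp, LinearMap.coe_comp]
  refine hg'.comp (Function.Surjective.comp ?_ hp)
  intro y
  choose x hx using fun j => hg (y j)
  exact ⟨x, funext hx⟩

theorem Gen.of_surj (f : X →ₗ[R] Y) (hf : Function.Surjective f) : Gen R X Y := by
  refine ⟨1, f ∘ₗ LinearMap.proj 0, fun y => ?_⟩
  obtain ⟨x, rfl⟩ := hf y
  exact ⟨fun _ => x, rfl⟩

theorem MAdd.gen (h : MAdd R X Y) : Gen R Y X := by
  obtain ⟨k, h⟩ := h
  obtain ⟨p, hp⟩ := h.surj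
  exact ⟨k, p, hp⟩

theorem Gen.finite [Module.Finite R X] (h : Gen R X Y) : Module.Finite R Y := by
  obtain ⟨k, g, hg⟩ := h
  exact Module.Finite.of_surjective g hg

/-- lifting along surjections from projectives. -/
theorem lift_surj [Module.Projective R P₀] (f : A →ₗ[R] B) (hf : Function.Surjective f)
    (g : P₀ →ₗ[R] B) : ∃ h : P₀ →ₗ[R] A, ∀ x, f (h x) = g x := by
  obtain ⟨h, hh⟩ := Module.projective_lifting_property f g hf
  exact ⟨h, fun x => LinearMap.congr_fun hh x⟩

theorem Tf.quot [Module.Projective R P₁] (f : P₁ →ₗ[R] P₀) (g : M →ₗ[R] N)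
    (hg : Function.Surjective g) (h : Tf f M) : Tf f N := by
  intro k
  obtain ⟨k', hk'⟩ := lift_surj g hg k
  obtain ⟨m, hm⟩ := h k'
  exact ⟨g ∘ₗ m, fun x => by simp [hm, hk']⟩

theorem Tf.ext [Module.Projective R P₀] (f : P₁ →ₗ[R] P₀) (g : M →ₗ[R] N)
    (hg : Function.Surjective g) (h : Tf f N) (h' : Tf f (LinearMap.ker g)) : Tf f M := by
  intro k
  obtain ⟨m, hm⟩ := h (g ∘ₗ k)
  obtain ⟨m', hm'⟩ := lift_surj g hg m
  obtain ⟨l, hl⟩ := h' ((k - m' ∘ₗ f).codRestrict (LinearMap.ker g) (fun c => by simp [hm, hm']))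
  refine ⟨m' + (LinearMap.ker g).subtype ∘ₗ l, fun x => ?_⟩
  simp [hl]

theorem Tf.pi (f : P₁ →ₗ[R] P₀) (h : Tf f M) (ι : Type) : Tf f (ι → M) := by
  intro k
  choose m hm using fun j => h (LinearMap.proj j ∘ₗ k)
  exact ⟨LinearMap.pi m, fun x => funext fun j => hm j x⟩

theorem Tf.prod (f : P₁ →ₗ[R] P₀) (h : Tf f M) (h' : Tf f N) : Tf f (M × N) := by
  intro k
  obtain ⟨m, hm⟩ := h (LinearMap.fst R M N ∘ₗ k)
  obtain ⟨m', hm'⟩ := h' (LinearMap.snd R M N ∘ₗ k)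
  exact ⟨m.prod m', fun x => Prod.ext (hm x) (hm' x)⟩

theorem Tf.gen [Module.Projective R P₁] (f : P₁ →ₗ[R] P₀) (hg : Gen R M N) (h : Tf f M) :
    Tf f N := by
  obtain ⟨k, g, hg⟩ := hg
  exact Tf.quot f g hg (Tf.pi f h _)

/-- lifting maps out of the cokernel. -/
theorem Tf.lift [Module.Projective R P₀] (f : P₁ →ₗ[R] P₀) (π : P₀ →ₗ[R] X)
    (hπ : Function.Surjective π) (hex : ∀ x, π x = 0 ↔ ∃ y, f y = x)
    (g : M →ₗ[R] N) (hg : Function.Surjective g) (hker : Tf f (LinearMap.ker g))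
    (u : X →ₗ[R] N) : ∃ v : X →ₗ[R] M, ∀ x, g (v x) = u x := by
  obtain ⟨m, hm⟩ := lift_surj g hg (u ∘ₗ π)
  obtain ⟨m', hm'⟩ := hker ((m ∘ₗ f).codRestrict (LinearMap.ker g) (fun c => by
    have : π (f c) = 0 := (hex _).2 ⟨c, rfl⟩
    simp [hm, this]))
  obtain ⟨v, hv⟩ := factor_surj π hπ (m - (LinearMap.ker g).subtype ∘ₗ m') (fun a ha => by
    obtain ⟨y, rfl⟩ := (hex a).1 ha
    simp [hm'])
  refine ⟨v, fun x => ?_⟩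
  obtain ⟨p, rfl⟩ := hπ x
  rw [hv]
  simp [hm]

/-- `Fac X` is a torsion class when `X` is in `Tf f`. -/
theorem Gen.isTors [Module.Finite R X] [Module.Projective R P₀] [Module.Projective R P₁]
    (f : P₁ →ₗ[R] P₀) (π : P₀ →ₗ[R] X)
    (hπ : Function.Surjective π) (hex : ∀ x, π x = 0 ↔ ∃ y, f y = x) (hX : Tf f X) :
    IsTors (fun Y _ _ => Gen R X Y : MClass R) where
  fg h := h.finite
  quot f hf h := h.trans (Gen.of_surj f hf)
  zero h := ⟨0, 0, fun x => ⟨0, Subsingleton.elim _ _⟩⟩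
  ext {M} _ _ N h h' := by
    have h1 : Tf f N := Tf.gen f h hX
    obtain ⟨k, g, hg⟩ := h
    obtain ⟨l, g', hg'⟩ := h'
    have hk : Tf f (LinearMap.ker N.mkQ) := by rw [Submodule.ker_mkQ]; exact h1
    choose v hv using fun j : Fin l => Tf.lift f π hπ hex N.mkQ N.mkQ_surjective hk
      (g' ∘ₗ LinearMap.single R (fun _ => X) j)
    obtain ⟨p, hp⟩ := (Summ.powprod (R := R) (M := X) k l).surj
    refine ⟨k + l, ((N.subtype ∘ₗ g).coprod (sumMap v)) ∘ₗ p, ?_⟩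
    rw [LinearMap.coe_comp]
    refine Function.Surjective.comp (fun m => ?_) hp
    obtain ⟨b, hb⟩ := hg' (N.mkQ m)
    have hq : N.mkQ (sumMap v b) = N.mkQ m := by
      rw [← hb, sumMap_apply, map_sum]
      simp only [hv, LinearMap.comp_apply]
      rw [← map_sum]
      congr 1
      exact LinearMap.sum_single_apply (fun _ => X) b
    have hmem : m - sumMap v b ∈ N := by
      rw [← Submodule.ker_mkQ N, LinearMap.mem_ker, map_sub, hq, sub_self]
    obtain ⟨a, ha⟩ := hg ⟨_, hmem⟩
    refine ⟨(a, b), ?_⟩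
    simp [ha]

theorem extProj_of_tf [Module.Projective R P₀] (f : P₁ →ₗ[R] P₀) (π : P₀ →ₗ[R] X)
    (hπ : Function.Surjective π) (hex : ∀ x, π x = 0 ↔ ∃ y, f y = x) {T : MClass R} (hX : T X)
    (hT : ∀ (Y : Type) [AddCommGroup Y] [Module R Y], T Y → Tf f Y) : ExtProj T X :=
  ⟨hX, fun p _ hp hk => Tf.lift f π hπ hex p hp (hT _ hk) LinearMap.id⟩

theorem ExtProj.summ {T : MClass R} (hT : IsTors T) (h : Summ R X Y) (hY : ExtProj T Y) :
    ExtProj T X := by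
  refine ⟨hT.isQ.summ h hY.1, fun {E} _ _ p hE hp hk => ?_⟩
  obtain ⟨i, q, hq⟩ := h
  -- pullback of `p` along `q`
  let F : Submodule R (E × Y) := LinearMap.ker (p.coprod (-q))
  have hF : ∀ a : E × Y, a ∈ F ↔ p a.1 = q a.2 := fun a => by
    simp [F, LinearMap.mem_ker, ← sub_eq_add_neg, sub_eq_zero]
  let r : F →ₗ[R] Y := LinearMap.snd R E Y ∘ₗ F.subtype
  have hr : Function.Surjective r := fun y => by
    obtain ⟨e, he⟩ := hp (q y)
    exact ⟨⟨(e, y), (hF _).2 he⟩, rfl⟩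
  have hkr : T (LinearMap.ker r) := by
    refine hT.quot (((LinearMap.inl R E Y ∘ₗ (LinearMap.ker p).subtype).codRestrict F
      (fun c => (hF _).2 (by simp))).codRestrict (LinearMap.ker r) (fun c => rfl)) ?_ hk
    rintro ⟨⟨⟨e, y⟩, h1⟩, h2⟩
    have h3 : y = 0 := h2
    subst h3
    refine ⟨⟨e, ?_⟩, rfl⟩
    have := (hF _).1 h1
    simpa using this
  obtain ⟨s, hs⟩ := hY.2 r (hT.ext' r hr hkr hY.1) hr hkr
  refine ⟨LinearMap.fst R E Y ∘ₗ F.subtype ∘ₗ s ∘ₗ i, fun x => ?_⟩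
  have h1 := (hF _).1 (s (i x)).2
  have h2 : (s (i x)).1.2 = i x := hs (i x)
  simp only [LinearMap.comp_apply, LinearMap.fst_apply, Submodule.subtype_apply]
  rw [h1, h2, hq]

theorem zL_apply (z : R) (hz : ∀ r, z * r = r * z) (x : M) : zL z hz M x = z • x := rfl

/-- extending along a kernel. -/
theorem ExtProj.extend {T : MClass R} (hT : IsTors T) {z : R} (hX : ExtProj (Tz T z) X)
    (π : A →ₗ[R] X) (hπ : Function.Surjective π) (hA : ∀ a : A, z • a = 0) (hY : Tz T z Y)
    (k : LinearMap.ker π →ₗ[R] Y) : ∃ m : A →ₗ[R] Y, ∀ x : LinearMap.ker π, m x = k x := by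
  let S : Submodule R (A × Y) := LinearMap.range ((LinearMap.ker π).subtype.prod (-k))
  let p : ((A × Y) ⧸ S) →ₗ[R] X := S.liftQ (π ∘ₗ LinearMap.fst R A Y) (by
    rintro _ ⟨x, rfl⟩
    simp)
  have hpmk : ∀ a y, p (S.mkQ (a, y)) = π a := fun a y => rfl
  have hp : Function.Surjective p := fun x => by
    obtain ⟨a, rfl⟩ := hπ x
    exact ⟨S.mkQ (a, 0), rfl⟩
  have hmk : ∀ x : LinearMap.ker π, S.mkQ ((x : A), 0) = S.mkQ (0, k x) := fun x => by
    rw [← sub_eq_zero, ← map_sub, ← LinearMap.mem_ker, Submodule.ker_mkQ]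
    exact ⟨x, by simp⟩
  let j : Y →ₗ[R] LinearMap.ker p := (S.mkQ ∘ₗ LinearMap.inr R A Y).codRestrict _
    (fun y => (hpmk 0 y).trans (map_zero π))
  have hjs : Function.Surjective j := by
    rintro ⟨e, he⟩
    obtain ⟨⟨a, y⟩, rfl⟩ := S.mkQ_surjective e
    have ha : π a = 0 := he
    refine ⟨y + k ⟨a, ha⟩, Subtype.ext ?_⟩
    change S.mkQ (0, y + k ⟨a, ha⟩) = S.mkQ (a, y)
    have h1 := hmk ⟨a, ha⟩
    have h2 : ((0 : A), y + k ⟨a, ha⟩) = (0, y) + (0, k ⟨a, ha⟩) := by simp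
    have h3 : (a, y) = (0, y) + (a, 0) := by simp
    rw [h2, h3, map_add, map_add, ← h1]
  have hji : Function.Injective j := by
    rw [← LinearMap.ker_eq_bot, eq_bot_iff]
    intro y hy
    have h1 : S.mkQ (0, y) = 0 := congrArg Subtype.val hy
    rw [← LinearMap.mem_ker, Submodule.ker_mkQ] at h1
    obtain ⟨x, hx⟩ := h1
    have hx1 : (x : A) = 0 := congrArg Prod.fst hx
    have hx2 : -k x = y := congrArg Prod.snd hx
    have : x = 0 := Subtype.ext hx1
    rw [this] at hx2
    simpa using hx2.symm
  have hkz : Tz T z (LinearMap.ker p) := (hT.isQ.tz z).quot j hjs hY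
  have hEz : Tz T z ((A × Y) ⧸ S) := by
    refine ⟨hT.ext' p hp hkz.1 hX.1.1, fun e => ?_⟩
    obtain ⟨⟨a, y⟩, rfl⟩ := S.mkQ_surjective e
    rw [← map_smul]
    have : z • (a, y) = 0 := Prod.ext (hA a) (hY.2 y)
    rw [this, map_zero]
  obtain ⟨s, hs⟩ := hX.2 p hEz hp hkz
  let je := LinearEquiv.ofBijective j ⟨hji, hjs⟩
  refine ⟨je.symm ∘ₗ ((S.mkQ ∘ₗ LinearMap.inl R A Y - s ∘ₗ π).codRestrict (LinearMap.ker p)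
    (fun a => by
      rw [LinearMap.mem_ker, LinearMap.sub_apply, map_sub, LinearMap.comp_apply, LinearMap.comp_apply, hs]
      exact sub_eq_zero.2 (hpmk a 0))), fun x => ?_⟩
  simp only [LinearMap.comp_apply, LinearEquiv.coe_coe, LinearEquiv.symm_apply_eq]
  refine Subtype.ext ?_
  have h1 : π x = 0 := x.2
  have h2 := hmk x
  simp only [LinearMap.codRestrict_apply, LinearMap.sub_apply, LinearMap.comp_apply, h1, map_zero,
    sub_zero]
  exact h2

end TT


set_option linter.unusedSectionVars false
section TU
variable [IsArtinianRing R] {X Y Z M N A B C D E P₁ P₀ : Type}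
  [AddCommGroup X] [Module R X] [AddCommGroup Y] [Module R Y] [AddCommGroup Z] [Module R Z]
  [AddCommGroup M] [Module R M] [AddCommGroup N] [Module R N]
  [AddCommGroup A] [Module R A] [AddCommGroup B] [Module R B]
  [AddCommGroup C] [Module R C] [AddCommGroup D] [Module R D] [AddCommGroup E] [Module R E]
  [AddCommGroup P₁] [Module R P₁] [AddCommGroup P₀] [Module R P₀]

theorem eq_top_of_length_le [Module.Finite R M] (S : Submodule R M)
    (h : Module.length R M ≤ Module.length R S) : S = ⊤ := by
  by_contra hne
  exact absurd (Submodule.length_lt hne) (not_lt.2 h)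

/-- projective covers, in a weak form. -/
theorem exists_cover [Module.Finite R M] : ∃ (P : ModuleCat.{0} R) (σ : P →ₗ[R] M),
    Module.Finite R P ∧ Module.Projective R P ∧ Function.Surjective σ ∧
    ∀ φ : P →ₗ[R] P, (∀ x, σ (φ x) = σ x) → Function.Bijective φ := by
  obtain ⟨P, ⟨h1, h2, σ, hσ⟩, hmin⟩ := exists_min_length (R := R)
    (fun P => Module.Finite R P ∧ Module.Projective R P ∧ ∃ σ : P →ₗ[R] M, Function.Surjective σ) (by
      obtain ⟨n, f, hf⟩ := Module.Finite.exists_fin' R M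
      exact ⟨ModuleCat.of R (Fin n → R), inferInstanceAs (Module.Finite R (Fin n → R)),
        inferInstanceAs (Module.Projective R (Fin n → R)), f, hf⟩)
  refine ⟨P, σ, h1, h2, hσ, fun φ hφ => ?_⟩
  obtain ⟨n, hn, hn1⟩ := ((LinearMap.eventually_isCompl_ker_pow_range_pow φ).and
    (Filter.eventually_ge_atTop 1)).exists
  have hsum : Summ R (LinearMap.range (φ ^ n)) P := Summ.of_isCompl hn.symm
  have hpow : ∀ k x, σ ((φ ^ k) x) = σ x := by
    intro k
    induction k with
    | zero => intro x; simp
    | succ k ih => intro x; rw [pow_succ, Module.End.mul_apply, ih, hφ]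
  have htop : LinearMap.range (φ ^ n) = ⊤ := by
    refine eq_top_of_length_le _ (hmin (ModuleCat.of R (LinearMap.range (φ ^ n)))
      ⟨hsum.finite, hsum.projective, σ ∘ₗ (LinearMap.range (φ ^ n)).subtype, fun y => ?_⟩)
    obtain ⟨x, rfl⟩ := hσ y
    exact ⟨⟨(φ ^ n) x, x, rfl⟩, hpow n x⟩
  have hs : Function.Surjective φ := fun x => by
    have : x ∈ LinearMap.range (φ ^ n) := by rw [htop]; trivial
    obtain ⟨y, hy⟩ := this
    obtain ⟨m, rfl⟩ := Nat.exists_eq_add_of_le' hn1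
    rw [pow_succ', Module.End.mul_apply] at hy
    exact ⟨_, hy⟩
  exact IsNoetherian.bijective_of_surjective_endomorphism φ hs

theorem lemmaA {T : MClass R} (hT : IsTors T) {z : R} (hz : ∀ r, z * r = r * z)
    (hX : ExtProj (Tz T z) X) : ∃ (P₁ P₀ : ModuleCat.{0} R) (f : P₁ →ₗ[R] P₀) (π : P₀ →ₗ[R] X),
    Module.Finite R P₁ ∧ Module.Projective R P₁ ∧ Module.Finite R P₀ ∧ Module.Projective R P₀ ∧
    Function.Surjective π ∧ (∀ x, π x = 0 ↔ ∃ y w, x = f y + z • w) ∧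
    ∀ (Y : Type) [AddCommGroup Y] [Module R Y], Tz T z Y → Tf f Y := by
  have hXf : Module.Finite R X := hT.fg hX.1.1
  obtain ⟨n, π, hπ⟩ := Module.Finite.exists_fin' R X
  let P₀ := Fin n → R
  let S := LinearMap.range (zL z hz P₀)
  let π' : (P₀ ⧸ S) →ₗ[R] X := S.liftQ π (by
    rintro _ ⟨x, rfl⟩
    rw [LinearMap.mem_ker, zL_apply, map_smul, hX.1.2])
  have hπ' : Function.Surjective π' := fun x => by
    obtain ⟨a, rfl⟩ := hπ x
    exact ⟨S.mkQ a, rfl⟩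
  have hS : ∀ x : P₀, S.mkQ x = 0 ↔ ∃ w, x = z • w := fun x => by
    rw [← LinearMap.mem_ker, Submodule.ker_mkQ]
    exact ⟨fun ⟨w, hw⟩ => ⟨w, hw.symm⟩, fun ⟨w, hw⟩ => ⟨w, hw.symm⟩⟩
  obtain ⟨P₁, σ, h1, h2, hσ, hmin⟩ := exists_cover (R := R) (M := LinearMap.ker π')
  obtain ⟨f, hf⟩ := lift_surj S.mkQ S.mkQ_surjective ((LinearMap.ker π').subtype ∘ₗ σ)
  have hf' : ∀ x, S.mkQ (f x) = (σ x : P₀ ⧸ S) := hf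
  refine ⟨P₁, ModuleCat.of R P₀, f, π, h1, h2, inferInstanceAs (Module.Finite R (Fin n → R)),
    inferInstanceAs (Module.Projective R (Fin n → R)), hπ, fun x => ⟨fun hx => ?_, ?_⟩, ?_⟩
  · obtain ⟨p, hp⟩ := hσ ⟨S.mkQ x, hx⟩
    have : S.mkQ (x - f p) = 0 := by rw [map_sub, hf', hp, sub_self]
    obtain ⟨w, hw⟩ := (hS _).1 this
    exact ⟨p, w, by rw [← hw]; abel⟩
  · rintro ⟨y, w, rfl⟩
    rw [map_add, map_smul, hX.1.2, add_zero]
    exact (congrArg π' (hf' y)).trans (σ y).2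
  · intro Y _ _ hY k
    let N := Submodule.map k (LinearMap.ker σ)
    obtain ⟨k', hk'⟩ := factor_surj σ hσ (N.mkQ ∘ₗ k) (fun a ha => by
      rw [LinearMap.comp_apply, ← LinearMap.mem_ker, Submodule.ker_mkQ]
      exact ⟨a, ha, rfl⟩)
    obtain ⟨m', hm'⟩ := hX.extend hT π' hπ' (fun a => by
      obtain ⟨x, rfl⟩ := S.mkQ_surjective a
      rw [← map_smul]
      exact (hS _).2 ⟨x, rfl⟩) ((hT.isQ.tz z).quot N.mkQ N.mkQ_surjective hY) k'
    obtain ⟨m, hm⟩ := lift_surj N.mkQ N.mkQ_surjective (m' ∘ₗ S.mkQ)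
    have hmem : ∀ p, (k - m ∘ₗ f) p ∈ N := fun p => by
      rw [← Submodule.ker_mkQ N, LinearMap.mem_ker, LinearMap.sub_apply, map_sub,
        LinearMap.comp_apply, hm, LinearMap.comp_apply, hf', hm', hk', LinearMap.comp_apply, sub_self]
    let kL : LinearMap.ker σ →ₗ[R] N := (k ∘ₗ (LinearMap.ker σ).subtype).codRestrict N
      (fun x => ⟨x, x.2, rfl⟩)
    have hkL : Function.Surjective kL := by
      rintro ⟨_, x, hx, rfl⟩
      exact ⟨⟨x, hx⟩, rfl⟩
    obtain ⟨ψ, hψ⟩ := lift_surj kL hkL ((k - m ∘ₗ f).codRestrict N hmem)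
    have hψ' : ∀ p, k (ψ p) = k p - m (f p) := fun p => congrArg Subtype.val (hψ p)
    let φ : P₁ →ₗ[R] P₁ := LinearMap.id - (LinearMap.ker σ).subtype ∘ₗ ψ
    have hφσ : ∀ x, σ (φ x) = σ x := fun x => by
      have : σ (ψ x) = 0 := (ψ x).2
      simp [φ, this]
    have hφ := hmin φ hφσ
    refine ⟨m, fun x => ?_⟩
    obtain ⟨y, rfl⟩ := hφ.2 x
    have h3 : k (φ y) = m (f y) := by simp [φ, hψ']
    have h4 : S.mkQ (f (φ y) - f y) = 0 := by
      rw [map_sub, hf', hf', hφσ, sub_self]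
    obtain ⟨w, hw⟩ := (hS _).1 h4
    have h5 : m (f (φ y) - f y) = 0 := by rw [hw, map_smul, hY.2]
    rw [map_sub, sub_eq_zero] at h5
    rw [h3]
    exact h5

theorem lemmaB {T : MClass R} (hT : IsTors T) {z : R} (hz : ∀ r, z * r = r * z) (n : ℕ) :
    ∀ {Y : Type} [AddCommGroup Y] [Module R Y], (∀ y : Y, z ^ n • y = 0) →
    T (Y ⧸ LinearMap.range (zL z hz Y)) → T Y := by
  induction n with
  | zero =>
    intro Y _ _ h _
    have h' : ∀ y : Y, y = 0 := fun y => by simpa using h y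
    exact hT.zero ⟨fun a b => by rw [h' a, h' b]⟩
  | succ n ih =>
    intro Y _ _ h hq
    refine hT.ext _ (ih ?_ ?_) hq
    · rintro ⟨_, y, rfl⟩
      refine Subtype.ext ?_
      change z ^ n • z • y = 0
      rw [← mul_smul, ← pow_succ, h]
    · let V := LinearMap.range (zL z hz Y)
      let W := LinearMap.range (zL z hz V)
      refine hT.quot (V.liftQ (W.mkQ ∘ₗ (zL z hz Y).rangeRestrict) ?_) ?_ hq
      · rintro _ ⟨y, rfl⟩
        rw [LinearMap.mem_ker, LinearMap.comp_apply, ← LinearMap.mem_ker, Submodule.ker_mkQ]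
        exact ⟨⟨z • y, y, rfl⟩, rfl⟩
      · intro w
        obtain ⟨⟨_, y, rfl⟩, rfl⟩ := W.mkQ_surjective w
        exact ⟨V.mkQ y, rfl⟩

theorem tz_quot {T : MClass R} (hT : IsTors T) {z : R} (hz : ∀ r, z * r = r * z) (hY : T Y) :
    Tz T z (Y ⧸ LinearMap.range (zL z hz Y)) := by
  refine ⟨hT.quot (Submodule.mkQ _) (Submodule.mkQ_surjective _) hY, fun y => ?_⟩
  obtain ⟨y, rfl⟩ := Submodule.mkQ_surjective _ y
  rw [← map_smul, ← LinearMap.mem_ker, Submodule.ker_mkQ]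
  exact ⟨y, rfl⟩

theorem lemmaC {T : MClass R} (hT : IsTors T) {z : R} (hz : ∀ r, z * r = r * z)
    [Module.Projective R P₀] (f : P₁ →ₗ[R] P₀)
    (hf : ∀ (Y : Type) [AddCommGroup Y] [Module R Y], Tz T z Y → Tf f Y) (n : ℕ) :
    ∀ {Y : Type} [AddCommGroup Y] [Module R Y], (∀ y : Y, z ^ n • y = 0) → T Y → Tf f Y := by
  induction n with
  | zero =>
    intro Y _ _ h _ k
    have h' : ∀ y : Y, y = 0 := fun y => by simpa using h y
    exact ⟨0, fun x => by rw [h' (k x)]; rfl⟩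
  | succ n ih =>
    intro Y _ _ h hY
    refine Tf.ext f (LinearMap.range (zL z hz Y)).mkQ (Submodule.mkQ_surjective _)
      (hf _ (tz_quot hT hz hY)) ?_
    rw [Submodule.ker_mkQ]
    refine ih ?_ (hT.quot (zL z hz Y).rangeRestrict (LinearMap.surjective_rangeRestrict _) hY)
    rintro ⟨_, y, rfl⟩
    refine Subtype.ext ?_
    change z ^ n • z • y = 0
    rw [← mul_smul, ← pow_succ, h]

/-- nilpotent Nakayama. -/
theorem nakayama {z : R} {n : ℕ} (hzn : z ^ n = 0) (S : Submodule R Y)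
    (h : ∀ y, ∃ s ∈ S, ∃ w, y = s + z • w) : S = ⊤ := by
  have : ∀ k (y : Y), ∃ s ∈ S, ∃ w, y = s + z ^ k • w := by
    intro k
    induction k with
    | zero => exact fun y => ⟨0, S.zero_mem, y, by simp⟩
    | succ k ih =>
      intro y
      obtain ⟨s, hs, w, rfl⟩ := ih y
      obtain ⟨s', hs', w', rfl⟩ := h w
      refine ⟨s + z ^ k • s', S.add_mem hs (S.smul_mem _ hs'), w', ?_⟩
      rw [smul_add, pow_succ, mul_smul, add_assoc]
  rw [eq_top_iff]
  intro y _
  obtain ⟨s, hs, w, rfl⟩ := this n y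
  simpa [hzn] using hs

/-- a torsion class with a generated reduction is generated. -/
theorem exists_gen_of_z {T : MClass R} (hT : IsTors T) {z : R} (hz : ∀ r, z * r = r * z) {n : ℕ}
    (hzn : z ^ n = 0) (hX : ExtProj (Tz T z) X)
    (hgen : ∀ (Y : Type) [AddCommGroup Y] [Module R Y], Tz T z Y → Gen R X Y) :
    ∃ G : ModuleCat.{0} R, T G ∧
      ∀ (Y : Type) [AddCommGroup Y] [Module R Y], T Y → Gen R G Y := by
  obtain ⟨P₁, P₀, f, π, h1, h2, h3, h4, hπ, hex, hf⟩ := lemmaA hT hz hX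
  have hz0 : ∀ {Y : Type} [AddCommGroup Y] [Module R Y] (y : Y), z ^ n • y = 0 := fun y => by
    rw [hzn, zero_smul]
  have hTf : ∀ (Y : Type) [AddCommGroup Y] [Module R Y], T Y → Tf f Y := fun Y _ _ hY =>
    lemmaC hT hz f hf n hz0 hY
  let G := P₀ ⧸ LinearMap.range f
  let q : P₀ →ₗ[R] G := (LinearMap.range f).mkQ
  have hq : Function.Surjective q := Submodule.mkQ_surjective _
  have hqe : ∀ x, q x = 0 ↔ ∃ y, f y = x := fun x => by
    rw [← LinearMap.mem_ker, Submodule.ker_mkQ]; rfl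
  have hG : T G := by
    refine lemmaB hT hz n hz0 ?_
    obtain ⟨g, hg⟩ := factor_surj π hπ ((LinearMap.range (zL z hz G)).mkQ ∘ₗ q) (fun a ha => by
      obtain ⟨y, w, rfl⟩ := (hex a).1 ha
      rw [LinearMap.comp_apply, ← LinearMap.mem_ker, Submodule.ker_mkQ, map_add, (hqe _).2 ⟨y, rfl⟩,
        zero_add, map_smul]
      exact ⟨q w, rfl⟩)
    refine hT.quot g (fun x => ?_) hX.1.1
    obtain ⟨x, rfl⟩ := Submodule.mkQ_surjective _ x
    obtain ⟨x, rfl⟩ := hq x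
    exact ⟨π x, hg x⟩
  refine ⟨ModuleCat.of R G, hG, fun Y _ _ hY => ?_⟩
  let V := LinearMap.range (zL z hz Y)
  have hV : Tf f (LinearMap.ker V.mkQ) := by
    rw [Submodule.ker_mkQ]
    exact hTf _ (hT.quot (zL z hz Y).rangeRestrict (LinearMap.surjective_rangeRestrict _) hY)
  obtain ⟨k, g, hg⟩ := hgen _ (tz_quot hT hz hY)
  have hGX : ∃ r : P₀ →ₗ[R] X, Function.Surjective r ∧ ∀ x, q x = 0 → r x = 0 :=
    ⟨π, hπ, fun x hx => by
      obtain ⟨y, rfl⟩ := (hqe x).1 hx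
      exact (hex _).2 ⟨y, 0, by simp⟩⟩
  obtain ⟨r', hr'⟩ := factor_surj q hq π (fun x hx => by
      obtain ⟨y, rfl⟩ := (hqe x).1 hx
      exact (hex _).2 ⟨y, 0, by simp⟩)
  have hr's : Function.Surjective r' := fun x => by
    obtain ⟨a, rfl⟩ := hπ x
    exact ⟨q a, hr' a⟩
  choose v hv using fun j : Fin k => Tf.lift f q hq hqe V.mkQ V.mkQ_surjective hV
      (g ∘ₗ LinearMap.single R (fun _ => X) j ∘ₗ r')
  refine ⟨k, sumMap v, ?_⟩
  rw [← LinearMap.range_eq_top]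
  refine nakayama hzn _ (fun y => ?_)
  obtain ⟨x, hx⟩ := hg (V.mkQ y)
  choose x' hx' using fun j => hr's (x j)
  have hq2 : V.mkQ (sumMap v x') = V.mkQ y := by
    rw [← hx, sumMap_apply, map_sum]
    simp only [hv, LinearMap.comp_apply, hx']
    rw [← map_sum]
    congr 1
    exact LinearMap.sum_single_apply (fun _ => X) x
  have hmem : y - sumMap v x' ∈ V := by
    rw [← Submodule.ker_mkQ V, LinearMap.mem_ker, map_sub, hq2, sub_self]
  obtain ⟨w, hw⟩ := hmem
  refine ⟨_, ⟨x', rfl⟩, w, ?_⟩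
  rw [zL_apply] at hw
  rw [hw]; abel

/-- presentations of ext-projectives. -/
theorem ExtProj.pres {T : MClass R} (hT : IsTors T) (hX : ExtProj T X) :
    ∃ (P₁ P₀ : ModuleCat.{0} R) (f : P₁ →ₗ[R] P₀) (π : P₀ →ₗ[R] X),
    Module.Finite R P₁ ∧ Module.Projective R P₁ ∧ Module.Finite R P₀ ∧ Module.Projective R P₀ ∧
    Function.Surjective π ∧ (∀ x, π x = 0 ↔ ∃ y, f y = x) ∧
    ∀ (Y : Type) [AddCommGroup Y] [Module R Y], T Y → Tf f Y := by
  have hX0 : ExtProj (Tz T 0) X :=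
    ⟨⟨hX.1, fun m => zero_smul R m⟩, fun p hE hp hk => hX.2 p hE.1 hp hk.1⟩
  obtain ⟨P₁, P₀, f, π, h1, h2, h3, h4, hπ, hex, hf⟩ := lemmaA hT (fun r => by simp) hX0
  refine ⟨P₁, P₀, f, π, h1, h2, h3, h4, hπ, fun x => ?_, fun Y _ _ hY => hf Y ⟨hY, fun m => zero_smul R m⟩⟩
  rw [hex]
  simp [eq_comm]

end TU


set_option linter.unusedSectionVars false

/-- scalars from the ground field. -/
def csm {K : Type} [Field K] [Algebra K R] (c : K) (M : Type) [AddCommGroup M] [Module R M] :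
    M →ₗ[R] M where
  toFun x := algebraMap K R c • x
  map_add' := smul_add _
  map_smul' r x := by simp [← mul_smul, Algebra.commutes]

section KH
variable (K : Type) [Field K] [Algebra K R] [Module.Finite K R] {X Y Z M N : Type}
  [AddCommGroup M] [Module R M] [AddCommGroup N] [Module R N]

theorem fin_elem [Module.Finite R N] : ∃ (n : ℕ) (g : Fin n → N),
    ∀ y : N, ∃ c : Fin n → K, y = ∑ j, csm (R := R) (c j) N (g j) := by
  let : Module K N := Module.compHom N (algebraMap K R)
  have : IsScalarTower K R N := ⟨fun a b x => by
    change (a • b) • x = algebraMap K R a • b • x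
    rw [← mul_smul, Algebra.smul_def]⟩
  have hN : Module.Finite K N := Module.Finite.trans R N
  obtain ⟨n, g, hg⟩ := Module.Finite.exists_fin (R := K) (M := N)
  refine ⟨n, g, fun y => ?_⟩
  have hy : y ∈ Submodule.span K (Set.range g) := by rw [hg]; trivial
  obtain ⟨c, hc⟩ := (Submodule.mem_span_range_iff_exists_fun K).1 hy
  exact ⟨c, hc.symm⟩

theorem fin_hom [Module.Finite R M] [Module.Finite R N] : ∃ (n : ℕ) (g : Fin n → (M →ₗ[R] N)),
    ∀ y : M →ₗ[R] N, ∃ c : Fin n → K, ∀ x, y x = ∑ j, csm (R := R) (c j) N (g j x) := by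
  let : Module K N := Module.compHom N (algebraMap K R)
  let : Module K M := Module.compHom M (algebraMap K R)
  have : IsScalarTower K R N := ⟨fun a b x => by
    change (a • b) • x = algebraMap K R a • b • x
    rw [← mul_smul, Algebra.smul_def]⟩
  have : IsScalarTower K R M := ⟨fun a b x => by
    change (a • b) • x = algebraMap K R a • b • x
    rw [← mul_smul, Algebra.smul_def]⟩
  have : SMulCommClass R K N := ⟨fun a b x => by
    change a • algebraMap K R b • x = algebraMap K R b • a • x
    rw [← mul_smul, ← mul_smul, Algebra.commutes]⟩
  have hN : Module.Finite K N := Module.Finite.trans R N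
  have hM : Module.Finite K M := Module.Finite.trans R M
  have hH : Module.Finite K (M →ₗ[R] N) :=
    Module.Finite.of_injective (LinearMap.restrictScalarsₗ K R M N K)
      (LinearMap.restrictScalars_injective K)
  obtain ⟨n, g, hg⟩ := Module.Finite.exists_fin (R := K) (M := M →ₗ[R] N)
  refine ⟨n, g, fun y => ?_⟩
  have hy : y ∈ Submodule.span K (Set.range g) := by rw [hg]; trivial
  obtain ⟨c, hc⟩ := (Submodule.mem_span_range_iff_exists_fun K).1 hy
  refine ⟨c, fun x => ?_⟩
  rw [← hc, LinearMap.sum_apply]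
  rfl

end KH

section TV
variable [IsArtinianRing R] {X Y Z M N A B C D E P₁ P₀ H₁ H₀ : Type}
  [AddCommGroup X] [Module R X] [AddCommGroup Y] [Module R Y] [AddCommGroup Z] [Module R Z]
  [AddCommGroup M] [Module R M] [AddCommGroup N] [Module R N]
  [AddCommGroup A] [Module R A] [AddCommGroup B] [Module R B]
  [AddCommGroup C] [Module R C] [AddCommGroup D] [Module R D] [AddCommGroup E] [Module R E]
  [AddCommGroup P₁] [Module R P₁] [AddCommGroup P₀] [Module R P₀]
  [AddCommGroup H₁] [Module R H₁] [AddCommGroup H₀] [Module R H₀]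

/-- left approximation of the regular module. -/
def Appr (T : MClass R) (M : Type) [AddCommGroup M] [Module R M] (t : M) : Prop :=
  T M ∧ ∀ (U : Type) [AddCommGroup U] [Module R U], T U → ∀ x : U, ∃ g : M →ₗ[R] U, g t = x

theorem exists_appr (K : Type) [Field K] [Algebra K R] [Module.Finite K R]
    {T : MClass R} (hT : IsQ T) (hY : T Y)
    (hgen : ∀ (U : Type) [AddCommGroup U] [Module R U], T U → Gen R Y U) :
    ∃ (M : ModuleCat.{0} R) (t : M), Appr T M t ∧
      ∀ φ : M →ₗ[R] M, φ t = t → Function.Bijective φ := by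
  obtain ⟨M, ⟨t, ht⟩, hmin⟩ := exists_min_length (R := R) (fun M => ∃ t : M, Appr T M t) (by
    have := hT.fg hY
    obtain ⟨n, g, hg⟩ := fin_elem (R := R) K (N := Y)
    refine ⟨ModuleCat.of R (Fin n → Y), g, hT.pi hY n, fun U _ _ hU x => ?_⟩
    obtain ⟨k, p, hp⟩ := hgen U hU
    obtain ⟨y, rfl⟩ := hp x
    choose c hc using fun i => hg (y i)
    refine ⟨p ∘ₗ LinearMap.pi (fun i => sumMap (fun j => csm (R := R) (c i j) Y)), ?_⟩
    rw [LinearMap.comp_apply]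
    congr 1
    funext i
    rw [LinearMap.pi_apply, sumMap_apply, hc])
  refine ⟨M, t, ht, fun φ hφ => ?_⟩
  have hMf := hT.fg ht.1
  have htop : LinearMap.range φ = ⊤ := by
    refine eq_top_of_length_le _ (hmin (ModuleCat.of R (LinearMap.range φ)) ⟨⟨t, t, hφ⟩, ?_, ?_⟩)
    · exact hT.quot φ.rangeRestrict φ.surjective_rangeRestrict ht.1
    · intro U _ _ hU x
      obtain ⟨g, hg⟩ := ht.2 U hU x
      exact ⟨g ∘ₗ (LinearMap.range φ).subtype, hg⟩
  exact IsNoetherian.bijective_of_surjective_endomorphism φ (LinearMap.range_eq_top.1 htop)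

theorem Appr.gen {T : MClass R} (hT : IsQ T) {t : M} (h : Appr T M t) (hY : T Y) : Gen R M Y := by
  have := hT.fg hY
  refine gen_of_hit (fun y => ?_)
  obtain ⟨g, hg⟩ := h.2 Y hY y
  exact ⟨g, t, hg⟩

theorem Appr.extProj {T : MClass R} {t : M} (h : Appr T M t)
    (hmin : ∀ φ : M →ₗ[R] M, φ t = t → Function.Bijective φ) : ExtProj T M := by
  refine ⟨h.1, fun {E} _ _ p hE hp _ => ?_⟩
  obtain ⟨e, he⟩ := hp t
  obtain ⟨g, hg⟩ := h.2 E hE e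
  let φ := LinearEquiv.ofBijective (p ∘ₗ g) (hmin (p ∘ₗ g) (by simp [hg, he]))
  exact ⟨g ∘ₗ φ.symm, fun x => φ.apply_symm_apply x⟩

theorem ExtProj.lift {T : MClass R} (hT : IsTors T) (hX : ExtProj T X)
    (g : M →ₗ[R] N) (hg : Function.Surjective g) (hk : T (LinearMap.ker g)) (u : X →ₗ[R] N) :
    ∃ v : X →ₗ[R] M, ∀ x, g (v x) = u x := by
  obtain ⟨P₁, P₀, f, π, h1, h2, h3, h4, hπ, hex, hf⟩ := hX.pres hT
  exact Tf.lift f π hπ hex g hg (hf _ hk) u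

theorem ExtProj.prod {T : MClass R} (hT : IsTors T) (hX : ExtProj T X) (hY : ExtProj T Y) :
    ExtProj T (X × Y) := by
  refine ⟨hT.isQ.prod hX.1 hY.1, fun {E} _ _ p hE hp hk => ?_⟩
  obtain ⟨v, hv⟩ := hX.lift hT p hp hk (LinearMap.inl R X Y)
  obtain ⟨w, hw⟩ := hY.lift hT p hp hk (LinearMap.inr R X Y)
  exact ⟨v.coprod w, fun x => by simp [hv, hw]⟩

theorem ExtProj.mAdd {T : MClass R} (hT : IsTors T) (h : MAdd R X Y) (hY : ExtProj T Y) :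
    ExtProj T X := by
  obtain ⟨k, h⟩ := h
  refine ExtProj.summ hT h ⟨hT.isQ.pi hY.1 k, fun {E} _ _ p hE hp hk => ?_⟩
  choose v hv using fun j : Fin k => hY.lift hT p hp hk (LinearMap.single R (fun _ => Y) j)
  refine ⟨sumMap v, fun x => ?_⟩
  rw [sumMap_apply, map_sum]
  simp only [hv]
  exact LinearMap.sum_single_apply (fun _ => Y) x

theorem lemmaG {T : MClass R} (hT : IsTors T) {t : M} (h : Appr T M t) (hM : ExtProj T M) :
    ExtProj T (M ⧸ Submodule.span R {t}) := by
  refine ⟨hT.quot (Submodule.mkQ _) (Submodule.mkQ_surjective _) h.1, fun {E} _ _ p hE hp hk => ?_⟩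
  obtain ⟨v, hv⟩ := hM.lift hT p hp hk (Submodule.mkQ _)
  have hvt : p (v t) = 0 := by
    rw [hv, ← LinearMap.mem_ker, Submodule.ker_mkQ]
    exact Submodule.mem_span_singleton_self t
  obtain ⟨g, hg⟩ := h.2 _ hk ⟨v t, hvt⟩
  have hle : Submodule.span R {t} ≤ LinearMap.ker (v - (LinearMap.ker p).subtype ∘ₗ g) := by
    rw [Submodule.span_le, Set.singleton_subset_iff]
    simp [hg]
  refine ⟨Submodule.liftQ _ _ hle, fun x => ?_⟩
  obtain ⟨x, rfl⟩ := Submodule.mkQ_surjective _ x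
  rw [Submodule.mkQ_apply, Submodule.liftQ_apply]
  simp [hv]

theorem lemmaH (K : Type) [Field K] [Algebra K R] [Module.Finite K R]
    {T : MClass R} (hT : IsTors T) {t : M} (h : Appr T M t) (hM : ExtProj T M)
    (hN : ExtProj T N) : MAdd R N (M × (M ⧸ Submodule.span R {t})) := by
  let V := Submodule.span R {t}
  have hV := lemmaG hT h hM
  have := hT.fg hV.1
  have := hT.fg hN.1
  obtain ⟨k, p, hp⟩ := h.gen hT.isQ hN.1
  obtain ⟨n, g, hg⟩ := fin_hom (R := R) K (M := M ⧸ V) (N := N)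
  let D := (Fin k → M) × (Fin n → M ⧸ V)
  let v : D →ₗ[R] N := p.coprod (sumMap g)
  have hvv : ∀ x y, v (x, y) = p x + sumMap g y := fun x y => rfl
  have hv : Function.Surjective v := fun x => by
    obtain ⟨y, rfl⟩ := hp x
    exact ⟨(y, 0), hvv y 0 |>.trans (by simp)⟩
  have hD : T D := hT.isQ.prod (hT.isQ.pi h.1 _) (hT.isQ.pi hV.1 _)
  have := hT.fg hD
  have hk : T (LinearMap.ker v) := by
    refine hT.isQ.gen (gen_of_hit (R := R) (X := M) fun x => ?_) h.1
    obtain ⟨a, ha⟩ := h.2 D hD x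
    have hle : V ≤ LinearMap.ker (v ∘ₗ a) := by
      rw [Submodule.span_le, Set.singleton_subset_iff]
      simp [ha]
    obtain ⟨c, hc⟩ := hg (V.liftQ (v ∘ₗ a) hle)
    let b : (M ⧸ V) →ₗ[R] D := LinearMap.inr R _ _ ∘ₗ LinearMap.pi (fun j => csm (R := R) (c j) (M ⧸ V))
    have hb : ∀ m, v (b (V.mkQ m)) = v (a m) := fun m => by
      have h1 := hc (V.mkQ m)
      rw [Submodule.mkQ_apply, Submodule.liftQ_apply] at h1
      rw [LinearMap.comp_apply] at h1
      rw [h1]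
      have h2 : b (V.mkQ m) = (0, fun j => csm (R := R) (c j) (M ⧸ V) (V.mkQ m)) := rfl
      rw [h2, hvv, map_zero, zero_add, sumMap_apply]
      refine Finset.sum_congr rfl fun j _ => ?_
      exact map_smul (g j) _ _
    have hqt : V.mkQ t = 0 := by
      rw [← LinearMap.mem_ker, Submodule.ker_mkQ]
      exact Submodule.mem_span_singleton_self t
    refine ⟨(a - b ∘ₗ V.mkQ).codRestrict (LinearMap.ker v) (fun m => by
      rw [LinearMap.mem_ker, LinearMap.sub_apply, map_sub, LinearMap.comp_apply, hb, sub_self]), t, ?_⟩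
    refine Subtype.ext ?_
    change a t - b (V.mkQ t) = x
    rw [hqt, map_zero, sub_zero, ha]
  obtain ⟨s, hs⟩ := hN.2 v hD hv hk
  have h1 : Summ R N D := ⟨s, v, hs⟩
  have h2 : MAdd R D (M × (M ⧸ V)) :=
    MAdd.prod (MAdd.trans ⟨k, Summ.refl⟩ (Summ.mAdd Summ.fst))
      (MAdd.trans ⟨n, Summ.refl⟩ (Summ.mAdd Summ.snd))
  exact h1.mAdd.trans h2

theorem lift_exact [Module.Projective R X] (h : H₁ →ₗ[R] H₀) (g : X →ₗ[R] H₀)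
    (hg : ∀ x, ∃ y, h y = g x) : ∃ l : X →ₗ[R] H₁, ∀ x, h (l x) = g x := by
  obtain ⟨l, hl⟩ := lift_surj h.rangeRestrict h.surjective_rangeRestrict
    (g.codRestrict (LinearMap.range h) (fun x => hg x))
  exact ⟨l, fun x => congrArg Subtype.val (hl x)⟩

theorem lemmaJ [Module.Projective R P₁] [Module.Projective R P₀] [Module.Projective R H₁]
    [Module.Projective R H₀] [Module.Finite R P₁] (f : P₁ →ₗ[R] P₀) (π : P₀ →ₗ[R] C)
    (hπ : Function.Surjective π) (hex : ∀ x, π x = 0 ↔ ∃ y, f y = x)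
    (h : H₁ →ₗ[R] H₀) (ρ : H₀ →ₗ[R] Z)
    (hρ : Function.Surjective ρ) (hex' : ∀ x, ρ x = 0 ↔ ∃ y, h y = x)
    (hCZ : Summ R C Z) (hN : Tf h N)
    (hkill : ∀ (F : ModuleCat.{0} R) (j : F →ₗ[R] P₁) (r : P₁ →ₗ[R] F), (∀ x, r (j x) = x) →
      (∀ x, f (j x) = 0) → ∀ u : F →ₗ[R] N, u = 0) : Tf f N := by
  obtain ⟨i, p, hp⟩ := hCZ
  obtain ⟨a0, ha0⟩ := lift_surj ρ hρ (i ∘ₗ π)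
  obtain ⟨a1, ha1⟩ := lift_exact h (a0 ∘ₗ f) (fun x => (hex' _).1 (by
    rw [LinearMap.comp_apply, ha0, LinearMap.comp_apply, (hex _).2 ⟨x, rfl⟩, map_zero]))
  obtain ⟨b0, hb0⟩ := lift_surj π hπ (p ∘ₗ ρ)
  obtain ⟨b1, hb1⟩ := lift_exact f (b0 ∘ₗ h) (fun x => (hex _).1 (by
    rw [LinearMap.comp_apply, hb0, LinearMap.comp_apply, (hex' _).2 ⟨x, rfl⟩, map_zero]))
  obtain ⟨s, hs⟩ := lift_exact f (b0 ∘ₗ a0 - LinearMap.id) (fun x => (hex _).1 (by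
    simp [hb0, ha0, hp]))
  let ψ : Module.End R P₁ := b1 ∘ₗ a1 - LinearMap.id - s ∘ₗ f
  have hfψ : ∀ x, f (ψ x) = 0 := fun x => by simp [ψ, hb1, ha1, hs]
  intro k
  obtain ⟨m, hm⟩ := hN (k ∘ₗ b1)
  let m2 : P₀ →ₗ[R] N := m ∘ₗ a0 - k ∘ₗ s
  have hk : ∀ x, k x = m2 (f x) - k (ψ x) := fun x => by
    have h1 : m (a0 (f x)) = k (b1 (a1 x)) := by
      have := hm (a1 x)
      rw [ha1] at this
      exact this
    simp [ψ, m2, h1]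
  have hkψ : ∀ x, k (ψ x) = - k (ψ (ψ x)) := fun x => by
    conv_lhs => rw [hk (ψ x), hfψ, map_zero, zero_sub]
  have hdesc : ∀ n, (∀ x, k ((ψ ^ (n + 1)) x) = 0) → ∀ x, k (ψ x) = 0 := by
    intro n
    induction n with
    | zero => intro h x; simpa using h x
    | succ n ih =>
      intro h
      refine ih fun x => ?_
      have h1 := h x
      rw [pow_succ', pow_succ', Module.End.mul_apply, Module.End.mul_apply] at h1
      rw [pow_succ', Module.End.mul_apply, hkψ, h1, neg_zero]
  obtain ⟨n, hn, hn1⟩ := ((LinearMap.eventually_isCompl_ker_pow_range_pow ψ).and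
    (Filter.eventually_ge_atTop 1)).exists
  obtain ⟨n, rfl⟩ := Nat.exists_eq_add_of_le' hn1
  obtain ⟨j, r, hjr⟩ : ∃ (j : LinearMap.range (ψ ^ (n+1)) →ₗ[R] P₁) (r : P₁ →ₗ[R] _),
      j = (LinearMap.range (ψ ^ (n+1))).subtype ∧ ∀ x, r (j x) = x :=
    ⟨_, Submodule.projectionOnto _ _ hn.symm, rfl, fun x => by simp⟩
  have hz := hkill (ModuleCat.of R (LinearMap.range (ψ ^ (n + 1)))) j r hjr.2 (by
    rw [hjr.1]
    rintro ⟨_, x, rfl⟩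
    change f ((ψ ^ (n + 1)) x) = 0
    rw [pow_succ', Module.End.mul_apply, hfψ]) (k ∘ₗ j)
  have hz' := hdesc n (fun x => by
    have := LinearMap.congr_fun hz ⟨(ψ ^ (n + 1)) x, x, rfl⟩
    rw [hjr.1] at this
    exact this)
  refine ⟨m2, fun x => ?_⟩
  rw [hk x, hz', sub_zero]

theorem Tf.compLeft (h : H₁ →ₗ[R] H₀) (hN : Tf h N) (m : ℕ) : Tf (h.compLeft (Fin m)) N := by
  intro k
  choose g hg using fun j : Fin m => hN (k ∘ₗ LinearMap.single R (fun _ => H₁) j)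
  refine ⟨sumMap g, fun x => ?_⟩
  rw [sumMap_apply]
  have : ∀ j, g j ((h.compLeft (Fin m)) x j) = k (LinearMap.single R (fun _ => H₁) j (x j)) :=
    fun j => hg j (x j)
  simp only [this]
  rw [← map_sum]
  congr 1
  exact LinearMap.sum_single_apply (fun _ => H₁) x

theorem mAdd_of_proj [Module.Finite R X] [Module.Projective R X] : MAdd R X R := by
  obtain ⟨n, p, hp⟩ := Module.Finite.exists_fin' R X
  obtain ⟨i, hi⟩ := lift_surj p hp LinearMap.id
  exact ⟨n, i, p, hi⟩

end TV


set_option linter.unusedSectionVars false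

/-- unbundled τ-rigid pairs. -/
def RPair (R : Type) [Ring R] (M P : Type) [AddCommGroup M] [Module R M] [AddCommGroup P]
    [Module R P] : Prop :=
  Module.Finite R M ∧ (∃ (P₁ P₀ : ModuleCat.{0} R) (f : P₁ →ₗ[R] P₀) (π : P₀ →ₗ[R] M),
    Module.Finite R P₁ ∧ Module.Projective R P₁ ∧ Module.Finite R P₀ ∧ Module.Projective R P₀ ∧
    Function.Surjective π ∧ (∀ x, π x = 0 ↔ ∃ y, f y = x) ∧ Tf f M) ∧ Module.Finite R P ∧
    Module.Projective R P ∧ ∀ f : P →ₗ[R] M, f = 0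

/-- unbundled support τ-tilting modules. -/
def STT (R : Type) [Ring R] (M : Type) [AddCommGroup M] [Module R M] : Prop :=
  ∃ P : ModuleCat.{0} R, RPair R M P ∧
    ∀ N Q : ModuleCat.{0} R, RPair R (M × N) (P × Q) → MAdd R N M ∧ MAdd R Q P

section TW
variable [IsArtinianRing R] {X Y Z M N A B C D E P₁ P₀ H₁ H₀ P Q M' P' : Type}
  [AddCommGroup X] [Module R X] [AddCommGroup Y] [Module R Y] [AddCommGroup Z] [Module R Z]
  [AddCommGroup M] [Module R M] [AddCommGroup N] [Module R N]
  [AddCommGroup P] [Module R P] [AddCommGroup Q] [Module R Q]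
  [AddCommGroup P'] [Module R P'] [AddCommGroup M'] [Module R M']

theorem pi_projective [Module.Projective R M] (k : ℕ) : Module.Projective R (Fin k → M) :=
  Module.Projective.of_equiv (DFinsupp.linearEquivFunOnFintype (R := R) (M := fun _ : Fin k => M))

theorem stt_of_torsion (K : Type) [Field K] [Algebra K R] [Module.Finite K R]
    {T : MClass R} (hT : IsTors T) (hX : T X)
    (hgen : ∀ (Y : Type) [AddCommGroup Y] [Module R Y], T Y → Gen R X Y) :
    ∃ M : ModuleCat.{0} R, STT R M ∧ Bas R M ∧
      ∀ (Y : Type) [AddCommGroup Y] [Module R Y], T Y ↔ Gen R M Y := by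
  obtain ⟨T0, t, ht, htmin⟩ := exists_appr K hT.isQ hX hgen
  have hT0 := ht.extProj htmin
  let V := Submodule.span R {t}
  let T1 := T0 ⧸ V
  have hT1 : ExtProj T T1 := lemmaG hT ht hT0
  let W := T0 × T1
  have hW : ExtProj T W := hT0.prod hT hT1
  have hWf := hT.fg hW.1
  obtain ⟨M, ⟨hMW, hWM⟩, hmin⟩ := exists_min_length (R := R) (fun M => MAdd R M W ∧ MAdd R W M)
    ⟨ModuleCat.of R W, Summ.refl.mAdd, Summ.refl.mAdd⟩
  have hMf : Module.Finite R M := hMW.finite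
  have hM : ExtProj T M := hW.mAdd hT hMW
  have hTM : ∀ (Y : Type) [AddCommGroup Y] [Module R Y], T Y → Gen R M Y := fun Y _ _ hY =>
    ((Summ.fst (R := R) (A := T0) (B := T1)).mAdd.trans hWM).gen.trans (ht.gen hT.isQ hY)
  refine ⟨M, ?_, ?_, fun Y _ _ => ⟨hTM Y, fun h => hT.isQ.gen h hM.1⟩⟩
  swap
  · -- basic
    intro N hN
    by_contra hns
    have hnt : Nontrivial N := not_subsingleton_iff_nontrivial.1 hns
    obtain ⟨C, ⟨e⟩⟩ := hN.compl
    have e' : M ≃ₗ[R] N × (N × C) := e.trans (LinearEquiv.prodAssoc R N N C)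
    have hlt := length_lt_of_summ_compl (R := R) e'
    refine absurd (hmin (ModuleCat.of R (N × C)) ⟨?_, ?_⟩) (not_le.2 hlt)
    · exact ((Summ.snd (R := R) (A := N) (B := N × C)).trans (Summ.of_equiv e'.symm)).mAdd.trans hMW
    · refine hWM.trans ((Summ.of_equiv e').mAdd.trans ?_)
      exact (Summ.fst (R := R) (A := N) (B := C)).mAdd.prod Summ.refl.mAdd
  obtain ⟨P, hP0, hPR, hPmax⟩ := exists_add_gen_aux (R := R) (fun U => ∀ u : U →ₗ[R] M, u = 0)
    (fun A B h hB u => Summ.mAdd h |>.hom_zero hB u)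
    (fun A B hA hB u => by
      refine LinearMap.prod_ext ?_ ?_
      · rw [hA (u ∘ₗ _), LinearMap.zero_comp]
      · rw [hB (u ∘ₗ _), LinearMap.zero_comp])
    (fun A hA u => LinearMap.ext fun x => by
      rw [Subsingleton.elim x 0, map_zero, map_zero]) _ (ModuleCat.of R R) rfl
      (inferInstanceAs (Module.Finite R R))
  have hPR' : MAdd R P R := hPR
  have hPf : Module.Finite R P := hPR'.finite
  have hPp : Module.Projective R P := hPR'.projective
  have hmaxP : ∀ U : ModuleCat.{0} R, Module.Finite R U → Module.Projective R U →
      (∀ u : U →ₗ[R] M, u = 0) → MAdd R U P := fun U _ _ hu => hPmax U hu mAdd_of_proj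
  refine ⟨P, ⟨hMf, ?_, hPf, hPp, hP0⟩, fun N Q hNQ => ?_⟩
  · obtain ⟨P₁, P₀, f, π, h1, h2, h3, h4, hπ, hex, hf⟩ := hM.pres hT
    exact ⟨P₁, P₀, f, π, h1, h2, h3, h4, hπ, hex, hf _ hM.1⟩
  obtain ⟨hMNf, ⟨H₁, H₀, h, ρ, hh1, hh2, hh3, hh4, hρ, hρex, hMN⟩, hPQf, hPQp, hPQ⟩ := hNQ
  have hNf : Module.Finite R N := (Summ.snd (R := R) (A := M) (B := N)).finite
  have hQM : ∀ u : Q →ₗ[R] M, u = 0 := fun u => LinearMap.ext fun x => by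
    have := LinearMap.congr_fun (hPQ (LinearMap.inl R M N ∘ₗ u ∘ₗ LinearMap.snd R P Q)) (0, x)
    exact congrArg Prod.fst this
  have hPN : ∀ u : P →ₗ[R] N, u = 0 := fun u => LinearMap.ext fun x => by
    have := LinearMap.congr_fun (hPQ (LinearMap.inr R M N ∘ₗ u ∘ₗ LinearMap.fst R P Q)) (x, 0)
    exact congrArg Prod.snd this
  refine ⟨?_, hmaxP Q (Summ.snd (R := R) (A := P) (B := Q)).finite
    (Summ.snd (R := R) (A := P) (B := Q)).projective hQM⟩
  have hNT : T N := by
    obtain ⟨Q₁, Q₀, d, π, h1, h2, h3, h4, hπ, hex, hd⟩ := hT0.pres hT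
    obtain ⟨q0, hq0⟩ := hπ t
    let f : (Q₁ × R) →ₗ[R] Q₀ := d.coprod (LinearMap.toSpanSingleton R Q₀ q0)
    have hfa : ∀ a r, f (a, r) = d a + r • q0 := fun a r => rfl
    have hTf : ∀ (Y : Type) [AddCommGroup Y] [Module R Y], T Y → Tf f Y := by
      intro Y _ _ hY k
      obtain ⟨m, hm⟩ := hd Y hY (k ∘ₗ LinearMap.inl R Q₁ R)
      obtain ⟨g, hg⟩ := ht.2 Y hY (k (0, 1) - m q0)
      refine ⟨m + g ∘ₗ π, ?_⟩
      rintro ⟨a, r⟩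
      have e1 : π (d a) = 0 := (hex _).2 ⟨a, rfl⟩
      have e2 : k (a, r) = k (a, 0) + r • k (0, 1) := by
        rw [← map_smul, ← map_add]; simp
      have e3 : m (d a) = k (a, 0) := hm a
      rw [hfa, LinearMap.add_apply, map_add, map_smul, LinearMap.comp_apply, map_add, map_smul, e1,
        hq0, zero_add, map_smul, hg, e2, e3, smul_sub]
      abel
    have hfex : ∀ x, (V.mkQ ∘ₗ π) x = 0 ↔ ∃ y, f y = x := by
      intro x
      rw [LinearMap.comp_apply, ← LinearMap.mem_ker, Submodule.ker_mkQ, Submodule.mem_span_singleton]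
      constructor
      · rintro ⟨r, hr⟩
        have : π (x - r • q0) = 0 := by rw [map_sub, map_smul, hq0, hr, sub_self]
        obtain ⟨a, ha⟩ := (hex _).1 this
        exact ⟨(a, r), by rw [hfa, ha]; abel⟩
      · rintro ⟨⟨a, r⟩, rfl⟩
        exact ⟨r, by rw [hfa, map_add, (hex _).2 ⟨a, rfl⟩, map_smul, hq0, zero_add]⟩
    obtain ⟨m, hm⟩ := (Summ.snd (R := R) (A := T0) (B := T1)).mAdd.trans hWM
    have hpj1 := pi_projective (R := R) (M := H₁) m
    have hpj0 := pi_projective (R := R) (M := H₀) m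
    have hfN : Tf f N := by
      refine lemmaJ f (V.mkQ ∘ₗ π) (V.mkQ_surjective.comp hπ) hfex (h.compLeft (Fin m))
        (ρ.compLeft (Fin m)) (fun y => ?_) (fun x => ?_)
        (hm.trans (Summ.pi (Summ.fst (R := R) (A := M) (B := N))))
        (Tf.compLeft h (Tf.quot h (LinearMap.snd R M N) (fun n => ⟨(0, n), rfl⟩) hMN) m) ?_
      · choose x hx using fun j => hρ (y j)
        exact ⟨x, funext hx⟩
      · constructor
        · intro hx
          choose y hy using fun j => (hρex (x j)).1 (congrFun hx j)
          exact ⟨y, funext hy⟩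
        · rintro ⟨y, rfl⟩
          exact funext fun j => (hρex _).2 ⟨y j, rfl⟩
      · intro F j r hjr hfj u
        have hs : Summ R F (Q₁ × R) := ⟨j, r, hjr⟩
        have hF : MAdd R F P := hmaxP F hs.finite hs.projective (fun w => by
          obtain ⟨m, hm⟩ := hTf M hM.1 (w ∘ₗ r)
          refine LinearMap.ext fun x => ?_
          have := hm (j x)
          rw [hfj, map_zero, LinearMap.comp_apply, hjr] at this
          exact this.symm)
        exact hF.hom_zero hPN u
    refine hT.isQ.gen (gen_of_hit (R := R) (X := T0) fun n => ?_) ht.1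
    obtain ⟨m, hm⟩ := hfN (LinearMap.toSpanSingleton R N n ∘ₗ LinearMap.snd R Q₁ R)
    obtain ⟨g, hg⟩ := factor_surj π hπ m (fun a ha => by
      obtain ⟨y, rfl⟩ := (hex a).1 ha
      have := hm (y, 0)
      rw [hfa, zero_smul, add_zero] at this
      rw [this]
      simp)
    refine ⟨g, t, ?_⟩
    rw [← hq0, hg]
    have := hm (0, 1)
    rw [hfa, map_zero, zero_add, one_smul] at this
    rw [this]
    simp
  have hMNE : ExtProj T (M × N) := by
    refine extProj_of_tf h ρ hρ hρex (hT.isQ.prod hM.1 hNT) (fun Y _ _ hY => ?_)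
    refine Tf.gen h ((Summ.fst (R := R) (A := M) (B := N)).mAdd.gen.trans (hTM Y hY)) hMN
  have hNE : ExtProj T N := ExtProj.summ hT (Summ.snd (R := R) (A := M) (B := N)) hMNE
  exact (lemmaH K hT ht hT0 hNE).trans hWM

theorem STT.isTors (h : STT R M) : Module.Finite R M ∧ IsTors (fun Y _ _ => Gen R M Y : MClass R) := by
  obtain ⟨P, ⟨h0, ⟨H₁, H₀, h, ρ, hh1, hh2, hh3, hh4, hρ, hρex, hMN⟩, -⟩, -⟩ := h
  exact ⟨h0, Gen.isTors h ρ hρ hρex hMN⟩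

theorem STT.mAdd (h : STT R M) (h' : STT R N) (h1 : Gen R M N) (h2 : Gen R N M) : MAdd R N M := by
  obtain ⟨P, ⟨h0, ⟨A₁, A₀, f, π, hf1, hf2, hf3, hf4, hπ, hπex, hM⟩, hP1, hP2, hPM⟩, hmax⟩ := h
  obtain ⟨-, ⟨h0', ⟨B₁, B₀, g, ρ, hg1, hg2, hg3, hg4, hρ, hρex, hN⟩, -⟩, -⟩ := h'
  refine (hmax (ModuleCat.of R N) (ModuleCat.of R PUnit) ⟨?_, ⟨ModuleCat.of R (A₁ × B₁), ModuleCat.of R (A₀ × B₀),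
    f.prodMap g, π.prodMap ρ, ?_, ?_, ?_, ?_, ?_, ?_, ?_⟩, ?_, ?_, ?_⟩).1
  · exact inferInstanceAs (Module.Finite R (M × N))
  · exact inferInstanceAs (Module.Finite R (A₁ × B₁))
  · exact inferInstanceAs (Module.Projective R (A₁ × B₁))
  · exact inferInstanceAs (Module.Finite R (A₀ × B₀))
  · exact inferInstanceAs (Module.Projective R (A₀ × B₀))
  · rintro ⟨a, b⟩
    obtain ⟨a, rfl⟩ := hπ a
    obtain ⟨b, rfl⟩ := hρ b
    exact ⟨(a, b), rfl⟩
  · rintro ⟨a, b⟩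
    constructor
    · intro hab
      obtain ⟨a, rfl⟩ := (hπex a).1 (congrArg Prod.fst hab)
      obtain ⟨b, rfl⟩ := (hρex b).1 (congrArg Prod.snd hab)
      exact ⟨(a, b), rfl⟩
    · rintro ⟨⟨a, b⟩, h⟩
      rw [← h]
      exact Prod.ext ((hπex _).2 ⟨a, rfl⟩) ((hρex _).2 ⟨b, rfl⟩)
  · have e1 : Tf f (M × N) := Tf.prod f hM (Tf.gen f h1 hM)
    have e2 : Tf g (M × N) := Tf.prod g (Tf.gen g h2 hN) hN
    intro k
    obtain ⟨m, hm⟩ := e1 (k ∘ₗ LinearMap.inl R A₁ B₁)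
    obtain ⟨n, hn⟩ := e2 (k ∘ₗ LinearMap.inr R A₁ B₁)
    refine ⟨m.coprod n, ?_⟩
    rintro ⟨a, b⟩
    have e3 : k (a, b) = k (a, 0) + k (0, b) := by rw [← map_add]; simp
    rw [e3]
    exact congrArg₂ (· + ·) (hm a) (hn b)
  · exact inferInstanceAs (Module.Finite R (P × PUnit))
  · exact inferInstanceAs (Module.Projective R (P × PUnit))
  · intro u
    have hPN : ∀ w : P →ₗ[R] N, w = 0 := fun w => by
      obtain ⟨k, p, hp⟩ := h1
      obtain ⟨l, hl⟩ := lift_surj p hp w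
      have : l = 0 := LinearMap.ext fun x => funext fun j =>
        LinearMap.congr_fun (hPM (LinearMap.proj j ∘ₗ l)) x
      refine LinearMap.ext fun x => ?_
      rw [← hl, this]; simp
    refine LinearMap.ext fun ⟨x, y⟩ => Prod.ext ?_ ?_
    · rw [Subsingleton.elim y 0]
      exact LinearMap.congr_fun (hPM (LinearMap.fst R M N ∘ₗ u ∘ₗ LinearMap.inl R P PUnit)) x
    · rw [Subsingleton.elim y 0]
      exact LinearMap.congr_fun (hPN (LinearMap.snd R M N ∘ₗ u ∘ₗ LinearMap.inl R P PUnit)) x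

theorem STT.equiv (h : STT R M) (h' : STT R N) (hb : Bas R M) (hb' : Bas R N)
    (h1 : Gen R M N) (h2 : Gen R N M) : Nonempty (M ≃ₗ[R] N) := by
  have := h.isTors.1
  have := h'.isTors.1
  exact Bas.equiv hb hb' (h'.mAdd h h2 h1) (h.mAdd h' h1 h2)

theorem RPair.congr (e : M ≃ₗ[R] M') (e' : P ≃ₗ[R] P') (h : RPair R M P) : RPair R M' P' := by
  obtain ⟨h0, ⟨A₁, A₀, f, π, hf1, hf2, hf3, hf4, hπ, hπex, hM⟩, hP1, hP2, hPM⟩ := h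
  refine ⟨Module.Finite.equiv e, ⟨A₁, A₀, f, e ∘ₗ π, hf1, hf2, hf3, hf4, e.surjective.comp hπ,
    fun x => ?_, Tf.quot f e.toLinearMap e.surjective hM⟩, Module.Finite.equiv e',
    Module.Projective.of_equiv e', fun u => ?_⟩
  · rw [← hπex]; simp
  · have := hPM (e.symm ∘ₗ u ∘ₗ e')
    refine LinearMap.ext fun x => ?_
    have h1 := LinearMap.congr_fun this (e'.symm x)
    simpa using h1

/-! translation -/

theorem isTauRigidPairMod_iff (M P : ModCat R) : IsTauRigidPairMod M P ↔ RPair R M P := by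
  constructor
  · rintro ⟨h0, ⟨A₁, A₀, f, g, h1, h2, h3, h4, h5, h6, h7⟩, h8, h9, h10⟩
    refine ⟨h0, ⟨A₁, A₀, f.hom, g.hom, h3, (IsProjective.iff_projective A₁).2 h1, h4,
      (IsProjective.iff_projective A₀).2 h2, h5, fun x => ?_, fun k => ?_⟩, h8,
      (IsProjective.iff_projective P).2 h9, fun u => ?_⟩
    · exact h6 x
    · obtain ⟨m, hm⟩ := h7 (ModuleCat.ofHom k)
      refine ⟨m.hom, fun x => ?_⟩
      exact LinearMap.congr_fun (congrArg ModuleCat.Hom.hom hm) x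
    · exact congrArg ModuleCat.Hom.hom (h10 (ModuleCat.ofHom u))
  · rintro ⟨h0, ⟨A₁, A₀, f, g, h3, h1, h4, h2, h5, h6, h7⟩, h8, h9, h10⟩
    refine ⟨h0, ⟨A₁, A₀, ModuleCat.ofHom f, ModuleCat.ofHom g, (IsProjective.iff_projective A₁).1 h1,
      (IsProjective.iff_projective A₀).1 h2, h3, h4, h5, fun x => h6 x, fun k => ?_⟩, h8,
      (IsProjective.iff_projective P).1 h9, fun u => ?_⟩
    · obtain ⟨m, hm⟩ := h7 k.hom
      exact ⟨ModuleCat.ofHom m, ModuleCat.hom_ext (LinearMap.ext hm)⟩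
    · exact ModuleCat.hom_ext (h10 u.hom)

theorem memAddMod_iff (N M : ModCat R) : MemAddMod N M ↔ MAdd R N M := by
  constructor
  · rintro ⟨k, g, h, hgh⟩
    refine ⟨k, Summ.trans ⟨g.hom, h.hom, fun x => ?_⟩
      (Summ.of_equiv (ModuleCat.biproductIsoPi (fun _ : Fin k => M)).toLinearEquiv)⟩
    exact LinearMap.congr_fun (congrArg ModuleCat.Hom.hom hgh) x
  · rintro ⟨k, h⟩
    obtain ⟨i, p, hp⟩ := h.trans
      (Summ.of_equiv (ModuleCat.biproductIsoPi (fun _ : Fin k => M)).toLinearEquiv.symm)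
    exact ⟨k, ModuleCat.ofHom i, ModuleCat.ofHom p, ModuleCat.hom_ext (LinearMap.ext hp)⟩

theorem isSTT_iff (M : ModCat R) : IsSupportTauTiltingMod M ↔ STT R M := by
  have key : ∀ (P N Q : ModCat R), IsTauRigidPairMod (M ⊞ N) (P ⊞ Q) ↔ RPair R (M × N) (P × Q) :=
    fun P N Q => (isTauRigidPairMod_iff _ _).trans
      ⟨fun h => h.congr (ModuleCat.biprodIsoProd M N).toLinearEquiv (ModuleCat.biprodIsoProd P Q).toLinearEquiv,
       fun h => h.congr (ModuleCat.biprodIsoProd M N).toLinearEquiv.symm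
        (ModuleCat.biprodIsoProd P Q).toLinearEquiv.symm⟩
  refine exists_congr fun P => ?_
  rw [isTauRigidPairMod_iff]
  refine and_congr Iff.rfl (forall_congr' fun N => forall_congr' fun Q => ?_)
  rw [key, memAddMod_iff, memAddMod_iff]

theorem isBasicMod_iff (M : ModCat R) : IsBasicMod M ↔ Bas R M := by
  constructor
  · intro h N hN
    obtain ⟨C, ⟨e⟩⟩ := hN.compl
    have e2 : ((N × N) × C) ≃ₗ[R] (((N ⊞ N) ⊞ (ModuleCat.of R C) : ModCat R)) :=
      LinearEquiv.trans (LinearEquiv.prodCongr (ModuleCat.biprodIsoProd N N).toLinearEquiv.symm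
        (LinearEquiv.refl R C)) (ModuleCat.biprodIsoProd (N ⊞ N) (ModuleCat.of R C)).toLinearEquiv.symm
    exact ModuleCat.subsingleton_of_isZero
      (h N (ModuleCat.of R C) ⟨LinearEquiv.toModuleIso (e.trans e2)⟩)
  · rintro h N C ⟨e⟩
    have : Subsingleton N := h N (Summ.trans (Summ.trans
      (Summ.of_equiv (ModuleCat.biprodIsoProd N N).toLinearEquiv.symm)
      (Summ.fst (R := R) (A := (N ⊞ N : ModCat R)) (B := C)))
      (Summ.of_equiv ((ModuleCat.biprodIsoProd (N ⊞ N) C).toLinearEquiv.symm.trans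
        e.toLinearEquiv.symm)))
    exact ModuleCat.isZero_of_subsingleton N

end TW


section A7s
variable (K : Type) [Field K]

/-- generators of `A7`. -/
def gg (i : Fin 10) : A7 K := RingQuot.mkAlgHom K (A7Rel K) (FreeAlgebra.ι K i)

/-- the list of relations, packaged. -/
structure A7Facts {A : Type} [Ring A] (g : Fin 10 → A) : Prop where
  e00 : g 0 * g 0 = g 0
  e01 : g 0 * g 1 = 0
  e02 : g 0 * g 2 = 0
  e03 : g 0 * g 3 = 0
  e10 : g 1 * g 0 = 0
  e11 : g 1 * g 1 = g 1
  e12 : g 1 * g 2 = 0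
  e13 : g 1 * g 3 = 0
  e20 : g 2 * g 0 = 0
  e21 : g 2 * g 1 = 0
  e22 : g 2 * g 2 = g 2
  e23 : g 2 * g 3 = 0
  e30 : g 3 * g 0 = 0
  e31 : g 3 * g 1 = 0
  e32 : g 3 * g 2 = 0
  e33 : g 3 * g 3 = g 3
  one : g 0 + g 1 + g 2 + g 3 = 1
  a : g 4 = g 0 * g 4 * g 1
  b : g 5 = g 1 * g 5 * g 0
  d : g 6 = g 1 * g 6 * g 2
  c : g 7 = g 2 * g 7 * g 1
  p : g 8 = g 2 * g 8 * g 3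
  x : g 9 = g 3 * g 9 * g 2
  r1 : g 5 * g 4 = g 6 * g 7
  r2 : g 7 * g 6 = g 8 * g 9
  r3 : g 4 * g 6 * g 8 = 0
  r4 : g 9 * g 7 * g 5 = 0

theorem gg_facts : A7Facts (gg K) := by
  have key : ∀ u v, A7Rel K u v → RingQuot.mkAlgHom K (A7Rel K) u = RingQuot.mkAlgHom K (A7Rel K) v :=
    fun u v h => RingQuot.mkAlgHom_rel K h
  have key2 : ∀ q : FreeAlgebra K (Fin 10) × FreeAlgebra K (Fin 10), A7Rel K q.1 q.2 →
    RingQuot.mkAlgHom K (A7Rel K) q.1 = RingQuot.mkAlgHom K (A7Rel K) q.2 := fun q => key q.1 q.2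
  unfold A7Rel at key2
  simp only [Prod.mk.eta, List.forall_mem_cons, map_mul, map_add, map_zero, map_one] at key2
  obtain ⟨h1, h2, h3, h4, h5, h6, h7, h8, h9, h10, h11, h12, h13, h14, h15, h16, h17, h18, h19,
    h20, h21, h22, h23, h24, h25, h26, h27, -⟩ := key2
  exact ⟨h1, h2, h3, h4, h5, h6, h7, h8, h9, h10, h11, h12, h13, h14, h15, h16, h17, h18, h19,
    h20, h21, h22, h23, h24, h25, h26, h27⟩

variable {A : Type} [Ring A] {g : Fin 10 → A}

/-- the central element. -/
def zz (g : Fin 10 → A) : A := g 4 * g 5 + g 5 * g 4 + g 7 * g 6 + g 9 * g 8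

/-- source of arrows -/
def sr : Fin 10 → Fin 10 := ![0,1,2,3,0,1,1,2,2,3]
/-- target of arrows -/
def tg : Fin 10 → Fin 10 := ![0,1,2,3,1,0,2,1,3,2]

theorem A7Facts.ss (h : A7Facts g) (i : Fin 10) : g i = g (sr i) * g i * g (tg i) := by
  obtain ⟨h1, h2, h3, h4, h5, h6, h7, h8, h9, h10, h11, h12, h13, h14, h15, h16, h17, h18, h19,
    h20, h21, h22, h23, h24, h25, h26, h27⟩ := h
  fin_cases i <;> simp [sr, tg] <;> first | assumption | simp [*]

theorem A7Facts.orth (h : A7Facts g) (i j : Fin 10) (hij : tg i ≠ sr j) : g (tg i) * g (sr j) = 0 := by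
  have hi := (by decide : ∀ i, tg i = 0 ∨ tg i = 1 ∨ tg i = 2 ∨ tg i = 3) i
  have hj := (by decide : ∀ j, sr j = 0 ∨ sr j = 1 ∨ sr j = 2 ∨ sr j = 3) j
  rcases hi with hi | hi | hi | hi <;> rcases hj with hj | hj | hj | hj <;> rw [hi, hj] at hij ⊢ <;>
    first | exact absurd rfl hij | exact h.e01 | exact h.e02 | exact h.e03 | exact h.e10 | exact h.e12 | exact h.e13
          | exact h.e20 | exact h.e21 | exact h.e23 | exact h.e30 | exact h.e31 | exact h.e32

theorem A7Facts.idem (h : A7Facts g) (i : Fin 10) (hi : i < 4) : g i * g i = g i := by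
  have hi : i = 0 ∨ i = 1 ∨ i = 2 ∨ i = 3 := by revert i; decide
  rcases hi with rfl | rfl | rfl | rfl
  exacts [h.e00, h.e11, h.e22, h.e33]

theorem A7Facts.lz (h : A7Facts g) (i j : Fin 10) (hij : tg i ≠ sr j) : g i * g j = 0 := by
  rw [h.ss i, h.ss j]
  calc g (sr i) * g i * g (tg i) * (g (sr j) * g j * g (tg j)) =
      g (sr i) * g i * (g (tg i) * g (sr j)) * g j * g (tg j) := by simp only [mul_assoc]
    _ = 0 := by rw [h.orth i j hij]; simp

theorem A7Facts.sl (h : A7Facts g) (i : Fin 10) : g (sr i) * g i = g i := by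
  conv_lhs => rw [h.ss i]
  rw [← mul_assoc, ← mul_assoc, h.idem _ (by revert i; decide), ← h.ss]

theorem A7Facts.sR (h : A7Facts g) (i : Fin 10) : g i * g (tg i) = g i := by
  conv_lhs => rw [h.ss i]
  rw [mul_assoc, h.idem _ (by revert i; decide), ← h.ss]

theorem A7Facts.lz' (h : A7Facts g) (i j : Fin 10) (hij : tg i ≠ sr j) (x : A) :
    g i * (g j * x) = 0 := by rw [← mul_assoc, h.lz i j hij, zero_mul]

theorem A7Facts.z0 (h : A7Facts g) : zz g * g 0 = g 4 * g 5 := by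
  simp only [zz, add_mul, mul_assoc, h.lz 4 0 (by decide), h.lz 6 0 (by decide),
    h.lz 8 0 (by decide), mul_zero, add_zero]
  rw [show g 5 * g 0 = g 5 from h.sR 5]
theorem A7Facts.z1 (h : A7Facts g) : zz g * g 1 = g 5 * g 4 := by
  simp only [zz, add_mul, mul_assoc, h.lz 5 1 (by decide), h.lz 6 1 (by decide),
    h.lz 8 1 (by decide), mul_zero, add_zero, zero_add]
  rw [show g 4 * g 1 = g 4 from h.sR 4]
theorem A7Facts.z2 (h : A7Facts g) : zz g * g 2 = g 7 * g 6 := by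
  simp only [zz, add_mul, mul_assoc, h.lz 5 2 (by decide), h.lz 4 2 (by decide),
    h.lz 8 2 (by decide), mul_zero, add_zero, zero_add]
  rw [show g 6 * g 2 = g 6 from h.sR 6]
theorem A7Facts.z3 (h : A7Facts g) : zz g * g 3 = g 9 * g 8 := by
  simp only [zz, add_mul, mul_assoc, h.lz 5 3 (by decide), h.lz 4 3 (by decide),
    h.lz 6 3 (by decide), mul_zero, add_zero, zero_add]
  rw [show g 8 * g 3 = g 8 from h.sR 8]

theorem A7Facts.r1' (h : A7Facts g) (x : A) : g 6 * (g 7 * x) = g 5 * (g 4 * x) := by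
  rw [← mul_assoc, ← h.r1, mul_assoc]
theorem A7Facts.r2' (h : A7Facts g) (x : A) : g 8 * (g 9 * x) = g 7 * (g 6 * x) := by
  rw [← mul_assoc, ← h.r2, mul_assoc]
theorem A7Facts.r3' (h : A7Facts g) : g 4 * (g 6 * g 8) = 0 := by rw [← mul_assoc, h.r3]
theorem A7Facts.r3'' (h : A7Facts g) (x : A) : g 4 * (g 6 * (g 8 * x)) = 0 := by
  rw [← mul_assoc, ← mul_assoc, h.r3, zero_mul]
theorem A7Facts.r4' (h : A7Facts g) : g 9 * (g 7 * g 5) = 0 := by rw [← mul_assoc, h.r4]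
theorem A7Facts.r4'' (h : A7Facts g) (x : A) : g 9 * (g 7 * (g 5 * x)) = 0 := by
  rw [← mul_assoc, ← mul_assoc, h.r4, zero_mul]

theorem A7Facts.z_comm (h : A7Facts g) (i : Fin 10) : zz g * g i = g i * zz g := by
  have hl := h.lz
  have hl' := h.lz'
  have s1 := h.sl
  have s2 := h.sR
  fin_cases i
  · change zz g * g 0 = g 0 * zz g
    rw [h.z0]
    simp only [zz, mul_add, h.lz' 0 5 (by decide), h.lz' 0 7 (by decide),
      h.lz' 0 9 (by decide), add_zero]
    rw [← mul_assoc, show g 0 * g 4 = g 4 from h.sl 4]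
  · change zz g * g 1 = g 1 * zz g
    rw [h.z1]
    simp only [zz, mul_add, h.lz' 1 4 (by decide), h.lz' 1 7 (by decide),
      h.lz' 1 9 (by decide), add_zero, zero_add]
    rw [← mul_assoc, show g 1 * g 5 = g 5 from h.sl 5]
  · change zz g * g 2 = g 2 * zz g
    rw [h.z2]
    simp only [zz, mul_add, h.lz' 2 4 (by decide), h.lz' 2 5 (by decide),
      h.lz' 2 9 (by decide), add_zero, zero_add]
    rw [← mul_assoc, show g 2 * g 7 = g 7 from h.sl 7]
  · change zz g * g 3 = g 3 * zz g
    rw [h.z3]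
    simp only [zz, mul_add, h.lz' 3 4 (by decide), h.lz' 3 5 (by decide),
      h.lz' 3 7 (by decide), add_zero, zero_add]
    rw [← mul_assoc, show g 3 * g 9 = g 9 from h.sl 9]
  · change zz g * g 4 = g 4 * zz g
    simp only [zz, mul_add, add_mul, mul_assoc, h.lz 4 4 (by decide), h.lz 6 4 (by decide),
      h.lz 8 4 (by decide), h.lz' 4 4 (by decide), h.lz' 4 7 (by decide), h.lz' 4 9 (by decide),
      add_zero, zero_add, mul_zero]
  · change zz g * g 5 = g 5 * zz g
    simp only [zz, mul_add, add_mul, mul_assoc, h.lz 5 5 (by decide), h.lz 6 5 (by decide),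
      h.lz 8 5 (by decide), h.lz' 5 5 (by decide), h.lz' 5 7 (by decide), h.lz' 5 9 (by decide),
      add_zero, zero_add, mul_zero]
  · change zz g * g 6 = g 6 * zz g
    simp only [zz, mul_add, add_mul, mul_assoc, h.lz 5 6 (by decide), h.lz 6 6 (by decide),
      h.lz 8 6 (by decide), h.lz' 6 5 (by decide), h.lz' 6 4 (by decide), h.lz' 6 9 (by decide),
      add_zero, zero_add, mul_zero, h.r1']
  · change zz g * g 7 = g 7 * zz g
    simp only [zz, mul_add, add_mul, mul_assoc, h.lz 5 7 (by decide), h.lz 4 7 (by decide),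
      h.lz 8 7 (by decide), h.lz' 7 4 (by decide), h.lz' 7 7 (by decide), h.lz' 7 9 (by decide),
      add_zero, zero_add, mul_zero, h.r1, h.lz 7 7 (by decide)]
  · change zz g * g 8 = g 8 * zz g
    simp only [zz, mul_add, add_mul, mul_assoc, h.lz 5 8 (by decide), h.lz 4 8 (by decide),
      h.lz 8 8 (by decide), h.lz' 8 4 (by decide), h.lz' 8 7 (by decide), h.lz' 8 5 (by decide),
      add_zero, zero_add, mul_zero, h.r2']
  · change zz g * g 9 = g 9 * zz g
    simp only [zz, mul_add, add_mul, mul_assoc, h.lz 5 9 (by decide), h.lz 4 9 (by decide),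
      h.lz 6 9 (by decide), h.lz' 9 4 (by decide), h.lz' 9 9 (by decide), h.lz' 9 5 (by decide),
      add_zero, zero_add, mul_zero, h.r2, h.lz 9 9 (by decide)]

theorem A7Facts.z_pow (h : A7Facts g) : zz g ^ 3 = 0 := by
  have hc := h.z_comm
  have zc : ∀ i x, zz g * (g i * x) = g i * (zz g * x) := fun i x => by
    rw [← mul_assoc, hc, mul_assoc]
  have q4 : zz g * g 4 = g 4 * (g 6 * g 7) := by
    rw [hc, show g 4 * zz g = g 4 * (g 1 * zz g) by
      rw [← mul_assoc, show g 4 * g 1 = g 4 from h.sR 4], ← hc, h.z1, h.r1]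
  have q5 : zz g * g 5 = g 6 * (g 7 * g 5) := by
    rw [show zz g * g 5 = (zz g * g 1) * g 5 by
      rw [mul_assoc, show g 1 * g 5 = g 5 from h.sl 5], h.z1, h.r1, mul_assoc]
  have q7 : ∀ x, zz g * (g 7 * x) = g 8 * (g 9 * (g 7 * x)) := fun x => by
    rw [← mul_assoc, show zz g * g 7 = (zz g * g 2) * g 7 by
      rw [mul_assoc, show g 2 * g 7 = g 7 from h.sl 7], h.z2, h.r2]
    simp only [mul_assoc]
  have q7' : zz g * g 7 = g 8 * (g 9 * g 7) := by
    have := q7 (g 1)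
    rwa [show g 7 * g 1 = g 7 from h.sR 7] at this
  have q8 : ∀ x, zz g * (g 8 * x) = g 7 * (g 6 * (g 8 * x)) := fun x => by
    rw [← mul_assoc, show zz g * g 8 = (zz g * g 2) * g 8 by
      rw [mul_assoc, show g 2 * g 8 = g 8 from h.sl 8], h.z2]
    simp only [mul_assoc]
  have q8' : zz g * g 8 = g 7 * (g 6 * g 8) := by
    have := q8 (g 3)
    rwa [show g 8 * g 3 = g 8 from h.sR 8] at this
  have q6 : ∀ x, zz g * (g 6 * x) = g 5 * (g 4 * (g 6 * x)) := fun x => by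
    rw [← mul_assoc, show zz g * g 6 = (zz g * g 1) * g 6 by
      rw [mul_assoc, show g 1 * g 6 = g 6 from h.sl 6], h.z1]
    simp only [mul_assoc]
  have key : ∀ i : Fin 10, i < 4 → zz g * (zz g * (zz g * g i)) = 0 := by
    intro i hi
    have hi : i = 0 ∨ i = 1 ∨ i = 2 ∨ i = 3 := by revert i; decide
    rcases hi with rfl | rfl | rfl | rfl
    · rw [h.z0, zc 4 (g 5), q5, zc 4, zc 6, q7, h.r3'']
    · rw [h.z1, zc 5, q4, zc 5, zc 4, zc 6, q7', h.r3'', mul_zero]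
    · rw [h.z2, h.r2, q8, zc 7, q6, h.r3'', mul_zero, mul_zero]
    · rw [h.z3, zc 9, q8', zc 9, zc 7, q6, h.r3', mul_zero, mul_zero, mul_zero]
  calc zz g ^ 3 = zz g * (zz g * (zz g * (g 0 + g 1 + g 2 + g 3))) := by
        rw [h.one, mul_one]; noncomm_ring
    _ = 0 := by
        simp only [mul_add, key 0 (by decide), key 1 (by decide), key 2 (by decide),
          key 3 (by decide), add_zero]

/-- spanning paths -/
def WW (g : Fin 10 → A) : Fin 14 → A :=
  ![g 0, g 1, g 2, g 3, g 4, g 5, g 6, g 7, g 8, g 9, g 4 * g 6, g 6 * g 8, g 9 * g 7, g 7 * g 5]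

theorem A7Facts.tab (h : A7Facts g) (i : Fin 10) (j : Fin 14) : g i * WW g j = 0 ∨
    (∃ k, g i * WW g j = WW g k) ∨ ∃ k, g i * WW g j = zz g * WW g k := by
  by_cases hj : j.1 < 10
  · obtain ⟨j, rfl⟩ : ∃ j' : Fin 10, j = j'.castLE (by decide) := ⟨⟨j, hj⟩, rfl⟩
    have hW : ∀ j : Fin 10, WW g (j.castLE (by decide)) = g j := by
      intro j; fin_cases j <;> rfl
    rw [hW]
    by_cases hij : tg i = sr j
    swap
    · exact Or.inl (h.lz i j hij)
    by_cases hi4 : i < 4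
    · have : i = sr j := by rw [← hij]; exact (by decide : ∀ i : Fin 10, i < 4 → i = tg i) i hi4
      exact Or.inr (Or.inl ⟨j.castLE (by decide), by rw [hW, this, h.sl]⟩)
    by_cases hj4 : j < 4
    · have : j = tg i := by rw [hij]; exact (by decide : ∀ i : Fin 10, i < 4 → i = sr i) j hj4
      exact Or.inr (Or.inl ⟨i.castLE (by decide), by rw [hW, this, h.sR]⟩)
    have hc : (i = 4 ∧ j = 5) ∨ (i = 4 ∧ j = 6) ∨ (i = 5 ∧ j = 4) ∨ (i = 6 ∧ j = 7) ∨
      (i = 6 ∧ j = 8) ∨ (i = 7 ∧ j = 5) ∨ (i = 7 ∧ j = 6) ∨ (i = 8 ∧ j = 9) ∨ (i = 9 ∧ j = 7) ∨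
      (i = 9 ∧ j = 8) := by revert i j; decide
    rcases hc with ⟨rfl, rfl⟩ | ⟨rfl, rfl⟩ | ⟨rfl, rfl⟩ | ⟨rfl, rfl⟩ | ⟨rfl, rfl⟩ | ⟨rfl, rfl⟩ |
      ⟨rfl, rfl⟩ | ⟨rfl, rfl⟩ | ⟨rfl, rfl⟩ | ⟨rfl, rfl⟩
    · exact Or.inr (Or.inr ⟨0, h.z0.symm⟩)
    · exact Or.inr (Or.inl ⟨10, rfl⟩)
    · exact Or.inr (Or.inr ⟨1, h.z1.symm⟩)
    · exact Or.inr (Or.inr ⟨1, h.r1.symm.trans h.z1.symm⟩)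
    · exact Or.inr (Or.inl ⟨11, rfl⟩)
    · exact Or.inr (Or.inl ⟨13, rfl⟩)
    · exact Or.inr (Or.inr ⟨2, h.z2.symm⟩)
    · exact Or.inr (Or.inr ⟨2, h.r2.symm.trans h.z2.symm⟩)
    · exact Or.inr (Or.inl ⟨12, rfl⟩)
    · exact Or.inr (Or.inr ⟨3, h.z3.symm⟩)
  · have hj : j = 10 ∨ j = 11 ∨ j = 12 ∨ j = 13 := by revert j; decide
    have main : ∀ (a b : Fin 10) (j : Fin 14), WW g j = g a * g b →
        (4 ≤ i → tg i = sr a → g i * (g a * g b) = 0 ∨ ∃ k, g i * (g a * g b) = zz g * WW g k) →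
        g i * WW g j = 0 ∨
        (∃ k, g i * WW g j = WW g k) ∨ ∃ k, g i * WW g j = zz g * WW g k := by
      intro a b j hj hh
      by_cases hia : tg i = sr a
      swap
      · rw [hj, h.lz' i a hia]; simp
      by_cases hi4 : i < 4
      · have : i = sr a := by rw [← hia]; exact (by decide : ∀ i : Fin 10, i < 4 → i = tg i) i hi4
        exact Or.inr (Or.inl ⟨j, by rw [hj, ← mul_assoc, this, h.sl]⟩)
      · rw [hj]
        rcases hh (not_lt.1 hi4) hia with h1 | h1
        · exact Or.inl h1
        · exact Or.inr (Or.inr h1)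
    rcases hj with rfl | rfl | rfl | rfl
    · refine main 4 6 10 rfl (fun h4 hi => ?_)
      have : i = 5 := (by decide : ∀ i : Fin 10, 4 ≤ i → tg i = sr 4 → (i = 5)) i h4 hi
      subst this
      refine Or.inr ⟨6, ?_⟩
      change g 5 * (g 4 * g 6) = zz g * g 6
      rw [← mul_assoc, ← h.z1, mul_assoc, show g 1 * g 6 = g 6 from h.sl 6]
    · refine main 6 8 11 rfl (fun h4 hi => ?_)
      have : i = 4 ∨ i = 7 := (by decide : ∀ i : Fin 10, 4 ≤ i → tg i = sr 6 → (i = 4 ∨ i = 7)) i h4 hi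
      rcases this with rfl | rfl
      · exact Or.inl h.r3'
      refine Or.inr ⟨8, ?_⟩
      change g 7 * (g 6 * g 8) = zz g * g 8
      rw [← mul_assoc, ← h.z2, mul_assoc, show g 2 * g 8 = g 8 from h.sl 8]
    · refine main 9 7 12 rfl (fun h4 hi => ?_)
      have : i = 8 := (by decide : ∀ i : Fin 10, 4 ≤ i → tg i = sr 9 → (i = 8)) i h4 hi
      subst this
      refine Or.inr ⟨7, ?_⟩
      change g 8 * (g 9 * g 7) = zz g * g 7
      rw [← mul_assoc, ← h.r2, ← h.z2, mul_assoc, show g 2 * g 7 = g 7 from h.sl 7]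
    · refine main 7 5 13 rfl (fun h4 hi => ?_)
      have : i = 6 ∨ i = 9 := (by decide : ∀ i : Fin 10, 4 ≤ i → tg i = sr 7 → (i = 6 ∨ i = 9)) i h4 hi
      rcases this with rfl | rfl
      · refine Or.inr ⟨5, ?_⟩
        change g 6 * (g 7 * g 5) = zz g * g 5
        rw [← mul_assoc, ← h.r1, ← h.z1, mul_assoc, show g 1 * g 5 = g 5 from h.sl 5]
      · exact Or.inl h.r4'

end A7s

section A7t
variable (K : Type) [Field K]

theorem a7_induction {p : A7 K → Prop} (h0 : ∀ c : K, p (algebraMap K _ c)) (hg : ∀ i, p (gg K i))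
    (hm : ∀ a b, p a → p b → p (a * b)) (ha : ∀ a b, p a → p b → p (a + b)) (a : A7 K) : p a := by
  obtain ⟨x, rfl⟩ := RingQuot.mkAlgHom_surjective K (A7Rel K) a
  induction x using FreeAlgebra.induction with
  | grade0 c => rw [AlgHom.commutes]; exact h0 c
  | grade1 i => exact hg i
  | mul a b h1 h2 => rw [map_mul]; exact hm _ _ h1 h2
  | add a b h1 h2 => rw [map_add]; exact ha _ _ h1 h2

instance a7_finite : Module.Finite K (A7 K) := by
  have h := gg_facts K
  let F : Fin 3 × Fin 14 → A7 K := fun q => zz (gg K) ^ q.1.1 * WW (gg K) q.2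
  let U : Submodule K (A7 K) := Submodule.span K (Set.range F)
  have hF : ∀ (k : ℕ) j, zz (gg K) ^ k * WW (gg K) j ∈ U := by
    intro k j
    by_cases hk : k < 3
    · exact Submodule.subset_span ⟨(⟨k, hk⟩, j), rfl⟩
    · rw [← Nat.sub_add_cancel (not_lt.1 hk), pow_add, h.z_pow, mul_zero, zero_mul]
      exact U.zero_mem
  have hcomm : ∀ (k : ℕ) i, gg K i * zz (gg K) ^ k = zz (gg K) ^ k * gg K i := fun k i =>
    (Commute.pow_right (show Commute (gg K i) (zz (gg K)) from (h.z_comm i).symm) k)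
  have hgU : ∀ i, ∀ u ∈ U, gg K i * u ∈ U := by
    intro i u hu
    induction hu using Submodule.span_induction with
    | mem x hx =>
      obtain ⟨⟨k, j⟩, rfl⟩ := hx
      change gg K i * (zz (gg K) ^ k.1 * WW (gg K) j) ∈ U
      rw [← mul_assoc, hcomm, mul_assoc]
      rcases h.tab i j with h1 | ⟨l, h1⟩ | ⟨l, h1⟩
      · rw [h1, mul_zero]; exact U.zero_mem
      · rw [h1]; exact hF _ _
      · rw [h1, ← mul_assoc, ← pow_succ]; exact hF _ _
    | zero => rw [mul_zero]; exact U.zero_mem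
    | add x y _ _ hx hy => rw [mul_add]; exact U.add_mem hx hy
    | smul c x _ hx => rw [mul_smul_comm]; exact U.smul_mem _ hx
  have hall : ∀ a : A7 K, ∀ u ∈ U, a * u ∈ U := by
    intro a
    refine a7_induction K (p := fun a => ∀ u ∈ U, a * u ∈ U) ?_ hgU ?_ ?_ a
    · intro c u hu
      rw [← Algebra.smul_def]; exact U.smul_mem _ hu
    · intro a b ha hb u hu
      rw [mul_assoc]; exact ha _ (hb _ hu)
    · intro a b ha hb u hu
      rw [add_mul]; exact U.add_mem (ha _ hu) (hb _ hu)
  have h1 : (1 : A7 K) ∈ U := by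
    rw [← h.one]
    refine U.add_mem (U.add_mem (U.add_mem ?_ ?_) ?_) ?_
    · simpa [WW] using hF 0 0
    · simpa [WW] using hF 0 1
    · simpa [WW] using hF 0 2
    · simpa [WW] using hF 0 3
  have htop : U = ⊤ := eq_top_iff.2 fun a _ => by simpa using hall a 1 h1
  exact ⟨htop ▸ Submodule.fg_span (Set.finite_range F)⟩

instance a7op_finite : Module.Finite K (A7 K)ᵐᵒᵖ :=
  Module.Finite.equiv (MulOpposite.opLinearEquiv K)

instance a7_artinian : IsArtinianRing (A7 K)ᵐᵒᵖ :=
  IsArtinianRing.of_finite K _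

theorem zz_central (r : (A7 K)ᵐᵒᵖ) :
    MulOpposite.op (zz (gg K)) * r = r * MulOpposite.op (zz (gg K)) := by
  have h := gg_facts K
  have : ∀ a : A7 K, zz (gg K) * a = a * zz (gg K) := by
    intro a
    refine a7_induction K (p := fun a => zz (gg K) * a = a * zz (gg K)) ?_ h.z_comm ?_ ?_ a
    · intro c; exact (Algebra.commutes c _).symm
    · intro a b ha hb; rw [← mul_assoc, ha, mul_assoc, hb, mul_assoc]
    · intro a b ha hb; rw [mul_add, add_mul, ha, hb]
  refine MulOpposite.unop_injective ?_
  simp [this]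

theorem zz_nil : MulOpposite.op (zz (gg K)) ^ 3 = 0 := by
  rw [← MulOpposite.op_pow, (gg_facts K).z_pow, MulOpposite.op_zero]

end A7t


set_option linter.unusedSectionVars false

section strs

/-- strings: top vertex and list of orientations going down. -/
def strs : Fin 24 → ℕ × List Bool :=
  ![(0, []), (1, []), (1, [true]), (1, [false]),
    (2, []), (2, [true]), (2, [false]), (2, [true, true]), (2, [true, false]), (2, [false, true]),
    (2, [false, false]),
    (3, []), (3, [true]), (3, [false]), (3, [true, true]), (3, [true, false]), (3, [false, true]),
    (3, [false, false]),
    (3, [true, true, false]), (3, [true, false, true]), (3, [true, false, false]),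
    (3, [false, true, true]), (3, [false, true, false]), (3, [false, false, true])]

/-- support of a string -/
def sup (s : ℕ × List Bool) (i : ℕ) : Bool := decide (i ≤ s.1 ∧ s.1 ≤ i + s.2.length)
/-- forward edge -/
def fw (s : ℕ × List Bool) (i : ℕ) : Bool := decide (i < s.1 ∧ s.2[s.1 - 1 - i]? = some true)
/-- backward edge -/
def bw (s : ℕ × List Bool) (i : ℕ) : Bool := decide (i < s.1 ∧ s.2[s.1 - 1 - i]? = some false)

/-- coefficient of the generator `i` on the string module. -/
def cf (s : ℕ × List Bool) : Fin 10 → Bool :=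
  ![sup s 0, sup s 1, sup s 2, sup s 3, fw s 0, bw s 0, fw s 1, bw s 1, fw s 2, bw s 2]

/-- source -/
def s4 : Fin 10 → Fin 4 := ![0,1,2,3,0,1,1,2,2,3]
/-- target -/
def t4 : Fin 10 → Fin 4 := ![0,1,2,3,1,0,2,1,3,2]
/-- vertices as generators -/
def v4 (i : Fin 4) : Fin 10 := i.castLE (by decide)

theorem cf_good : ∀ a : Fin 24, (∀ i, cf (strs a) i = true → cf (strs a) (v4 (s4 i)) = true ∧
    cf (strs a) (v4 (t4 i)) = true) ∧
    (cf (strs a) 4 && cf (strs a) 5) = false ∧ (cf (strs a) 6 && cf (strs a) 7) = false ∧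
    (cf (strs a) 8 && cf (strs a) 9) = false ∧
    (cf (strs a) 4 && cf (strs a) 6 && cf (strs a) 8) = false ∧
    (cf (strs a) 9 && cf (strs a) 7 && cf (strs a) 5) = false := by decide +kernel

end strs

section SMs
variable (K : Type) [Field K]

/-- underlying space of the string module. -/
def VS (a : Fin 24) : Submodule K (Fin 4 → K) where
  carrier := {y | ∀ i, cf (strs a) (v4 i) = false → y i = 0}
  add_mem' := fun {x y} hx hy i hi => by simp [hx i hi, hy i hi]
  zero_mem' := fun i _ => rfl
  smul_mem' := fun c x hx i hi => by simp [hx i hi]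

/-- string module -/
def SM (a : Fin 24) : Type := VS K a

instance (a : Fin 24) : AddCommGroup (SM K a) := inferInstanceAs (AddCommGroup (VS K a))
instance (a : Fin 24) : Module K (SM K a) := inferInstanceAs (Module K (VS K a))
instance (a : Fin 24) : Module.Finite K (SM K a) := inferInstanceAs (Module.Finite K (VS K a))

variable {K}
/-- coordinates -/
def SM.co {a : Fin 24} (i : Fin 4) : SM K a →ₗ[K] K :=
  (LinearMap.proj i).comp (VS K a).subtype

theorem SM.ext {a : Fin 24} {x y : SM K a} (h : ∀ i, SM.co i x = SM.co i y) : x = y :=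
  Subtype.ext (funext h)

theorem SM.co_zero {a : Fin 24} (i : Fin 4) (h : cf (strs a) (v4 i) = false) (x : SM K a) :
    SM.co i x = 0 := x.2 i h

/-- build an element by a linear family of coordinates. -/
def SM.mk {Y : Type} [AddCommGroup Y] [Module K Y] {a : Fin 24} (l : Fin 4 → Y →ₗ[K] K)
    (h : ∀ i, cf (strs a) (v4 i) = false → l i = 0) : Y →ₗ[K] SM K a :=
  (LinearMap.pi l).codRestrict (VS K a) (fun y i hi => by simp [h i hi])

@[simp] theorem SM.co_mk {Y : Type} [AddCommGroup Y] [Module K Y] {a : Fin 24} (l : Fin 4 → Y →ₗ[K] K)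
    (h : ∀ i, cf (strs a) (v4 i) = false → l i = 0) (y : Y) (i : Fin 4) :
    SM.co i (SM.mk l h y) = l i y := rfl

/-- action of the generators -/
def rho (a : Fin 24) (i : Fin 10) : Module.End K (SM K a) :=
  SM.mk (fun k => if k = t4 i ∧ cf (strs a) i = true then SM.co (s4 i) else 0) (by
    intro k hk
    rw [if_neg]
    rintro ⟨rfl, h⟩
    rw [((cf_good a).1 i h).2] at hk
    exact Bool.noConfusion hk)

theorem co_rho (a : Fin 24) (i : Fin 10) (y : SM K a) (k : Fin 4) : SM.co k (rho a i y) =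
    if k = t4 i ∧ cf (strs a) i = true then SM.co (s4 i) y else 0 := by
  unfold rho
  rw [SM.co_mk]
  split_ifs <;> rfl

theorem rho_mul (a : Fin 24) (i j : Fin 10) (y : SM K a) (k : Fin 4) :
    SM.co k (rho a j (rho a i y)) =
    if k = t4 j ∧ cf (strs a) j = true ∧ s4 j = t4 i ∧ cf (strs a) i = true then SM.co (s4 i) y
    else 0 := by
  rw [co_rho, co_rho, ← ite_and]
  simp only [and_assoc]

theorem rho_facts (a : Fin 24) : A7Facts (fun i => MulOpposite.op (rho (K := K) a i)) := by
  obtain ⟨h0, h1, h2, h3, h5, h6⟩ := cf_good a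
  have h0' : ∀ i, cf (strs a) (v4 (s4 i)) = false → cf (strs a) i = false := by
    intro i hi
    by_contra h
    rw [(h0 i (by simpa using h)).1] at hi
    exact Bool.noConfusion hi
  have h0'' : ∀ i, cf (strs a) (v4 (t4 i)) = false → cf (strs a) i = false := by
    intro i hi
    by_contra h
    rw [(h0 i (by simpa using h)).2] at hi
    exact Bool.noConfusion hi
  have E : ∀ i j : Fin 10, s4 j ≠ t4 i → MulOpposite.op (rho (K := K) a i) *
      MulOpposite.op (rho a j) = 0 := by
    intro i j hij
    rw [← MulOpposite.op_mul, ← MulOpposite.op_zero]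
    congr 1
    refine LinearMap.ext fun y => SM.ext fun k => ?_
    rw [Module.End.mul_apply, rho_mul]
    simp [hij]
  have L : ∀ i : Fin 10, MulOpposite.op (rho (K := K) a (v4 (s4 i))) *
      MulOpposite.op (rho a i) = MulOpposite.op (rho a i) := by
    intro i
    rw [← MulOpposite.op_mul]
    congr 1
    refine LinearMap.ext fun y => SM.ext fun k => ?_
    rw [Module.End.mul_apply, rho_mul, co_rho]
    have e1 : t4 (v4 (s4 i)) = s4 i := by revert i; decide
    have e2 : s4 (v4 (s4 i)) = s4 i := by revert i; decide
    rw [e1, e2]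
    congr 1
    refine propext ⟨fun h => ⟨h.1, h.2.1⟩, fun h => ⟨h.1, h.2, rfl, (h0 i h.2).1⟩⟩
  have Rr : ∀ i : Fin 10, MulOpposite.op (rho (K := K) a i) *
      MulOpposite.op (rho a (v4 (t4 i))) = MulOpposite.op (rho a i) := by
    intro i
    rw [← MulOpposite.op_mul]
    congr 1
    refine LinearMap.ext fun y => SM.ext fun k => ?_
    rw [Module.End.mul_apply, rho_mul, co_rho]
    have e1 : t4 (v4 (t4 i)) = t4 i := by revert i; decide
    have e2 : s4 (v4 (t4 i)) = t4 i := by revert i; decide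
    rw [e1, e2]
    congr 1
    refine propext ⟨fun h => ⟨h.1, h.2.2.2⟩, fun h => ⟨h.1, (h0 i h.2).2, rfl, h.2⟩⟩
  have Z : ∀ i j : Fin 10, (cf (strs a) i && cf (strs a) j) = false →
      MulOpposite.op (rho (K := K) a i) * MulOpposite.op (rho a j) = 0 := by
    intro i j hij
    rw [← MulOpposite.op_mul, ← MulOpposite.op_zero]
    congr 1
    refine LinearMap.ext fun y => SM.ext fun k => ?_
    rw [Module.End.mul_apply, rho_mul, if_neg]
    · simp
    · rintro ⟨-, h7, -, h8⟩
      rw [h7, h8] at hij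
      exact Bool.noConfusion hij
  have Z3 : ∀ i j l : Fin 10, (cf (strs a) i && cf (strs a) j && cf (strs a) l) = false →
      MulOpposite.op (rho (K := K) a i) * MulOpposite.op (rho a j) * MulOpposite.op (rho a l) = 0 := by
    intro i j l hij
    rw [← MulOpposite.op_mul, ← MulOpposite.op_mul, ← MulOpposite.op_zero]
    congr 1
    refine LinearMap.ext fun y => SM.ext fun k => ?_
    rw [Module.End.mul_apply, Module.End.mul_apply, co_rho, rho_mul, ← ite_and, if_neg]
    · simp
    · rintro ⟨⟨-, h9⟩, -, h7, -, h8⟩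
      rw [h7, h8, h9] at hij
      exact Bool.noConfusion hij
  have A : ∀ i : Fin 10, MulOpposite.op (rho (K := K) a i) =
      MulOpposite.op (rho (K := K) a (v4 (s4 i))) * MulOpposite.op (rho a i) *
      MulOpposite.op (rho a (v4 (t4 i))) := fun i => by rw [L, Rr]
  refine ⟨L 0, E _ _ (by decide), E _ _ (by decide), E _ _ (by decide),
    E _ _ (by decide), L 1, E _ _ (by decide), E _ _ (by decide),
    E _ _ (by decide), E _ _ (by decide), L 2, E _ _ (by decide),
    E _ _ (by decide), E _ _ (by decide), E _ _ (by decide), L 3, ?_, A 4, A 5, A 6, A 7, A 8, A 9,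
    ?_, ?_, Z3 4 6 8 h5, Z3 9 7 5 h6⟩
  · simp only [← MulOpposite.op_add, ← MulOpposite.op_one]
    congr 1
    refine LinearMap.ext fun y => SM.ext fun k => ?_
    simp only [LinearMap.add_apply, map_add, co_rho, Module.End.one_apply]
    by_cases hk : cf (strs a) (v4 k) = true
    · fin_cases k <;> simp [t4, s4] <;> intro h8 <;> exact absurd (h8.symm.trans hk) Bool.false_ne_true
    · have := SM.co_zero k (by simpa using hk) y
      rw [this]
      fin_cases k <;> simp [t4, s4] <;> intro h8 <;> exact this
  · exact (Z 5 4 (by rw [Bool.and_comm]; exact h1)).trans (Z 6 7 h2).symm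
  · exact (Z 7 6 (by rw [Bool.and_comm]; exact h2)).trans (Z 8 9 h3).symm

/-- a model of `A7` gives an algebra map -/
def repHom {A : Type} [Ring A] [Algebra K A] (g : Fin 10 → A) (h : A7Facts g) : A7 K →ₐ[K] A :=
  RingQuot.liftAlgHom K ⟨FreeAlgebra.lift K g, by
    intro u v huv
    have key : ∀ q ∈ ([(u, v)] : List (FreeAlgebra K (Fin 10) × FreeAlgebra K (Fin 10))),
      FreeAlgebra.lift K g q.1 = FreeAlgebra.lift K g q.2 → FreeAlgebra.lift K g u =
        FreeAlgebra.lift K g v := by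
      intro q hq; simp at hq; subst hq; exact id
    refine key (u, v) (by simp) ?_
    unfold A7Rel at huv
    revert huv
    generalize (u, v) = q
    revert q
    simp only [List.forall_mem_cons, map_mul, map_add, map_zero, map_one, FreeAlgebra.lift_ι_apply]
    obtain ⟨h1, h2, h3, h4, h5, h6, h7, h8, h9, h10, h11, h12, h13, h14, h15, h16, h17, h18, h19,
      h20, h21, h22, h23, h24, h25, h26, h27⟩ := h
    exact ⟨h1, h2, h3, h4, h5, h6, h7, h8, h9, h10, h11, h12, h13, h14, h15, h16, h17, h18, h19,
      h20, h21, h22, h23, h24, h25, h26, h27, by simp⟩⟩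

theorem repHom_gg {A : Type} [Ring A] [Algebra K A] (g : Fin 10 → A) (h : A7Facts g) (i : Fin 10) :
    repHom g h (gg K i) = g i := by
  unfold repHom gg
  exact (RingQuot.liftAlgHom_mkAlgHom_apply K _ _ _).trans (FreeAlgebra.lift_ι_apply _ _)

/-- the action map -/
def actHom (a : Fin 24) : (A7 K)ᵐᵒᵖ →+* Module.End K (SM K a) :=
  ((RingEquiv.opOp (Module.End K (SM K a))).symm : _ →+* _).comp
    (RingHom.op (repHom (fun i => MulOpposite.op (rho (K := K) a i)) (rho_facts a)).toRingHom)

instance (a : Fin 24) : Module (A7 K)ᵐᵒᵖ (SM K a) := Module.compHom (SM K a) (actHom a)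

theorem sm_smul (a : Fin 24) (i : Fin 10) (y : SM K a) :
    MulOpposite.op (gg K i) • y = rho a i y := by
  change (actHom a (MulOpposite.op (gg K i))) y = _
  congr 1
  change MulOpposite.unop (repHom (fun i => MulOpposite.op (rho (K := K) a i)) (rho_facts a) (gg K i)) = _
  rw [repHom_gg]
  rfl

instance (a : Fin 24) : IsScalarTower K (A7 K)ᵐᵒᵖ (SM K a) := by
  refine IsScalarTower.of_algebraMap_smul fun c y => ?_
  change (actHom a (algebraMap K _ c)) y = _
  have : actHom a (algebraMap K (A7 K)ᵐᵒᵖ c) = algebraMap K (Module.End K (SM K a)) c := by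
    change MulOpposite.unop (repHom (fun i => MulOpposite.op (rho (K := K) a i)) (rho_facts a)
      (algebraMap K (A7 K) c)) = _
    rw [AlgHom.commutes]
    rfl
  rw [this]
  rfl

theorem sm_z (a : Fin 24) (y : SM K a) : MulOpposite.op (zz (gg K)) • y = 0 := by
  obtain ⟨h0, h1, h2, h3, h5, h6⟩ := cf_good a
  have e : ∀ i j : Fin 10, (cf (strs a) i && cf (strs a) j) = false →
    MulOpposite.op (gg K i * gg K j) • y = 0 := by
    intro i j hij
    rw [MulOpposite.op_mul, mul_smul, sm_smul, sm_smul]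
    refine SM.ext fun k => ?_
    rw [rho_mul, if_neg, map_zero]
    rintro ⟨-, h7, -, h8⟩
    rw [h7, h8] at hij
    exact Bool.noConfusion hij
  unfold zz
  simp only [MulOpposite.op_add, add_smul]
  rw [e 4 5 h1, e 5 4 (by rw [Bool.and_comm]; exact h1), e 7 6 (by rw [Bool.and_comm]; exact h2),
    e 9 8 (by rw [Bool.and_comm]; exact h3)]
  simp

instance (a : Fin 24) : Module.Finite (A7 K)ᵐᵒᵖ (SM K a) :=
  Module.Finite.of_restrictScalars_finite K _ _

/-- linear maps commuting with the generators are module maps. -/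
def mkHom {Y Y' : Type} [AddCommGroup Y] [AddCommGroup Y'] [Module K Y] [Module K Y']
    [Module (A7 K)ᵐᵒᵖ Y] [Module (A7 K)ᵐᵒᵖ Y'] [IsScalarTower K (A7 K)ᵐᵒᵖ Y]
    [IsScalarTower K (A7 K)ᵐᵒᵖ Y'] (f : Y →ₗ[K] Y')
    (hf : ∀ i y, f (MulOpposite.op (gg K i) • y) = MulOpposite.op (gg K i) • f y) :
    Y →ₗ[(A7 K)ᵐᵒᵖ] Y' where
  toFun := f
  map_add' := f.map_add
  map_smul' := by
    intro r y
    obtain ⟨r, rfl⟩ := MulOpposite.op_surjective r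
    revert y
    refine a7_induction K (p := fun r => ∀ y, f (MulOpposite.op r • y) =
      MulOpposite.op r • f y) ?_ hf ?_ ?_ r
    · intro c y
      have : MulOpposite.op (algebraMap K (A7 K) c) = algebraMap K (A7 K)ᵐᵒᵖ c := rfl
      rw [this, algebraMap_smul, algebraMap_smul, f.map_smul]
    · intro a b ha hb y
      rw [MulOpposite.op_mul, mul_smul, mul_smul, hb, ha]
    · intro a b ha hb y
      rw [MulOpposite.op_add, add_smul, add_smul, f.map_add, ha, hb]

/-- basis vectors -/
def bv (a : Fin 24) (i : Fin 4) (h : cf (strs a) (v4 i) = true) : SM K a :=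
  ⟨Pi.single i 1, by
    intro j hj
    have : j ≠ i := by rintro rfl; rw [h] at hj; exact Bool.noConfusion hj
    simp [this]⟩

theorem co_bv (a : Fin 24) (i : Fin 4) (h : cf (strs a) (v4 i) = true) (j : Fin 4) :
    SM.co j (bv (K := K) a i h) = if j = i then 1 else 0 := by
  change (Pi.single i 1 : Fin 4 → K) j = _
  rw [Pi.single_apply]

theorem bv_sum (a : Fin 24) (y : SM K a) : y = ∑ i : Fin 4,
    if h : cf (strs a) (v4 i) = true then SM.co i y • bv a i h else 0 := by
  refine SM.ext fun j => ?_
  rw [map_sum, Finset.sum_eq_single j]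
  · split_ifs with h
    · rw [map_smul, co_bv]; simp
    · rw [map_zero]; exact SM.co_zero j (by simpa using h) y
  · intro i _ hij
    split_ifs with h
    · rw [map_smul, co_bv, if_neg hij.symm]; simp
    · simp
  · simp

instance sm_nontrivial (a : Fin 24) : Nontrivial (SM K a) := by
  have : ∀ a : Fin 24, ∃ i, cf (strs a) (v4 i) = true := by decide +kernel
  obtain ⟨i, hi⟩ := this a
  refine ⟨bv a i hi, 0, fun h => ?_⟩
  have := congrArg (SM.co i) h
  rw [co_bv] at this
  simp at this

/-- combinatorial hom relation -/
def HB (a b : Fin 24) : Prop := ∃ χ : Fin 4 → Bool, (∃ i, χ i = true) ∧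
  (∀ i, χ i = true → cf (strs a) (v4 i) = true ∧ cf (strs b) (v4 i) = true) ∧
  ∀ i, (χ (t4 i) && cf (strs a) i) = (cf (strs b) i && χ (s4 i))

instance : DecidableRel HB := fun a b => by unfold HB; infer_instance

theorem hom_iff (a b : Fin 24) : (∃ f : SM K a →ₗ[(A7 K)ᵐᵒᵖ] SM K b, f ≠ 0) ↔ HB a b := by
  constructor
  · rintro ⟨f, hf⟩
    let x : Fin 4 → K := fun i => if h : cf (strs a) (v4 i) = true then SM.co i (f (bv a i h)) else 0
    have hx : ∀ i h, f (bv a i h) = f (MulOpposite.op (gg K (v4 i)) • bv a i h) := by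
      intro i h
      congr 1
      rw [sm_smul]
      refine SM.ext fun k => ?_
      rw [co_rho, co_bv, co_bv]
      have e1 := (by decide : ∀ i, t4 (v4 i) = i) i
      have e2 := (by decide : ∀ i, s4 (v4 i) = i) i
      rw [e1, e2]
      simp [h]
    have hx' : ∀ i h k, k ≠ i → SM.co k (f (bv a i h)) = 0 := by
      intro i h k hk
      rw [hx, map_smul, sm_smul, co_rho, if_neg]
      have e1 := (by decide : ∀ i, t4 (v4 i) = i) i
      rw [e1]
      tauto
    have hco : ∀ y k, SM.co k (f y) = x k * SM.co k y := by
      intro y k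
      have hfK : ∀ (c : K) (v : SM K a), f (c • v) = c • f v := fun c v => by
        rw [← algebraMap_smul (A7 K)ᵐᵒᵖ c v, map_smul, algebraMap_smul]
      conv_lhs => rw [bv_sum a y]
      rw [map_sum, map_sum, Finset.sum_eq_single k]
      · simp only [x]
        split_ifs with h
        · rw [hfK, map_smul, smul_eq_mul, mul_comm]
        · simp
      · intro i _ hik
        split_ifs with h
        · rw [hfK, map_smul, hx' i h k hik.symm, smul_zero]
        · simp
      · simp
    classical
    refine ⟨fun i => decide (x i ≠ 0), ?_, ?_, ?_⟩
    · by_contra h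
      refine hf (LinearMap.ext fun y => SM.ext fun k => ?_)
      have : x k = 0 := by
        by_contra h'
        exact h ⟨k, by simpa using h'⟩
      rw [hco, this]; simp
    · intro i hi
      have hi : x i ≠ 0 := by simpa using hi
      refine ⟨?_, ?_⟩
      · by_contra h
        simp [x, h] at hi
      · by_contra h
        refine hi ?_
        simp only [x]
        split_ifs with h'
        · exact SM.co_zero i (by simpa using h) _
        · rfl
    · intro i
      have key : ∀ y, SM.co (t4 i) (f (MulOpposite.op (gg K i) • y)) =
        SM.co (t4 i) (MulOpposite.op (gg K i) • f y) := fun y => by rw [map_smul]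
      have key2 : (if cf (strs a) i = true then x (t4 i) else 0) =
          if cf (strs b) i = true then x (s4 i) else 0 := by
        by_cases hs : cf (strs a) (v4 (s4 i)) = true
        · have := key (bv a (s4 i) hs)
          simp only [sm_smul, hco, co_rho, co_bv] at this
          simpa using this
        · have h1 : cf (strs a) i = false := by
            by_contra h
            exact hs ((cf_good a).1 i (by simpa using h)).1
          have h2 : x (s4 i) = 0 := by simp [x, hs]
          simp [h1, h2]
      cases h1 : cf (strs a) i <;> cases h2 : cf (strs b) i <;> simp [h1, h2] at key2 ⊢
      · exact key2.symm
      · exact key2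
      · rw [key2]
  · rintro ⟨χ, ⟨i0, h0⟩, hs, hc⟩
    let f : SM K a →ₗ[K] SM K b := SM.mk (fun i => if χ i = true then SM.co i else 0) (by
      intro i hi
      rw [if_neg]
      intro h
      rw [(hs i h).2] at hi
      exact Bool.noConfusion hi)
    have hf : ∀ y k, SM.co k (f y) = if χ k = true then SM.co k y else 0 := by
      intro y k
      change SM.co k (SM.mk _ _ y) = _
      rw [SM.co_mk]
      split_ifs <;> rfl
    refine ⟨mkHom f ?_, ?_⟩
    · intro i y
      refine SM.ext fun k => ?_
      rw [sm_smul, sm_smul, hf, co_rho, co_rho, hf]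
      have := hc i
      by_cases hk : k = t4 i
      · subst hk
        cases h1 : cf (strs a) i <;> cases h2 : cf (strs b) i <;> cases h3 : χ (t4 i) <;>
          cases h4 : χ (s4 i) <;> simp [h1, h2, h3, h4] at this ⊢
      · simp [hk]
    · intro h
      have := congrArg (fun q => SM.co i0 (q (bv a i0 (hs i0 h0).1))) h
      have h' : SM.co i0 (f (bv a i0 (hs i0 h0).1)) = 0 := this
      rw [hf, co_bv] at h'
      simp [h0] at h'

end SMs


set_option linter.unusedSectionVars false

section chain
variable {K : Type} [Field K] {Y : Type} [AddCommGroup Y] [Module K Y]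

/-- representation of the linear double quiver with vanishing two-cycles -/
structure Rp (E F G : ℕ → Module.End K Y) : Prop where
  FE : ∀ i y, F i (E i y) = F i y
  EF : ∀ i y, E (i + 1) (F i y) = F i y
  GE : ∀ i y, G i (E (i + 1) y) = G i y
  EG : ∀ i y, E i (G i y) = G i y
  EE : ∀ i y, E i (E i y) = E i y
  Eo : ∀ i j, i ≠ j → ∀ y, E i (E j y) = 0
  GF : ∀ i y, G i (F i y) = 0
  FG : ∀ i y, F i (G i y) = 0

variable (E F G : ℕ → Module.End K Y)

/-- lower members -/
def Ac : ℕ → List Bool → Submodule K Y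
  | 0, _ => ⊥
  | n + 1, [] => LinearMap.range (F n)
  | n + 1, true :: w => (Ac n w).map (F n)
  | n + 1, false :: w => (Ac n w).comap (G n) ⊓ LinearMap.range (E (n + 1))

/-- upper members -/
def Bc : ℕ → List Bool → Submodule K Y
  | 0, _ => LinearMap.range (E 0)
  | n + 1, [] => LinearMap.ker (G n) ⊓ LinearMap.range (E (n + 1))
  | n + 1, true :: w => (Bc n w).map (F n)
  | n + 1, false :: w => (Bc n w).comap (G n) ⊓ LinearMap.range (E (n + 1))

variable {E F G}

theorem mem_rangeE (h : Rp E F G) {n : ℕ} {y : Y} : y ∈ LinearMap.range (E n) ↔ E n y = y :=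
  ⟨fun ⟨x, hx⟩ => by rw [← hx, h.EE], fun hy => ⟨y, hy⟩⟩

theorem Ac_le (h : Rp E F G) (n : ℕ) (w : List Bool) : Ac E F G n w ≤ LinearMap.range (E n) := by
  match n, w with
  | 0, _ => exact bot_le
  | n + 1, [] => rintro _ ⟨x, rfl⟩; exact ⟨_, h.EF n x⟩
  | n + 1, true :: w => rintro _ ⟨x, -, rfl⟩; exact ⟨_, h.EF n x⟩
  | n + 1, false :: w => exact inf_le_right

theorem Bc_le (h : Rp E F G) (n : ℕ) (w : List Bool) : Bc E F G n w ≤ LinearMap.range (E n) := by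
  match n, w with
  | 0, _ => exact le_rfl
  | n + 1, [] => exact inf_le_right
  | n + 1, true :: w => rintro _ ⟨x, -, rfl⟩; exact ⟨_, h.EF n x⟩
  | n + 1, false :: w => exact inf_le_right

theorem tele (h : Rp E F G) (n : ℕ) : ∀ (Φ : Submodule K Y → Submodule K Y),
    (∀ w : List Bool, w.length ≤ n → Φ (Bc E F G n w) ≤ Φ (Ac E F G n w)) →
    Φ (LinearMap.range (E n)) ≤ Φ ⊥ := by
  induction n with
  | zero => intro Φ hΦ; exact hΦ [] (by simp)
  | succ n ih =>
    intro Φ hΦ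
    have h1 := ih (fun U => Φ (U.comap (G n) ⊓ LinearMap.range (E (n + 1)))) (fun w hw =>
      hΦ (false :: w) (by simpa using hw))
    have h2 := hΦ [] (by simp)
    have h3 := ih (fun U => Φ (U.map (F n))) (fun w hw => hΦ (true :: w) (by simpa using hw))
    have e1 : (LinearMap.range (E n)).comap (G n) ⊓ LinearMap.range (E (n + 1)) =
        LinearMap.range (E (n + 1)) := by
      refine inf_eq_right.2 fun y _ => ⟨_, h.EG n y⟩
    have e2 : (LinearMap.range (E n)).map (F n) = LinearMap.range (F n) := by
      refine le_antisymm (LinearMap.map_le_range) ?_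
      rintro _ ⟨x, rfl⟩
      exact ⟨E n x, ⟨x, rfl⟩, h.FE n x⟩
    simp only [e1, e2, Submodule.map_bot] at h1 h3
    exact h1.trans (h2.trans h3)

theorem fw_cons (n : ℕ) (b : Bool) (w : List Bool) {i : ℕ} (hi : i < n) :
    fw (n + 1, b :: w) i = fw (n, w) i := by
  unfold fw
  have : n + 1 - 1 - i = (n - 1 - i) + 1 := by omega
  simp only [this, List.getElem?_cons_succ]
  congr 1
  simp [hi, Nat.lt_succ_of_lt hi]
theorem bw_cons (n : ℕ) (b : Bool) (w : List Bool) {i : ℕ} (hi : i < n) :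
    bw (n + 1, b :: w) i = bw (n, w) i := by
  unfold bw
  have : n + 1 - 1 - i = (n - 1 - i) + 1 := by omega
  simp only [this, List.getElem?_cons_succ]
  congr 1
  simp [hi, Nat.lt_succ_of_lt hi]
theorem fw_top (n : ℕ) (b : Bool) (w : List Bool) : fw (n + 1, b :: w) n = b := by
  unfold fw; cases b <;> simp
theorem bw_top (n : ℕ) (b : Bool) (w : List Bool) : bw (n + 1, b :: w) n = !b := by
  unfold bw; cases b <;> simp
theorem fw_nil (n i : ℕ) : fw (n, []) i = false := by unfold fw; simp
theorem bw_nil (n i : ℕ) : bw (n, []) i = false := by unfold bw; simp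
theorem sup_cons (n : ℕ) (b : Bool) (w : List Bool) {i : ℕ} (hi : i ≤ n) :
    sup (n + 1, b :: w) i = sup (n, w) i := by
  unfold sup
  congr 1
  simp only [List.length_cons, eq_iff_iff]
  constructor <;> intro h <;> constructor <;> omega
theorem sup_nil (n i : ℕ) : sup (n, []) i = decide (i = n) := by
  unfold sup
  congr 1
  simp only [List.length_nil, eq_iff_iff]
  constructor <;> intro h <;> omega
theorem sup_gt (n : ℕ) (w : List Bool) {i : ℕ} (hi : n < i) : sup (n, w) i = false := by
  unfold sup
  simp only [decide_eq_false_iff_not]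
  omega

theorem map_in (h : Rp E F G) (n : ℕ) : ∀ (w : List Bool) (_ : w.length ≤ n) (v : Y)
    (_ : v ∈ Bc E F G n w), ∃ u : ℕ → Y, u n = v ∧ (∀ i, E i (u i) = u i) ∧
      (∀ i, sup (n, w) i = false → u i = 0) ∧
      (∀ i, i < n → F i (u i) = if fw (n, w) i = true then u (i + 1) else 0) ∧
      (∀ i, i < n → G i (u (i + 1)) = if bw (n, w) i = true then u i else 0) := by
  induction n with
  | zero =>
    intro w hw v hv
    obtain rfl : w = [] := List.length_eq_zero_iff.1 (Nat.le_zero.1 hw)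
    refine ⟨Pi.single 0 v, by simp, ?_, ?_, by simp, by simp⟩
    · intro i
      rcases eq_or_ne i 0 with rfl | hi
      · simpa using (mem_rangeE h).1 hv
      · simp [hi]
    · intro i hi
      rw [sup_nil] at hi
      have : i ≠ 0 := by simpa using hi
      simp [this]
  | succ n ih =>
    intro w hw v hv
    match w, hw, hv with
    | [], hw, hv =>
      refine ⟨Pi.single (n + 1) v, by simp, ?_, ?_, ?_, ?_⟩
      · intro i
        rcases eq_or_ne i (n + 1) with rfl | hi
        · simpa using (mem_rangeE h).1 hv.2
        · simp [hi]
      · intro i hi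
        rw [sup_nil] at hi
        have : i ≠ n + 1 := by simpa using hi
        simp [this]
      · intro i hi
        rw [fw_nil, Pi.single_eq_of_ne (by omega)]
        simp
      · intro i hi
        rw [bw_nil]
        rcases eq_or_ne i n with rfl | hi'
        · simpa using hv.1
        · rw [Pi.single_eq_of_ne (by omega)]
          simp
    | b :: w, hw, hv =>
      have hw' : w.length ≤ n := by simpa using hw
      have hvE : E (n + 1) v = v := (mem_rangeE h).1 (Bc_le h _ _ hv)
      obtain ⟨v', hv', hb⟩ : ∃ v' ∈ Bc E F G n w, (if b = true then F n v' = v else G n v = v') := by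
        cases b
        · exact ⟨_, hv.1, by simp⟩
        · obtain ⟨v', h1, h2⟩ := hv
          exact ⟨v', h1, by simpa using h2⟩
      obtain ⟨u, h1, h2, h3, h4, h5⟩ := ih w hw' v' hv'
      refine ⟨Function.update u (n + 1) v, by simp, ?_, ?_, ?_, ?_⟩
      · intro i
        rcases eq_or_ne i (n + 1) with rfl | hi
        · simpa using hvE
        · simpa [hi] using h2 i
      · intro i hi
        rcases lt_trichotomy i (n + 1) with hi' | rfl | hi'
        · rw [Function.update_of_ne (by omega)]
          rw [sup_cons n b w (by omega)] at hi
          exact h3 i hi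
        · unfold sup at hi; simp at hi
        · rw [Function.update_of_ne (by omega)]
          exact h3 i (sup_gt _ _ (by omega))
      · intro i hi
        rw [Function.update_of_ne (by omega)]
        rcases Nat.lt_or_ge i n with hi' | hi'
        · rw [Function.update_of_ne (by omega), fw_cons _ _ _ hi']
          exact h4 i hi'
        · obtain rfl : i = n := by omega
          rw [fw_top, h1, Function.update_self]
          cases b
          · simp only [Bool.false_eq_true, if_false] at hb ⊢
            rw [← hb, h.FG]
          · simpa using hb
      · intro i hi
        rw [Function.update_of_ne (show i ≠ n + 1 by omega)]
        rcases Nat.lt_or_ge i n with hi' | hi'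
        · rw [Function.update_of_ne (by omega), bw_cons _ _ _ hi']
          exact h5 i hi'
        · obtain rfl : i = n := by omega
          rw [bw_top, h1, Function.update_self]
          cases b
          · simpa using hb
          · simp only [if_true] at hb
            simp only [Bool.not_true, Bool.false_eq_true, if_false]
            rw [← hb, h.GF]

theorem map_out (h : Rp E F G) (n : ℕ) : ∀ (w : List Bool) (_ : w.length ≤ n) (v : Y →ₗ[K] K)
    (_ : ∀ y, v (E n y) = v y) (_ : ∀ y ∈ Ac E F G n w, v y = 0), ∃ u : ℕ → (Y →ₗ[K] K), u n = v ∧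
      (∀ i y, u i (E i y) = u i y) ∧
      (∀ i, sup (n, w) i = false → u i = 0) ∧
      (∀ i, i < n → ∀ y, u (i + 1) (F i y) = if fw (n, w) i = true then u i y else 0) ∧
      (∀ i, i < n → ∀ y, u i (G i y) = if bw (n, w) i = true then u (i + 1) y else 0) := by
  induction n with
  | zero =>
    intro w hw v hvE hv
    obtain rfl : w = [] := List.length_eq_zero_iff.1 (Nat.le_zero.1 hw)
    refine ⟨Pi.single 0 v, by simp, ?_, ?_, by simp, by simp⟩
    · intro i y
      rcases eq_or_ne i 0 with rfl | hi
      · simpa using hvE y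
      · simp [hi]
    · intro i hi
      rw [sup_nil] at hi
      have : i ≠ 0 := by simpa using hi
      simp [this]
  | succ n ih =>
    intro w hw v hvE hv
    match w, hw, hv with
    | [], hw, hv =>
      refine ⟨Pi.single (n + 1) v, by simp, ?_, ?_, ?_, ?_⟩
      · intro i y
        rcases eq_or_ne i (n + 1) with rfl | hi
        · simpa using hvE y
        · simp [hi]
      · intro i hi
        rw [sup_nil] at hi
        have : i ≠ n + 1 := by simpa using hi
        simp [this]
      · intro i hi y
        rw [fw_nil]
        rcases eq_or_ne i n with rfl | hi'
        · simpa using hv _ ⟨y, rfl⟩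
        · rw [Pi.single_eq_of_ne (by omega)]
          simp
      · intro i hi y
        rw [bw_nil, Pi.single_eq_of_ne (by omega)]
        simp
    | b :: w, hw, hv =>
      have hw' : w.length ≤ n := by simpa using hw
      obtain ⟨v', hvE', hv', hb⟩ : ∃ v' : Y →ₗ[K] K, (∀ y, v' (E n y) = v' y) ∧
          (∀ y ∈ Ac E F G n w, v' y = 0) ∧
          (if b = true then ∀ y, v (F n y) = v' y else ∀ y, v' (G n y) = v y) := by
        cases b
        · let q : Y →ₗ[K] Y ⧸ Ac E F G n w := (Submodule.mkQ _).comp (G n)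
          have hq : v ∈ LinearMap.range q.dualMap := by
            rw [LinearMap.range_dualMap_eq_dualAnnihilator_ker, Submodule.mem_dualAnnihilator]
            intro y hy
            rw [← hvE]
            refine hv _ ⟨?_, ⟨y, rfl⟩⟩
            have hy : Submodule.Quotient.mk (p := Ac E F G n w) (G n y) = 0 := hy
            rw [Submodule.Quotient.mk_eq_zero] at hy
            change G n (E (n + 1) y) ∈ Ac E F G n w
            rwa [h.GE]
          obtain ⟨μ, hμ⟩ := hq
          refine ⟨(μ.comp (Submodule.mkQ _)).comp (E n), ?_, ?_, ?_⟩
          · intro y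
            simp only [LinearMap.comp_apply, h.EE]
          · intro y hy
            rw [LinearMap.comp_apply, (mem_rangeE h).1 (Ac_le h _ _ hy), LinearMap.comp_apply,
              Submodule.mkQ_apply, (Submodule.Quotient.mk_eq_zero _).2 hy, map_zero]
          · simp only [Bool.false_eq_true, if_false]
            intro y
            rw [LinearMap.comp_apply, h.EG, ← hμ]
            rfl
        · refine ⟨v.comp (F n), ?_, ?_, ?_⟩
          · intro y
            simp only [LinearMap.comp_apply, h.FE]
          · intro y hy
            exact hv _ ⟨y, hy, rfl⟩
          · simp
      obtain ⟨u, h1, h2, h3, h4, h5⟩ := ih w hw' v' hvE' hv'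
      refine ⟨Function.update u (n + 1) v, by simp, ?_, ?_, ?_, ?_⟩
      · intro i y
        rcases eq_or_ne i (n + 1) with rfl | hi
        · simpa using hvE y
        · simpa [hi] using h2 i y
      · intro i hi
        rcases lt_trichotomy i (n + 1) with hi' | rfl | hi'
        · rw [Function.update_of_ne (by omega)]
          rw [sup_cons n b w (by omega)] at hi
          exact h3 i hi
        · unfold sup at hi; simp at hi
        · rw [Function.update_of_ne (by omega)]
          exact h3 i (sup_gt _ _ (by omega))
      · intro i hi y
        rw [Function.update_of_ne (show i ≠ n + 1 by omega)]
        rcases Nat.lt_or_ge i n with hi' | hi'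
        · rw [Function.update_of_ne (by omega), fw_cons _ _ _ hi']
          exact h4 i hi' y
        · obtain rfl : i = n := by omega
          rw [fw_top, h1, Function.update_self]
          cases b
          · simp only [Bool.false_eq_true, if_false] at hb ⊢
            rw [← hb, h.GF, map_zero]
          · simpa using hb y
      · intro i hi y
        rw [Function.update_of_ne (show i ≠ n + 1 by omega)]
        rcases Nat.lt_or_ge i n with hi' | hi'
        · rw [Function.update_of_ne (by omega), bw_cons _ _ _ hi']
          exact h5 i hi' y
        · obtain rfl : i = n := by omega
          rw [bw_top, h1, Function.update_self]
          cases b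
          · simpa using hb y
          · simp only [if_true] at hb
            simp only [Bool.not_true, Bool.false_eq_true, if_false]
            rw [← hb, h.FG, map_zero]

/-- the splitting data. -/
theorem exists_split (h : Rp E F G) (n : ℕ) (hn : LinearMap.range (E n) ≠ ⊥) :
    ∃ w : List Bool, w.length ≤ n ∧ ¬ Bc E F G n w ≤ Ac E F G n w ∧
    ∃ (u : ℕ → Y) (l : ℕ → (Y →ₗ[K] K)),
      (∀ i, E i (u i) = u i) ∧ (∀ i, sup (n, w) i = false → u i = 0) ∧
      (∀ i, i < n → F i (u i) = if fw (n, w) i = true then u (i + 1) else 0) ∧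
      (∀ i, i < n → G i (u (i + 1)) = if bw (n, w) i = true then u i else 0) ∧
      (∀ i y, l i (E i y) = l i y) ∧
      (∀ i, sup (n, w) i = false → l i = 0) ∧
      (∀ i, i < n → ∀ y, l (i + 1) (F i y) = if fw (n, w) i = true then l i y else 0) ∧
      (∀ i, i < n → ∀ y, l i (G i y) = if bw (n, w) i = true then l (i + 1) y else 0) ∧
      (∀ i, sup (n, w) i = true → l i (u i) = 1) := by
  obtain ⟨w, hw, hBA⟩ : ∃ w : List Bool, w.length ≤ n ∧ ¬ Bc E F G n w ≤ Ac E F G n w := by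
    by_contra hcon
    push Not at hcon
    exact hn (le_bot_iff.1 (tele h n id hcon))
  obtain ⟨v, hvB, hvA⟩ := SetLike.not_le_iff_exists.1 hBA
  obtain ⟨f, hf1, hf2⟩ := Submodule.exists_le_ker_of_notMem hvA
  have hvE : E n v = v := (mem_rangeE h).1 (Bc_le h _ _ hvB)
  obtain ⟨u, a1, a2, a3, a4, a5⟩ := map_in h n w hw v hvB
  obtain ⟨l, b1, b2, b3, b4, b5⟩ := map_out h n w hw ((f v)⁻¹ • f.comp (E n)) (by
      intro y; simp [h.EE]) (by
      intro y hy
      have : f y = 0 := hf2 hy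
      simp [(mem_rangeE h).1 (Ac_le h _ _ hy), this])
  refine ⟨w, hw, hBA, u, l, a2, a3, a4, a5, b2, b3, b4, b5, ?_⟩
  have key : ∀ k i, i + k = n → sup (n, w) i = true → l i (u i) = 1 := by
    intro k
    induction k with
    | zero =>
      intro i hi _
      obtain rfl : i = n := by omega
      rw [a1, b1]
      simp [hvE, hf1]
    | succ k ih =>
      intro i hi hs
      have hs' : sup (n, w) (i + 1) = true := by
        unfold sup at hs ⊢
        simp only [decide_eq_true_eq] at hs ⊢
        omega
      have h1 := ih (i + 1) (by omega) hs'
      have hin : i < n := by omega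
      have hlt : n - 1 - i < w.length := by
        unfold sup at hs
        simp only [decide_eq_true_eq] at hs
        omega
      cases hb : w[n - 1 - i] with
      | true =>
        have hfw : fw (n, w) i = true := by
          unfold fw; simp [hin, List.getElem?_eq_getElem hlt, hb]
        have := b4 i hin (u i)
        rw [a4 i hin, hfw, if_pos rfl, if_pos rfl, h1] at this
        exact this.symm
      | false =>
        have hfw : bw (n, w) i = true := by
          unfold bw; simp [hin, List.getElem?_eq_getElem hlt, hb]
        have := b5 i hin (u (i + 1))
        rw [a5 i hin, hfw, if_pos rfl, if_pos rfl, h1] at this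
        exact this
  intro i hi
  refine key (n - i) i ?_ hi
  unfold sup at hi
  simp only [decide_eq_true_eq] at hi
  omega

end chain


set_option linter.unusedSectionVars false

section cls
variable {K : Type} [Field K] 

section conc
variable {Y : Type} [AddCommGroup Y] [Module (A7 K)ᵐᵒᵖ Y] [Module K Y] [IsScalarTower K (A7 K)ᵐᵒᵖ Y]

variable (K) in
/-- action of generators -/
def ac (i : Fin 10) : Module.End K Y where
  toFun y := MulOpposite.op (gg K i) • y
  map_add' := smul_add _
  map_smul' c y := by
    rw [← algebraMap_smul (A7 K)ᵐᵒᵖ c y, ← mul_smul, ← Algebra.commutes, mul_smul, algebraMap_smul]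
    rfl

theorem ac_apply (i : Fin 10) (y : Y) : ac K i y = MulOpposite.op (gg K i) • y := rfl

theorem ac_ac (i j : Fin 10) (y : Y) : ac K j (ac K i y) = MulOpposite.op (gg K i * gg K j) • y := by
  rw [ac_apply, ac_apply, ← mul_smul]; rfl

variable (K Y)
/-- vertex operators -/
def oE : ℕ → Module.End K Y
  | 0 => ac K 0
  | 1 => ac K 1
  | 2 => ac K 2
  | 3 => ac K 3
  | _ => 0
/-- forward operators -/
def oF : ℕ → Module.End K Y
  | 0 => ac K 4
  | 1 => ac K 6
  | 2 => ac K 8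
  | _ => 0
/-- backward operators -/
def oG : ℕ → Module.End K Y
  | 0 => ac K 5
  | 1 => ac K 7
  | 2 => ac K 9
  | _ => 0
variable {K Y}

theorem rp_of_z (hz : ∀ y : Y, MulOpposite.op (zz (gg K)) • y = 0) :
    Rp (oE K Y) (oF K Y) (oG K Y) := by
  have h := gg_facts K
  have L : ∀ (i j : Fin 10) (y : Y), sr j = i → ac K j (ac K i y) = ac K j y := by
    rintro i j y rfl; rw [ac_ac, h.sl]; rfl
  have Rr : ∀ (i j : Fin 10) (y : Y), tg i = j → ac K j (ac K i y) = ac K i y := by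
    rintro i j y rfl; rw [ac_ac, h.sR]; rfl
  have O : ∀ (i j : Fin 10) (y : Y), tg i ≠ sr j → ac K j (ac K i y) = 0 := by
    intro i j y hij
    rw [ac_ac, h.lz i j hij, MulOpposite.op_zero, zero_smul]
  have Z : ∀ (i j k : Fin 10) (y : Y), zz (gg K) * gg K k = gg K i * gg K j → ac K j (ac K i y) = 0 := by
    intro i j k y hk
    rw [ac_ac, ← hk, MulOpposite.op_mul, mul_smul, hz, smul_zero]
  refine ⟨?_, ?_, ?_, ?_, ?_, ?_, ?_, ?_⟩
  · rintro (_ | _ | _ | _ | i) y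
    exacts [L 0 4 y rfl, L 1 6 y rfl, L 2 8 y rfl, rfl, rfl]
  · rintro (_ | _ | _ | _ | i) y
    exacts [Rr 4 1 y rfl, Rr 6 2 y rfl, Rr 8 3 y rfl, rfl, rfl]
  · rintro (_ | _ | _ | _ | i) y
    exacts [L 1 5 y rfl, L 2 7 y rfl, L 3 9 y rfl, rfl, rfl]
  · rintro (_ | _ | _ | _ | i) y
    exacts [Rr 5 0 y rfl, Rr 7 1 y rfl, Rr 9 2 y rfl, map_zero _, rfl]
  · rintro (_ | _ | _ | _ | i) y
    exacts [Rr 0 0 y rfl, Rr 1 1 y rfl, Rr 2 2 y rfl, Rr 3 3 y rfl, rfl]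
  · rintro (_ | _ | _ | _ | i) (_ | _ | _ | _ | j) hij y <;>
      first | exact absurd rfl hij | exact map_zero _ | rfl | exact O _ _ y (by decide)
  · rintro (_ | _ | _ | _ | i) y
    exacts [Z 4 5 0 y h.z0, Z 6 7 1 y (h.z1.trans h.r1), Z 8 9 2 y (h.z2.trans h.r2), rfl, rfl]
  · rintro (_ | _ | _ | _ | i) y
    exacts [Z 5 4 1 y h.z1, Z 7 6 2 y h.z2, Z 9 8 3 y h.z3, rfl, rfl]

theorem str_ex (n : ℕ) (hn : n < 4) (w : List Bool) (hw : w.length ≤ n) :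
    (n, w) = (3, [true, true, true]) ∨ (n, w) = (3, [false, false, false]) ∨
      ∃ a, strs a = (n, w) := by
  have dec : ∀ b ∈ ([true, false] : List Bool), ∀ c ∈ ([true, false] : List Bool),
      ∀ d ∈ ([true, false] : List Bool),
      ((∃ a, strs a = (1, [b])) ∧ (∃ a, strs a = (2, [b])) ∧ (∃ a, strs a = (3, [b])) ∧
      (∃ a, strs a = (2, [b, c])) ∧ (∃ a, strs a = (3, [b, c]))) ∧
      ((3, [b, c, d]) = ((3, [true, true, true]) : ℕ × List Bool) ∨
        (3, [b, c, d]) = ((3, [false, false, false]) : ℕ × List Bool) ∨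
        ∃ a, strs a = (3, [b, c, d])) := by decide +kernel
  have hb : ∀ b : Bool, b ∈ ([true, false] : List Bool) := by decide
  match w, hw with
  | [], _ =>
    have : ∀ n < 4, ∃ a, strs a = (n, []) := by decide +kernel
    exact Or.inr (Or.inr (this n hn))
  | [b], hw =>
    have := (dec b (hb b) b (hb b) b (hb b)).1
    simp only [List.length_cons, List.length_nil] at hw
    interval_cases n
    exacts [Or.inr (Or.inr this.1), Or.inr (Or.inr this.2.1), Or.inr (Or.inr this.2.2.1)]
  | [b, c], hw =>
    have := (dec b (hb b) c (hb c) b (hb b)).1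
    simp only [List.length_cons, List.length_nil] at hw
    interval_cases n
    exacts [Or.inr (Or.inr this.2.2.2.1), Or.inr (Or.inr this.2.2.2.2)]
  | [b, c, d], hw =>
    have := (dec b (hb b) c (hb c) d (hb d)).2
    simp only [List.length_cons, List.length_nil] at hw
    interval_cases n
    exact this
  | b :: c :: d :: e :: w, hw =>
    simp only [List.length_cons] at hw
    omega

theorem exists_str_aux (hz : ∀ y : Y, MulOpposite.op (zz (gg K)) • y = 0) [Nontrivial Y] :
    ∃ a, Summ (A7 K)ᵐᵒᵖ (SM K a) Y := by
  have h := rp_of_z hz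
  have hA := gg_facts K
  obtain ⟨n, hn4, hn, htop⟩ : ∃ n < 4, LinearMap.range (oE K Y n) ≠ ⊥ ∧ ∀ m, n < m → oE K Y m = 0 := by
    have hbig : ∀ m, 4 ≤ m → oE K Y m = 0 := by
      rintro (_ | _ | _ | _ | m) hm <;> first | rfl | omega
    have hP : ∃ n, n ≤ 3 ∧ oE K Y n ≠ 0 := by
      by_contra hcon
      push Not at hcon
      obtain ⟨y, hy⟩ := exists_ne (0 : Y)
      refine hy ?_
      have e : ∀ n ≤ 3, oE K Y n y = 0 := fun n hn => by rw [hcon n hn]; rfl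
      have : y = oE K Y 0 y + oE K Y 1 y + oE K Y 2 y + oE K Y 3 y := by
        change y = ac K 0 y + ac K 1 y + ac K 2 y + ac K 3 y
        simp only [ac_apply, ← add_smul, ← MulOpposite.op_add, hA.one, MulOpposite.op_one, one_smul]
      rw [this, e 0 (by omega), e 1 (by omega), e 2 (by omega), e 3 (by omega)]
      simp
    classical
    obtain ⟨k, hk3, hk⟩ := hP
    refine ⟨Nat.findGreatest (fun n => oE K Y n ≠ 0) 3, ?_, ?_, ?_⟩
    · have := Nat.findGreatest_le (P := fun n => oE K Y n ≠ 0) 3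
      omega
    · have := Nat.findGreatest_spec (P := fun n => oE K Y n ≠ 0) hk3 hk
      rwa [ne_eq, LinearMap.range_eq_bot]
    · intro m hm
      by_contra h'
      rcases Nat.lt_or_ge 3 m with hm3 | hm3
      · exact h' (hbig m hm3)
      · exact Nat.findGreatest_is_greatest (P := fun n => oE K Y n ≠ 0) hm hm3 h'
  obtain ⟨w, hw, hBA, u, l, a2, a3, a4, a5, b2, b3, b4, b5, hlu⟩ := exists_split h n hn
  have hF : ∀ i, n ≤ i → ∀ y, oF K Y i y = 0 := fun i hi y => by
    rw [← h.EF, htop _ (by omega)]; rfl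
  have hG : ∀ i, n ≤ i → ∀ y, oG K Y i y = 0 := fun i hi y => by
    rw [← h.GE, htop _ (by omega)]; simp
  have hfw : ∀ i, n ≤ i → fw (n, w) i = false := fun i hi => by
    unfold fw; simp only [decide_eq_false_iff_not]; omega
  have hbw : ∀ i, n ≤ i → bw (n, w) i = false := fun i hi => by
    unfold bw; simp only [decide_eq_false_iff_not]; omega
  have a4' : ∀ i, oF K Y i (u i) = if fw (n, w) i = true then u (i + 1) else 0 := by
    intro i
    rcases Nat.lt_or_ge i n with hi | hi
    · exact a4 i hi
    · rw [hF i hi, hfw i hi]; rfl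
  have a5' : ∀ i, oG K Y i (u (i + 1)) = if bw (n, w) i = true then u i else 0 := by
    intro i
    rcases Nat.lt_or_ge i n with hi | hi
    · exact a5 i hi
    · rw [hG i hi, hbw i hi]; rfl
  have b4' : ∀ i y, l (i + 1) (oF K Y i y) = if fw (n, w) i = true then l i y else 0 := by
    intro i
    rcases Nat.lt_or_ge i n with hi | hi
    · exact b4 i hi
    · intro y; rw [hF i hi, hfw i hi, map_zero]; rfl
  have b5' : ∀ i y, l i (oG K Y i y) = if bw (n, w) i = true then l (i + 1) y else 0 := by
    intro i
    rcases Nat.lt_or_ge i n with hi | hi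
    · exact b5 i hi
    · intro y; rw [hG i hi, hbw i hi, map_zero]; rfl
  have hEu : ∀ i, oE K Y i (u i) = if sup (n, w) i = true then u i else 0 := by
    intro i
    cases hs : sup (n, w) i
    · rw [a3 i hs]; simp
    · simpa using a2 i
  have hEl : ∀ i y, l i (oE K Y i y) = if sup (n, w) i = true then l i y else 0 := by
    intro i y
    cases hs : sup (n, w) i
    · rw [b3 i hs]; simp
    · simpa using b2 i y
  obtain ⟨a, ha⟩ : ∃ a, strs a = (n, w) := by
    rcases str_ex n hn4 w hw with hnw | hnw | hnw
    · obtain ⟨rfl, rfl⟩ := Prod.mk.inj hnw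
      refine absurd ?_ hBA
      rintro _ ⟨_, ⟨_, ⟨x, -, rfl⟩, rfl⟩, rfl⟩
      change ac K 8 (ac K 6 (ac K 4 x)) ∈ _
      rw [ac_ac, ac_apply 4, ← mul_smul, ← MulOpposite.op_mul, ← mul_assoc, hA.r3, MulOpposite.op_zero,
        zero_smul]
      exact Submodule.zero_mem _
    · obtain ⟨rfl, rfl⟩ := Prod.mk.inj hnw
      refine absurd ?_ hBA
      intro x hx
      have hx := Bc_le h _ _ hx
      refine ⟨⟨⟨?_, ⟨_, h.EG 1 _⟩⟩, ⟨_, h.EG 2 _⟩⟩, hx⟩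
      change ac K 5 (ac K 7 (ac K 9 x)) = 0
      rw [ac_ac, ac_apply 9, ← mul_smul, ← MulOpposite.op_mul, ← mul_assoc, hA.r4, MulOpposite.op_zero,
        zero_smul]
    · exact hnw
  refine ⟨a, ?_⟩
  have hcf : ∀ i : Fin 4, cf (strs a) (v4 i) = sup (n, w) i.1 := by
    intro i
    rw [ha]
    fin_cases i <;> rfl
  have p1 : ∀ (k : Fin 10) (y : Y), oE K Y (t4 k).1 (ac K k y) = ac K k y := by
    intro k y
    fin_cases k
    exacts [h.EE 0 y, h.EE 1 y, h.EE 2 y, h.EE 3 y, h.EF 0 y, h.EG 0 y, h.EF 1 y, h.EG 1 y, h.EF 2 y,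
      h.EG 2 y]
  have p2 : ∀ (k : Fin 10) (y : Y), ac K k (oE K Y (s4 k).1 y) = ac K k y := by
    intro k y
    fin_cases k
    exacts [h.EE 0 y, h.EE 1 y, h.EE 2 y, h.EE 3 y, h.FE 0 y, h.GE 0 y, h.FE 1 y, h.GE 1 y, h.FE 2 y,
      h.GE 2 y]
  have p3 : ∀ (k : Fin 10), ac K k (u (s4 k).1) = if cf (strs a) k = true then u (t4 k).1 else 0 := by
    intro k
    rw [ha]
    fin_cases k
    exacts [hEu 0, hEu 1, hEu 2, hEu 3, a4' 0, a5' 0, a4' 1, a5' 1, a4' 2, a5' 2]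
  have p4 : ∀ (k : Fin 10) y, l (t4 k).1 (ac K k y) = if cf (strs a) k = true then l (s4 k).1 y else 0 := by
    intro k y
    rw [ha]
    fin_cases k
    exacts [hEl 0 y, hEl 1 y, hEl 2 y, hEl 3 y, b4' 0 y, b5' 0 y, b4' 1 y, b5' 1 y, b4' 2 y, b5' 2 y]
  let ι : SM K a →ₗ[K] Y := ∑ i : Fin 4, (SM.co i).smulRight (u i.1)
  have hι : ∀ y, ι y = ∑ i : Fin 4, SM.co i y • u i.1 := by
    intro y; simp [ι]
  let π : Y →ₗ[K] SM K a := SM.mk (fun i => l i.1) (by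
    intro i hi
    rw [hcf] at hi
    exact b3 _ hi)
  have hπ : ∀ y i, SM.co i (π y) = l i.1 y := fun y i => rfl
  refine ⟨mkHom ι ?_, mkHom π ?_, ?_⟩
  · intro k y
    rw [sm_smul, hι, hι, ← ac_apply, map_sum, Finset.sum_eq_single (t4 k), Finset.sum_eq_single (s4 k)]
    · rw [map_smul, p3, co_rho]
      split_ifs with h1 h2 h2
      · rfl
      · exact absurd h1.2 h2
      · exact absurd ⟨rfl, h2⟩ h1
      · simp
    · intro i _ hi
      rw [map_smul, ← p2, ← a2, h.Eo _ _ (fun h' => hi (Fin.ext h'.symm))]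
      simp
    · simp
    · intro i _ hi
      rw [co_rho, if_neg (fun h' => hi h'.1), zero_smul]
    · simp
  · intro k y
    refine SM.ext fun i => ?_
    rw [sm_smul, co_rho, hπ, hπ, ← ac_apply]
    by_cases hi : i = t4 k
    · subst hi
      rw [p4]; simp
    · rw [if_neg (fun h' => hi h'.1), ← p1, ← b2, h.Eo _ _ (fun h' => hi (Fin.ext h')), map_zero]
  · intro y
    refine SM.ext fun i => ?_
    change SM.co i (π (ι y)) = _
    rw [hπ, hι, map_sum, Finset.sum_eq_single i]
    · rw [map_smul]
      cases hs : sup (n, w) i.1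
      · rw [b3 _ hs]
        have := SM.co_zero i (by rw [hcf, hs]) y
        simp [this]
      · rw [hlu _ hs]; simp
    · intro j _ hj
      rw [map_smul, ← b2, ← a2, h.Eo _ _ (fun h' => hj (Fin.ext h'.symm)), map_zero, smul_zero]
    · simp
end conc

theorem exists_str {Y : Type} [AddCommGroup Y] [Module (A7 K)ᵐᵒᵖ Y]
    (hz : ∀ y : Y, MulOpposite.op (zz (gg K)) • y = 0) [Nontrivial Y] :
    ∃ a, Summ (A7 K)ᵐᵒᵖ (SM K a) Y := by
  let _ : Module K Y := Module.compHom Y (algebraMap K (A7 K)ᵐᵒᵖ)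
  have : IsScalarTower K (A7 K)ᵐᵒᵖ Y := IsScalarTower.of_algebraMap_smul fun c y => rfl
  exact exists_str_aux hz

end cls

set_option linter.unusedSectionVars false

section fin
variable {K : Type} [Field K]

/-- the central element. -/
abbrev zK (K : Type) [Field K] : (A7 K)ᵐᵒᵖ := MulOpposite.op (zz (gg K))

theorem exists_XC {T : MClass (A7 K)ᵐᵒᵖ} (hT : IsQ T) (l : List (Fin 24))
    (hl : ∀ a ∈ l, T (SM K a)) :
    ∃ X : ModuleCat.{0} (A7 K)ᵐᵒᵖ, T X ∧ ∀ a ∈ l, Summ (A7 K)ᵐᵒᵖ (SM K a) X := by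
  induction l with
  | nil => exact ⟨ModuleCat.of _ PUnit, hT.zero (by change Subsingleton PUnit; infer_instance), by simp⟩
  | cons a l ih =>
    obtain ⟨X, hX, h⟩ := ih (fun b hb => hl b (List.mem_cons_of_mem _ hb))
    refine ⟨ModuleCat.of _ (SM K a × X), hT.prod (hl a (by simp)) hX, ?_⟩
    intro b hb
    rcases List.mem_cons.1 hb with rfl | hb
    · exact ⟨LinearMap.inl _ _ _, LinearMap.fst _ _ _, fun x => rfl⟩
    · exact (h b hb).trans ⟨LinearMap.inr _ _ _, LinearMap.snd _ _ _, fun x => rfl⟩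

theorem exists_XT {T : MClass (A7 K)ᵐᵒᵖ} (hT : IsQ T) :
    ∃ X : ModuleCat.{0} (A7 K)ᵐᵒᵖ, T X ∧
      ∀ (Y : Type) [AddCommGroup Y] [Module (A7 K)ᵐᵒᵖ Y], Module.Finite (A7 K)ᵐᵒᵖ Y →
        (∀ y : Y, zK K • y = 0) →
        (∀ a, Summ (A7 K)ᵐᵒᵖ (SM K a) Y → T (SM K a)) → MAdd (A7 K)ᵐᵒᵖ Y X := by
  classical
  obtain ⟨X, hX, h⟩ := exists_XC hT ((List.finRange 24).filter fun a => T (SM K a))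
    (fun a ha => by simpa using (List.mem_filter.1 ha).2)
  refine ⟨X, hX, fun Y _ _ hfg hz hs => mAdd_of_ind fun Z hZ hZY => ?_⟩
  have : Nontrivial Z := hZ.1
  have hzZ : ∀ y : Z, zK K • y = 0 := by
    obtain ⟨i, p, hip⟩ := hZY
    intro y
    rw [← hip (zK K • y), map_smul, hz, map_zero]
  obtain ⟨a, ha⟩ := exists_str hzZ
  obtain ⟨e⟩ := hZ.equiv_of_summ ha
  have hTa := hs a (ha.trans hZY)
  exact ((Summ.of_equiv e.symm).trans (h a (by simpa using hTa))).mAdd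

theorem tors_le {T T' : MClass (A7 K)ᵐᵒᵖ} (hT : IsTors T) (hT' : IsTors T')
    (h : ∀ a, T (SM K a) → T' (SM K a)) (Y : Type) [AddCommGroup Y] [Module (A7 K)ᵐᵒᵖ Y]
    (hY : T Y) : T' Y := by
  obtain ⟨X, hX, hX'⟩ := exists_XT hT'.isQ
  have hz := zz_central K
  refine lemmaB hT' hz 3 (fun y => by rw [zz_nil, zero_smul]) ?_
  have hq := tz_quot hT hz hY
  exact hT'.isQ.mAdd (hX' _ (hT.fg hq.1) hq.2 fun a ha => h a (hT.isQ.summ ha hq.1)) hX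

/-- perpendicular classes. -/
def TD (K : Type) [Field K] (D : Fin 24 → Prop) : MClass (A7 K)ᵐᵒᵖ := fun Y _ _ =>
  Module.Finite (A7 K)ᵐᵒᵖ Y ∧ ∀ d, D d → ∀ f : Y →ₗ[(A7 K)ᵐᵒᵖ] SM K d, f = 0

theorem TD_tors (D : Fin 24 → Prop) : IsTors (TD K D) where
  fg h := h.1
  quot {M N} _ _ _ _ f hf h := by
    have := h.1
    refine ⟨Module.Finite.of_surjective f hf, fun d hd g => ?_⟩
    have := h.2 d hd (g ∘ₗ f)
    ext y
    obtain ⟨x, rfl⟩ := hf y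
    exact LinearMap.congr_fun this x
  ext {M} _ _ N h h' := by
    have := h.1
    have := h'.1
    refine ⟨Module.Finite.of_submodule_quotient N, fun d hd g => ?_⟩
    have h1 := h.2 d hd (g ∘ₗ N.subtype)
    have h2 := h'.2 d hd (N.liftQ g (fun x hx => LinearMap.congr_fun h1 ⟨x, hx⟩))
    ext y
    exact LinearMap.congr_fun h2 (N.mkQ y)
  zero h := ⟨inferInstance, fun d hd f => by ext y; rw [Subsingleton.elim y 0]; simp⟩

theorem TD_iff (D : Fin 24 → Prop) (a : Fin 24) : TD K D (SM K a) ↔ ∀ d, D d → ¬ HB a d := by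
  constructor
  · intro h d hd hab
    obtain ⟨f, hf⟩ := (hom_iff (K := K) a d).2 hab
    exact hf (h.2 d hd f)
  · intro h
    refine ⟨inferInstance, fun d hd f => ?_⟩
    by_contra hf
    exact h d hd ((hom_iff (K := K) a d).1 ⟨f, hf⟩)

theorem tors_closed {T : MClass (A7 K)ᵐᵒᵖ} (hT : IsTors T) (a : Fin 24) :
    T (SM K a) ↔ ∀ d, (∀ c, T (SM K c) → ¬ HB c d) → ¬ HB a d := by
  refine ⟨fun h d hd => hd a h, fun h => ?_⟩
  by_contra ha
  obtain ⟨N, hN, hmax⟩ := WellFounded.has_min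
    (wellFounded_gt (α := Submodule (A7 K)ᵐᵒᵖ (SM K a)))
    {N | T N} ⟨⊥, hT.zero inferInstance⟩
  have hnt : Nontrivial (SM K a ⧸ N) := by
    by_contra hn
    have : Subsingleton (SM K a ⧸ N) := not_nontrivial_iff_subsingleton.1 hn
    exact ha (hT.ext N hN (hT.zero this))
  have hzero : ∀ (Y : Type) [AddCommGroup Y] [Module (A7 K)ᵐᵒᵖ Y], T Y →
      ∀ g : Y →ₗ[(A7 K)ᵐᵒᵖ] (SM K a ⧸ N), g = 0 := by
    intro Y _ _ hY g
    let N' : Submodule (A7 K)ᵐᵒᵖ (SM K a) := (LinearMap.range g).comap N.mkQ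
    have hle : N ≤ N' := fun x hx => by
      change N.mkQ x ∈ LinearMap.range g
      rw [(Submodule.Quotient.mk_eq_zero N).2 hx |> fun h => (h : N.mkQ x = 0)]
      exact zero_mem _
    let p : N' →ₗ[(A7 K)ᵐᵒᵖ] LinearMap.range g :=
      (N.mkQ ∘ₗ N'.subtype).codRestrict _ (fun x => x.2)
    have hp : Function.Surjective p := by
      rintro ⟨y, hy⟩
      obtain ⟨x, rfl⟩ := N.mkQ_surjective y
      exact ⟨⟨x, hy⟩, rfl⟩
    have hN' : T N' := by
      refine hT.ext' p hp ?_ (hT.quot g.rangeRestrict g.surjective_rangeRestrict hY)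
      refine hT.quot ((Submodule.inclusion hle).codRestrict (LinearMap.ker p) (fun x => ?_)) ?_ hN
      · rw [LinearMap.mem_ker]
        exact Subtype.ext ((Submodule.Quotient.mk_eq_zero N).2 x.2)
      · rintro ⟨⟨x, hx⟩, hx'⟩
        have h0 : N.mkQ x = 0 := congrArg Subtype.val (LinearMap.mem_ker.1 hx')
        exact ⟨⟨x, (Submodule.Quotient.mk_eq_zero N).1 h0⟩, rfl⟩
    have hnlt := hmax N' hN'
    have heq : N = N' := by
      by_contra hne
      exact hnlt (lt_of_le_of_ne hle hne)
    ext y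
    obtain ⟨x, hx⟩ := N.mkQ_surjective (g y)
    have : x ∈ N' := by
      change N.mkQ x ∈ LinearMap.range g
      rw [hx]; exact ⟨y, rfl⟩
    rw [← heq] at this
    rw [← hx]
    exact (Submodule.Quotient.mk_eq_zero N).2 this
  obtain ⟨d, i, q, hiq⟩ := exists_str (K := K) (Y := SM K a ⧸ N) (fun y => by
    obtain ⟨x, rfl⟩ := N.mkQ_surjective y
    rw [← map_smul, sm_z, map_zero])
  refine h d ?_ ((hom_iff (K := K) a d).1 ⟨q ∘ₗ N.mkQ, ?_⟩)
  · intro c hc hcd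
    obtain ⟨f, hf⟩ := (hom_iff (K := K) c d).2 hcd
    have := hzero _ hc (i ∘ₗ f)
    apply hf
    ext y
    have h1 := congrArg q (LinearMap.congr_fun this y)
    simpa [hiq] using h1
  · intro h0
    obtain ⟨y, hy⟩ := exists_ne (0 : SM K d)
    obtain ⟨x, hx⟩ := N.mkQ_surjective (i y)
    have h1 := LinearMap.congr_fun h0 x
    rw [LinearMap.comp_apply, hx, hiq] at h1
    exact hy h1

theorem exists_stt {T : MClass (A7 K)ᵐᵒᵖ} (hT : IsTors T) :
    ∃ M : ModuleCat.{0} (A7 K)ᵐᵒᵖ, STT (A7 K)ᵐᵒᵖ M ∧ Bas (A7 K)ᵐᵒᵖ M ∧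
      ∀ (Y : Type) [AddCommGroup Y] [Module (A7 K)ᵐᵒᵖ Y], T Y ↔ Gen (A7 K)ᵐᵒᵖ M Y := by
  have hQ := hT.isQ.tz (zK K)
  obtain ⟨X, hX, hX'⟩ := exists_XT hQ
  obtain ⟨M, t, hM, hmin⟩ := exists_appr K hQ hX (fun U _ _ hU =>
    (hX' U (hQ.fg hU) hU.2 fun a ha => hQ.summ ha hU).gen)
  obtain ⟨G, hG, hG'⟩ := exists_gen_of_z hT (zz_central K) (zz_nil K) (hM.extProj hmin)
    (fun Y _ _ hY => hM.gen hQ hY)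
  exact stt_of_torsion K hT hG hG'

end fin

/-! ### counting -/

/-- vanishing table. -/
def rowsL : List ℕ := [5766522, 12238549, 10141265, 1309810, 15165871, 14887055, 11156117,
  14886927, 4417578, 8534033, 260210, 1890303, 280575, 6637999, 2047, 530133, 2099343, 11025045,
  17786, 5713, 54386, 2063, 84010, 14353]

/-- vanishing table. -/
def rows (d : Fin 24) : ℕ := rowsL.getD d.1 0

theorem rows_spec : ∀ a d : Fin 24, Nat.testBit (rows d) a.1 = !decide (HB a d) := by
  decide +kernel

/-- intersections of rows. -/
def interR (l : List (Fin 24)) : ℕ := l.foldr (fun d m => m &&& rows d) 16777215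

/-- the family of intersections of rows. -/
def famR (l : List (Fin 24)) : List ℕ :=
  l.foldr (fun d acc => (acc.map (fun m => m &&& rows d)) ∪ acc) [16777215]

theorem famR_mem (l : List (Fin 24)) (m : ℕ) (h : m ∈ famR l) : ∃ k, m = interR k := by
  induction l generalizing m with
  | nil => exact ⟨[], by simpa [famR, interR] using h⟩
  | cons d l ih =>
    change m ∈ ((famR l).map (fun m => m &&& rows d)) ∪ famR l at h
    rw [List.mem_union_iff, List.mem_map] at h
    rcases h with ⟨m', hm', rfl⟩ | h
    · obtain ⟨k, rfl⟩ := ih _ hm'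
      exact ⟨d :: k, rfl⟩
    · exact ih _ h

theorem interR_mem (l : List (Fin 24)) (p : Fin 24 → Bool) : interR (l.filter p) ∈ famR l := by
  induction l with
  | nil => simp [famR, interR]
  | cons d l ih =>
    change _ ∈ ((famR l).map (fun m => m &&& rows d)) ∪ famR l
    rw [List.mem_union_iff, List.mem_map]
    by_cases hp : p d = true
    · rw [List.filter_cons_of_pos hp]
      exact Or.inl ⟨_, ih, rfl⟩
    · rw [List.filter_cons_of_neg hp]
      exact Or.inr ih

theorem famR_nodup (l : List (Fin 24)) : (famR l).Nodup := by
  cases l with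
  | nil => simp [famR]
  | cons d l =>
    exact List.Nodup.union _ (by
      induction l with
      | nil => simp
      | cons d l ih => exact List.Nodup.union _ ih)

theorem famR_length : (famR (List.finRange 24)).length = 108 := by
  decide +kernel

theorem interR_bit (l : List (Fin 24)) (a : Fin 24) :
    Nat.testBit (interR l) a.1 = true ↔ ∀ d ∈ l, ¬ HB a d := by
  induction l with
  | nil =>
    simp only [interR, List.foldr_nil, List.not_mem_nil, false_imp_iff, implies_true, iff_true]
    revert a; decide +kernel
  | cons d l ih =>
    change Nat.testBit (interR l &&& rows d) a.1 = true ↔ _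
    rw [Nat.testBit_and, Bool.and_eq_true, ih, rows_spec]
    simp [and_comm]

theorem interR_high (l : List (Fin 24)) (a : ℕ) (ha : 24 ≤ a) :
    Nat.testBit (interR l) a = false := by
  induction l with
  | nil =>
    refine Nat.testBit_lt_two_pow (lt_of_lt_of_le (?_ : _ < 2 ^ 24) (Nat.pow_le_pow_right (by norm_num) ha))
    simp [interR]
  | cons d l ih =>
    change Nat.testBit (interR l &&& rows d) a = false
    rw [Nat.testBit_and, ih, Bool.false_and]

theorem interR_eq (l k : List (Fin 24))
    (h : ∀ a, (∀ d ∈ l, ¬ HB a d) ↔ (∀ d ∈ k, ¬ HB a d)) : interR l = interR k := by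
  refine Nat.eq_of_testBit_eq fun a => ?_
  by_cases ha : a < 24
  · have := h ⟨a, ha⟩
    rw [← interR_bit, ← interR_bit] at this
    exact Bool.eq_iff_iff.2 this
  · rw [interR_high _ _ (not_lt.1 ha), interR_high _ _ (not_lt.1 ha)]

theorem main_count (K : Type) [Field K] : SupportTauTiltingCount (A7 K)ᵐᵒᵖ 108 := by
  classical
  have key := famR_length
  have key2 := famR_nodup (List.finRange 24)
  have key3 := famR_mem (List.finRange 24)
  have key4 := interR_mem (List.finRange 24)
  generalize famR (List.finRange 24) = F at key key2 key3 key4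
  have hF : F.length = 108 := key
  let m : Fin 108 → ℕ := fun i => F.get (i.cast hF.symm)
  have hm : Function.Injective m := fun i j h => by
    have := (List.nodup_iff_injective_get.1 key2) h
    exact Fin.ext (by simpa using congrArg Fin.val this)
  choose L hL using fun i => key3 (m i) (List.get_mem F (i.cast hF.symm))
  choose M hS hB hG using fun i => exists_stt (TD_tors (K := K) (fun d => d ∈ L i))
  refine ⟨M, fun i => ⟨(isSTT_iff _).2 (hS i), (isBasicMod_iff _).2 (hB i)⟩, ?_, ?_⟩
  · rintro i j ⟨e⟩
    apply hm
    rw [hL, hL]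
    apply interR_eq
    intro a
    rw [← TD_iff (K := K), ← TD_iff (K := K), hG, hG]
    have e' := e.toLinearEquiv
    exact ⟨fun h => (Gen.of_surj e'.symm.toLinearMap e'.symm.surjective).trans h,
      fun h => (Gen.of_surj e'.toLinearMap e'.surjective).trans h⟩
  · intro X hX hXb
    rw [isSTT_iff] at hX
    rw [isBasicMod_iff] at hXb
    obtain ⟨hfg, hT⟩ := hX.isTors
    let p : Fin 24 → Bool := fun d =>
      decide (∀ c, Gen (A7 K)ᵐᵒᵖ X (SM K c) → ¬ HB c d)
    obtain ⟨n, hn⟩ := List.mem_iff_get.1 (key4 p)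
    refine ⟨n.cast hF, ?_⟩
    have hmn : interR (L (n.cast hF)) = interR ((List.finRange 24).filter p) := by
      rw [← hL, ← hn]; rfl
    have hC : ∀ a, TD K (fun d => d ∈ L (n.cast hF)) (SM K a) ↔ Gen (A7 K)ᵐᵒᵖ X (SM K a) := by
      intro a
      rw [TD_iff, tors_closed hT, ← interR_bit, hmn, interR_bit]
      simp [p]
    have h1 := tors_le (TD_tors _) hT (fun a h => (hC a).1 h)
    have h2 := tors_le hT (TD_tors _) (fun a h => (hC a).2 h)
    have g1 : Gen (A7 K)ᵐᵒᵖ X (M (n.cast hF)) := h1 _ ((hG _ _).2 (Gen.of_surj LinearMap.id fun x => ⟨x, rfl⟩))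
    have g2 : Gen (A7 K)ᵐᵒᵖ (M (n.cast hF)) X := (hG _ _).1 (h2 _ (Gen.of_surj LinearMap.id fun x => ⟨x, rfl⟩))
    obtain ⟨e⟩ := hX.equiv (hS _) hXb (hB _) g1 g2
    exact ⟨e.toModuleIso⟩


/-- appendix of the paper.  The weakly symmetric algebra
`A₇` of tubular type (quiver `1 ⇄ 2 ⇄ 3 ⇄ 4` with arrows `α : 1 → 2`,
`β : 2 → 1`, `δ : 2 → 3`, `γ : 3 → 2`, `ε : 3 → 4`, `ξ : 4 → 3`, bound by
`βα = δγ`, `γδ = εξ`, `αδε = 0`, `ξγβ = 0`) has exactly `108` isomorphism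
classes of basic support τ-tilting (right) modules. -/
theorem A7_has_exactly_108_support_tau_tilting_modules
    (K : Type) [Field K] [IsAlgClosed K] :
    SupportTauTiltingCount (A7 K)ᵐᵒᵖ 108 := by
  exact main_count K

end PaperSilting
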